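/- arXiv:1808.06557 — 3 statements merged into one kernel-verified Lean document; each statement's English description precedes it below -/
import Mathlib

section
/- Let a, b, c be coprime positive integers with min{a,b,c} > 1. If c is even and max{a,b,c} ≥ 10^62, then N(a,b,c) ≤ 2, i.e., the set of triples (x,y,z) of positive integers satisfying a^x + b^y = c^z has at most 2 elements. -/
/-!
The equation `a ^ x + b ^ y = c ^ z` with `c` even and a base of size at least `10 ^ 62` has at most
two solutions, for two reasons.

**The exponents are small** (`exponent_bound`): if `M` is the largest base and `X` the largest
exponent of a solution, then `4 * X ^ 5 ≤ M`. As `c` is even, `a ^ x + b ^ y` is divisible by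
`2 ^ z`, so `a ^ (2 * x)` and `b ^ (2 * y)` are two-adically close, and an explicit two-adic estimate
for linear forms in two logarithms (`two_log_core`, `z_bound`) bounds `z` by a constant times
`log a * log b * (log X) ^ 2`. That estimate is proved with interpolation determinants. If `A ^ x`
and `B ^ y` agree modulo a high power of two, where `A, B ≡ 1` modulo 8, then modulo that power `A`
and `B` are the `y`-th and `x`-th power of some `1 + 8 * τ` (`exists_base`). The matrix with entries
`choose (r * y + s * x) k * (A ^ r * B ^ s) ^ l`, with rows indexed by `(k, l)` and columns by
points `(r, s)`, then has entries that are two-adically analytic functions of the single integer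
`ζ = r * y + s * x`. Expanding them in the polynomials `choose ζ m` (`choose_mul_pow_expansion`)
shows that its determinant is divisible by a huge power of 8 (`dvd_det_of_expansion`), beyond its
trivial upper bound (`abs_det_le`). A zero estimate (`zero_estimate`, `exists_nonvanishing`) provides
points for which the determinant is not zero, a contradiction.

**Solutions repel each other.** For three solutions with `x1 ≤ x2 ≤ x3`, the last two give relations
`c ^ z = b ^ y` modulo `a ^ x2`, so `b` and `c` have order dividing `D = |y2 * z3 - y3 * z2|` there,
and lifting the exponent in the first solution gives `a ^ (x2 - x1) ∣ D` (`gap_odd`; `gap_even` is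
the analogue for `c`). Here `D` is at most `X ^ 2`, and it is non-zero because the exponents of
distinct solutions are not proportional (`not_parallel_xz` and its companions). Since the largest
base is larger than `8 * X ^ 2`, the two smallest values of its exponent coincide. Two solutions
sharing an exponent, say `z`, satisfy
`a ^ x1 * (a ^ (x2 - x1) - 1) = b ^ y2 * (b ^ (y1 - y2) - 1)`, and coprimality together with further
gap estimates makes one power negligible in two of the solutions. The two powers that remain are
then nearly equal in both, which forces their exponents to be proportional (`close_eq`), again a
contradiction. The cases are distinguished by the largest base (`case_c`, `case_a`).
-/

open Finset

/-! ### Determinants: divisibility by expansion and the trivial bound -/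

/-- If `N` natural numbers repeat no value below `N`, their sum is at least `0 + 1 + ⋯ + (N - 1)`. -/
theorem sum_ge_of_injOn {ι : Type*} [Fintype ι] [DecidableEq ι] (N : ℕ) (hN : Fintype.card ι = N) (f : ι → ℕ)
    (hf : ∀ i j, f i = f j → f i < N → i = j) :
    ∑ m ∈ range N, m ≤ ∑ i, f i := by
  classical
  set s : Finset ι := univ.filter (fun i => f i < N) with hs
  have h1 : ∑ i ∈ s, f i = ∑ m ∈ s.image f, m := by
    rw [sum_image]
    intro i hi j hj hij
    exact hf i j hij (by simpa [hs] using hi)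
  have hsub : s.image f ⊆ range N := by
    intro m hm
    simp only [hs, mem_image, mem_filter, mem_univ, true_and] at hm
    obtain ⟨i, hi, rfl⟩ := hm
    simpa using hi
  have hcard : (s.image f).card = s.card := by
    apply card_image_of_injOn
    intro i hi j hj hij
    exact hf i j hij (by simpa [hs] using hi)
  have h2 : ∑ m ∈ range N \ s.image f, m ≤ (N - s.card) * N := by
    calc _ ≤ (range N \ s.image f).card * N := by
            apply sum_le_card_nsmul
            intro m hm
            simp at hm
            omega
      _ = _ := by rw [card_sdiff_of_subset hsub, hcard, card_range]
  have h3 : (N - s.card) * N ≤ ∑ i ∈ sᶜ, f i := by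
    have : (sᶜ).card • N ≤ ∑ i ∈ sᶜ, f i := by
      apply card_nsmul_le_sum
      intro i hi
      simpa [hs] using hi
    rwa [card_compl, hN, smul_eq_mul] at this
  rw [← sum_sdiff hsub, ← sum_compl_add_sum s, h1]
  omega

/-- If every row of an `N × N` matrix is, modulo `q ^ N`, a combination of the same vectors
`P 0, …, P (N - 1)` with the coefficient of `P m` divisible by `q ^ m`, then the determinant is
divisible by `q ^ (0 + 1 + ⋯ + (N - 1))`: in the multilinear expansion along the rows, a term
using some `P m` twice vanishes. The index `N` stands for the remainder of a row. -/
theorem dvd_det_of_expansion {ι : Type*} [Fintype ι] [DecidableEq ι] (N : ℕ)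
    (hN : Fintype.card ι = N) (q : ℤ) (M : Matrix ι ι ℤ) (P : ℕ → ι → ℤ) (d : ι → ℕ → ℤ)
    (e : ι → ι → ℤ)
    (hM : ∀ i j, M i j = ∑ m ∈ range N, q ^ m * d i m * P m j + q ^ N * e i j) :
    q ^ (∑ m ∈ range N, m) ∣ M.det := by
  classical
  let c : ι → ℕ → ℤ := fun i m => if m < N then d i m else 1
  let w : ι → ℕ → ι → ℤ := fun i m => if m < N then P m else e i
  have hrow : M = fun i => ∑ m ∈ range (N + 1), (q ^ m * c i m) • w i m := by
    funext i j
    rw [hM i j, sum_range_succ, Pi.add_apply, Finset.sum_apply]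
    congr 1
    · apply sum_congr rfl
      intro m hm
      have : m < N := by simpa using hm
      simp [c, w, this]
    · simp [c, w]
  have hdet : M.det = Matrix.detRowAlternating.toMultilinearMap
      (fun i => ∑ m ∈ range (N + 1), (q ^ m * c i m) • w i m) := by
    rw [← hrow]; rfl
  rw [hdet, MultilinearMap.map_sum_finset]
  apply dvd_sum
  intro f _
  rw [MultilinearMap.map_smul_univ, prod_mul_distrib, prod_pow_eq_pow_sum]
  by_cases hf : ∀ i j, f i = f j → f i < N → i = j
  · rw [smul_eq_mul, mul_assoc]
    exact (pow_dvd_pow q (sum_ge_of_injOn N hN f hf)).mul_right _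
  · push Not at hf
    obtain ⟨i, j, hij, hlt, hne⟩ := hf
    have : (Matrix.detRowAlternating (R := ℤ) (n := ι)).toMultilinearMap (fun i => w i (f i)) = 0 := by
      apply Matrix.detRowAlternating.map_eq_zero_of_eq _ _ hne
      have hlt' : f j < N := hij ▸ hlt
      simp only [w, if_pos hlt', hij]
    rw [this]; simp

/-- With `T = 1 + 8 * τ`, the number `8 ^ k * choose ζ k * T ^ ζ` is, modulo `8 ^ N`, a combination
of the `choose ζ m` whose coefficient at index `m` does not depend on `ζ` and is divisible by
`8 ^ m`. This is the binomial expansion of `T ^ (ζ - k)`. -/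
theorem choose_mul_pow_expansion (N k ζ : ℕ) (τ : ℤ) :
    ∃ e : ℤ, 8 ^ k * ((ζ.choose k : ℤ) * (1 + 8 * τ) ^ ζ) =
      ∑ m ∈ range N, 8 ^ m * ((1 + 8 * τ) ^ k * (m.choose k : ℤ) * τ ^ (m - k)) * (ζ.choose m : ℤ)
        + 8 ^ N * e := by
  have key : (8 : ℤ) ^ k * ((ζ.choose k : ℤ) * (1 + 8 * τ) ^ ζ) =
      ∑ m ∈ range (ζ + 1), 8 ^ m * ((1 + 8 * τ) ^ k * (m.choose k : ℤ) * τ ^ (m - k)) *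
        (ζ.choose m : ℤ) := by
    by_cases hk : k ≤ ζ
    · obtain ⟨n, rfl⟩ := Nat.exists_eq_add_of_le hk
      rw [add_assoc, sum_range_add]
      have h0 : ∑ m ∈ range k, (8:ℤ) ^ m * ((1 + 8 * τ) ^ k * (m.choose k : ℤ) * τ ^ (m - k)) *
        ((k + n).choose m : ℤ) = 0 := by
        apply sum_eq_zero
        intro m hm
        rw [Nat.choose_eq_zero_of_lt (by simpa using hm)]; simp
      rw [h0, zero_add, pow_add, add_comm 1 (8 * τ), add_pow (8 * τ) 1 n]
      simp only [mul_sum]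
      apply sum_congr rfl
      intro i hi
      have hi' : i ≤ n := by simp at hi; omega
      have hc := Nat.choose_mul (n := k + n) (k := k + i) (s := k) (by omega)
      rw [Nat.add_sub_cancel_left, Nat.add_sub_cancel_left] at hc
      have hc' : ((k + n).choose (k + i) : ℤ) * ((k + i).choose k : ℤ) =
        ((k + n).choose k : ℤ) * (n.choose i : ℤ) := by exact_mod_cast hc
      rw [Nat.add_sub_cancel_left, mul_pow, one_pow, pow_add]
      linear_combination (-(8:ℤ)^k * 8 ^ i * (8 * τ + 1)^k * τ^i) * hc'
    · rw [Nat.choose_eq_zero_of_lt (by omega : ζ < k)]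
      symm
      rw [Nat.cast_zero, zero_mul, mul_zero]
      apply sum_eq_zero
      intro m hm
      have : m < k := by simp at hm; omega
      rw [Nat.choose_eq_zero_of_lt this]; simp
  rw [key]
  have hext : ∀ n, ∃ e : ℤ, ∑ m ∈ range (N + n), (8:ℤ) ^ m * ((1 + 8 * τ) ^ k * (m.choose k : ℤ) * τ ^ (m - k)) *
        (ζ.choose m : ℤ) = ∑ m ∈ range N, (8:ℤ) ^ m * ((1 + 8 * τ) ^ k * (m.choose k : ℤ) * τ ^ (m - k)) *
        (ζ.choose m : ℤ) + 8 ^ N * e := by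
    intro n
    rw [sum_range_add]
    have : (8:ℤ) ^ N ∣ ∑ x ∈ range n, (8:ℤ) ^ (N + x) * ((1 + 8 * τ) ^ k * ((N + x).choose k : ℤ) * τ ^ (N + x - k)) *
        (ζ.choose (N + x) : ℤ) := by
      apply dvd_sum
      intro x _
      rw [pow_add, mul_assoc, mul_assoc]
      exact dvd_mul_right _ _
    obtain ⟨e, he⟩ := this
    exact ⟨e, by rw [he]⟩
  -- the terms with `ζ < m` vanish, so the upper end of the summation range is immaterial
  have hlarge : ∑ m ∈ range (ζ + 1), (8:ℤ) ^ m * ((1 + 8 * τ) ^ k * (m.choose k : ℤ) * τ ^ (m - k)) *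
        (ζ.choose m : ℤ) = ∑ m ∈ range (N + (ζ + 1)), (8:ℤ) ^ m * ((1 + 8 * τ) ^ k * (m.choose k : ℤ) * τ ^ (m - k)) *
        (ζ.choose m : ℤ) := by
    apply sum_subset
    · intro m hm; simp at hm ⊢; omega
    · intro m _ hm
      rw [Nat.choose_eq_zero_of_lt (by simp at hm; omega : ζ < m)]; simp
  rw [hlarge]
  exact hext _

theorem abs_det_le {ι : Type*} [Fintype ι] [DecidableEq ι] (M : Matrix ι ι ℤ) (b : ι → ℤ)
    (hb : ∀ i j, |M i j| ≤ b i) : |M.det| ≤ (Fintype.card ι).factorial * ∏ i, b i := by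
  rw [← Matrix.det_transpose, Matrix.det_apply]
  calc _ ≤ ∑ σ : Equiv.Perm ι, |Equiv.Perm.sign σ • ∏ i, M.transpose (σ i) i| := abs_sum_le_sum_abs _ _
    _ ≤ ∑ σ : Equiv.Perm ι, ∏ i, b i := by
        apply sum_le_sum
        intro σ _
        have : |Equiv.Perm.sign σ • ∏ i, M.transpose (σ i) i| = ∏ i, |M i (σ i)| := by
          rw [← abs_prod]
          rcases Int.units_eq_one_or (Equiv.Perm.sign σ) with h | h <;> simp [h]
        rw [this]
        exact prod_le_prod (fun i _ => abs_nonneg _) (fun i _ => hb _ _)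
    _ = _ := by simp [Fintype.card_perm]

/-! ### Zero estimate for exponential polynomials -/

open Polynomial in
theorem coeff_prod_sum {ι : Type*} (s : Finset ι) (f : ι → ℚ[X]) (d : ι → ℕ)
    (h : ∀ i ∈ s, (f i).natDegree ≤ d i) :
    (∏ i ∈ s, f i).coeff (∑ i ∈ s, d i) = ∏ i ∈ s, (f i).coeff (d i) := by
  classical
  induction s using Finset.induction_on with
  | empty => simp
  | insert a s ha ih =>
    rw [prod_insert ha, sum_insert ha, prod_insert ha,
      ← ih (fun i hi => h i (mem_insert_of_mem hi))]
    apply coeff_mul_add_eq_of_natDegree_le (h a (mem_insert_self a s))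
    refine (natDegree_prod_le s f).trans (sum_le_sum fun i hi => h i (mem_insert_of_mem hi))

open Polynomial in
/-- If column `j` of a polynomial matrix has degrees at most `d j`, the coefficient of the
determinant in degree `∑ j, d j` is the determinant of the column-wise leading coefficients. -/
theorem coeff_det_sum {n : ℕ} (W : Matrix (Fin n) (Fin n) ℚ[X]) (d : Fin n → ℕ)
    (h : ∀ i j, (W i j).natDegree ≤ d j) :
    W.det.coeff (∑ j, d j) = (Matrix.of fun i j => (W i j).coeff (d j)).det := by
  rw [Matrix.det_apply, Matrix.det_apply, finsetSum_coeff]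
  apply sum_congr rfl
  intro σ _
  have := coeff_prod_sum univ (fun i => W (σ i) i) d (fun i _ => h _ _)
  rcases Int.units_eq_one_or (Equiv.Perm.sign σ) with h | h <;> simp [h, this]

open Polynomial in
theorem natDegree_det_le_sum {n : ℕ} (W : Matrix (Fin n) (Fin n) ℚ[X]) (d : Fin n → ℕ)
    (h : ∀ i j, (W i j).natDegree ≤ d j) : W.det.natDegree ≤ ∑ j, d j := by
  rw [Matrix.det_apply]
  apply natDegree_sum_le_of_forall_le
  intro σ _
  have h1 : (∏ i, W (σ i) i).natDegree ≤ ∑ j, d j :=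
    (natDegree_prod_le _ _).trans (sum_le_sum fun i _ => h _ _)
  rcases Int.units_eq_one_or (Equiv.Perm.sign σ) with h | h <;> simpa [h] using h1

open Polynomial in
/-- Suppose `∑ l, p l (t) * (A ^ r * B ^ s) ^ l` vanishes at `t = r * y + s * x` for all `r < R` and
`s < S + L`, where the `p l` have degree at most `D` and the values `t` with `r < R`, `s < S` are
distinct. If `D * L < R * S`, all `p l` are zero. Shifting `s` by `0, 1, …` gives as many linear
relations as there are non-zero `p l`; the determinant `W` of this system is a non-zero polynomial
(its top coefficient is essentially a Vandermonde determinant) of degree at most `D * L`, but it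
vanishes at `R * S` points. -/
theorem zero_estimate (D L R S x y A B : ℕ) (hA : 1 ≤ A) (hB : 2 ≤ B)
    (hinj : ∀ r < R, ∀ s < S, ∀ r' < R, ∀ s' < S, r * y + s * x = r' * y + s' * x → r = r' ∧ s = s')
    (hcard : D * L < R * S) (p : ℕ → ℚ[X]) (hdeg : ∀ l < L, (p l).natDegree ≤ D)
    (hv : ∀ r < R, ∀ s < S + L,
      ∑ l ∈ range L, (p l).eval ((r * y + s * x : ℕ) : ℚ) * ((A : ℚ) ^ r * (B : ℚ) ^ s) ^ l = 0) :
    ∀ l < L, p l = 0 := by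
  by_contra hcon
  push Not at hcon
  obtain ⟨l₀, hl₀, hp₀⟩ := hcon
  set Λ : Finset ℕ := (range L).filter (fun l => p l ≠ 0) with hΛ
  set n := Λ.card with hn
  let g : Fin n ≃ Λ := Λ.equivFin.symm
  have hgL : ∀ j, ((g j : Λ) : ℕ) < L := fun j => by
    have := (g j).2; simp only [hΛ, mem_filter, mem_range] at this; exact this.1
  have hg0 : ∀ j, p (g j) ≠ 0 := fun j => by
    have := (g j).2; simp only [hΛ, mem_filter, mem_range] at this; exact this.2
  have hnL : n ≤ L := by
    calc n ≤ (range L).card := card_filter_le _ _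
      _ = L := card_range L
  have hl₀Λ : l₀ ∈ Λ := by simp [hΛ, hl₀, hp₀]
  let j₀ : Fin n := g.symm ⟨l₀, hl₀Λ⟩
  let W : Matrix (Fin n) (Fin n) ℚ[X] := Matrix.of fun i j =>
    (p (g j)).comp (X + C ((i : ℕ) * x : ℚ)) * C (((B : ℚ) ^ ((g j : Λ) : ℕ)) ^ (i : ℕ))
  have hBq : ∀ m : ℕ, (B : ℚ) ^ m ≠ 0 := fun m => pow_ne_zero _ (by positivity)
  have hWdeg : ∀ i j, (W i j).natDegree ≤ (p (g j)).natDegree := by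
    intro i j
    have h0 : (W i j).natDegree ≤ ((p (g j)).comp (X + C ((i : ℕ) * x : ℚ))).natDegree :=
      natDegree_mul_C_le _ _
    rwa [natDegree_comp, natDegree_X_add_C, mul_one] at h0
  have hcoef : ∀ i j, (W i j).coeff (p (g j)).natDegree =
      (p (g j)).leadingCoeff * ((B : ℚ) ^ ((g j : Λ) : ℕ)) ^ (i : ℕ) := by
    intro i j
    simp only [W, Matrix.of_apply, coeff_mul_C]
    congr 1
    have h1 := natDegree_comp (p := p (g j)) (q := X + C ((i : ℕ) * x : ℚ))
    rw [natDegree_X_add_C, mul_one] at h1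
    have h2 := leadingCoeff_comp (p := p (g j)) (q := X + C ((i : ℕ) * x : ℚ))
      (by rw [natDegree_X_add_C]; norm_num)
    rw [leadingCoeff_X_add_C, one_pow, mul_one] at h2
    rw [← h2, leadingCoeff, h1]
  -- the top coefficient is a product of leading coefficients and a Vandermonde determinant
  have hW : W.det ≠ 0 := by
    intro h0
    have h1 := coeff_det_sum W (fun j => (p (g j)).natDegree) hWdeg
    rw [h0, coeff_zero] at h1
    have h2 : (Matrix.of fun i j => (W i j).coeff (p (g j)).natDegree) =
        Matrix.of fun i j => (p (g j)).leadingCoeff *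
          (Matrix.vandermonde fun j => (B : ℚ) ^ ((g j : Λ) : ℕ)).transpose i j := by
      ext i j
      simp [hcoef, Matrix.vandermonde]
    rw [h2, Matrix.det_mul_row, Matrix.det_transpose] at h1
    symm at h1
    rcases mul_eq_zero.mp h1 with h3 | h3
    · rw [prod_eq_zero_iff] at h3
      obtain ⟨j, _, hj⟩ := h3
      exact hg0 j (leadingCoeff_eq_zero.mp hj)
    · refine Matrix.det_vandermonde_ne_zero_iff.mpr ?_ h3
      intro i j hij
      dsimp only at hij
      have hij' : B ^ ((g i : Λ) : ℕ) = B ^ ((g j : Λ) : ℕ) := by exact_mod_cast hij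
      exact g.injective (Subtype.ext (Nat.pow_right_injective hB hij'))
  have hroot : ∀ r < R, ∀ s < S, W.det.eval ((r * y + s * x : ℕ) : ℚ) = 0 := by
    intro r hr s hs
    have h1 : W.det.eval ((r * y + s * x : ℕ) : ℚ) =
        ((evalRingHom ((r * y + s * x : ℕ) : ℚ)).mapMatrix W).det := by
      rw [← RingHom.map_det]; rfl
    rw [h1, ← Matrix.exists_mulVec_eq_zero_iff]
    refine ⟨fun j => ((A : ℚ) ^ r * (B : ℚ) ^ s) ^ ((g j : Λ) : ℕ), ?_, ?_⟩
    · intro h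
      have := congrFun h j₀
      have hpos : (0 : ℚ) < ((A : ℚ) ^ r * (B : ℚ) ^ s) ^ ((g j₀ : Λ) : ℕ) := by positivity
      exact hpos.ne' this
    · funext i
      have h2 := hv r hr (s + i) (by have := i.2; omega)
      have h3 : ∑ l ∈ Λ, (p l).eval ((r * y + (s + i) * x : ℕ) : ℚ) *
          ((A : ℚ) ^ r * (B : ℚ) ^ (s + (i : ℕ))) ^ l = 0 := by
        rw [← h2]
        apply sum_subset (filter_subset _ _)
        intro l hl hl'
        have : p l = 0 := by
          by_contra hne
          exact hl' (by simp only [mem_filter]; exact ⟨hl, hne⟩)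
        simp [this]
      rw [← sum_coe_sort Λ, ← g.sum_comp] at h3
      rw [Pi.zero_apply, ← h3, Matrix.mulVec, dotProduct]
      apply sum_congr rfl
      intro j _
      simp only [W, RingHom.mapMatrix_apply, Matrix.map_apply, Matrix.of_apply, coe_evalRingHom,
        eval_mul, eval_comp, eval_add, eval_X, eval_C]
      have e1 : ((r * y + s * x : ℕ) : ℚ) + (i : ℕ) * x = ((r * y + (s + i) * x : ℕ) : ℚ) := by
        push_cast; ring
      rw [e1, pow_add, ← pow_mul, mul_comm ((g j : Λ) : ℕ) (i : ℕ), pow_mul, mul_assoc, ← mul_pow]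
      ring
  have hdegW : W.det.natDegree ≤ D * L := by
    refine (natDegree_det_le_sum W _ hWdeg).trans ?_
    calc ∑ j, (p (g j)).natDegree ≤ ∑ _j : Fin n, D := sum_le_sum fun j _ => hdeg _ (hgL j)
      _ = n * D := by simp
      _ ≤ L * D := Nat.mul_le_mul_right _ hnL
      _ = D * L := mul_comm _ _
  apply hW
  apply eq_zero_of_natDegree_lt_card_of_eval_eq_zero' W.det
    ((range R ×ˢ range S).image (fun q => ((q.1 * y + q.2 * x : ℕ) : ℚ)))
  · intro t ht
    simp only [mem_image, mem_product, mem_range] at ht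
    obtain ⟨⟨r, s⟩, ⟨hr, hs⟩, rfl⟩ := ht
    exact hroot r hr s hs
  · rw [card_image_of_injOn, card_product, card_range, card_range]
    · omega
    · rintro ⟨r, s⟩ h1 ⟨r', s'⟩ h2 h3
      simp only [coe_product, Set.mem_prod, coe_range, Set.mem_Iio] at h1 h2
      dsimp only at h3
      have h3' : r * y + s * x = r' * y + s' * x := by exact_mod_cast h3
      obtain ⟨e1, e2⟩ := hinj r h1.1 s h1.2 r' h2.1 s' h2.2 h3'
      rw [e1, e2]

/-! ### Binomial polynomials and a non-vanishing determinant -/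

open Polynomial in
/-- The polynomial `X(X-1)⋯(X-k+1)/k!`, whose value at a natural number `n` is `n.choose k`. -/
noncomputable def binomPoly (k : ℕ) : ℚ[X] := C ((k.factorial : ℚ)⁻¹) * descPochhammer ℚ k

open Polynomial in
theorem binomPoly_eval (k n : ℕ) : (binomPoly k).eval (n : ℚ) = n.choose k := by
  rw [binomPoly, eval_mul, eval_C, descPochhammer_eval_eq_descFactorial,
    Nat.descFactorial_eq_factorial_mul_choose]
  have : (k.factorial : ℚ) ≠ 0 := by exact_mod_cast k.factorial_ne_zero
  push_cast
  field_simp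

open Polynomial in
theorem binomPoly_degree (k : ℕ) : (binomPoly k).degree = k := by
  have h1 : ((k.factorial : ℚ)⁻¹) ≠ 0 := inv_ne_zero (by exact_mod_cast k.factorial_ne_zero)
  rw [binomPoly, degree_C_mul h1, degree_eq_natDegree (monic_descPochhammer ℚ k).ne_zero,
    descPochhammer_natDegree]

open Polynomial in
theorem binomPoly_linearIndependent : LinearIndependent ℚ binomPoly :=
  (⟨binomPoly, binomPoly_degree⟩ : Polynomial.Sequence ℚ).linearIndependent

/-- If finitely many functions on `s` are linearly independent, they have a non-zero determinant
at suitably chosen points of `s`. -/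
theorem exists_det_ne_zero {ι P : Type*} [Fintype ι] [DecidableEq ι] (s : Set P) (F : ι → P → ℚ)
    (h : ∀ c : ι → ℚ, (∀ q ∈ s, ∑ i, c i * F i q = 0) → c = 0) :
    ∃ f : ι → P, (∀ j, f j ∈ s) ∧ (Matrix.of fun i j => F i (f j)).det ≠ 0 := by
  classical
  let col : P → (ι → ℚ) := fun q i => F i q
  have hspan : Submodule.span ℚ (col '' s) = ⊤ := by
    by_contra hne
    obtain ⟨φ, hφ0, hφ⟩ := Submodule.exists_le_ker_of_lt_top _ (lt_top_iff_ne_top.mpr hne)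
    apply hφ0
    have hc : ∀ v : ι → ℚ, φ v = ∑ i, φ (Pi.single i 1) * v i := by
      intro v
      conv_lhs => rw [pi_eq_sum_univ' v]
      rw [map_sum]
      apply sum_congr rfl
      intro i _
      rw [map_smul, smul_eq_mul, mul_comm]
    have hz := h (fun i => φ (Pi.single i 1)) (by
      intro q hq
      rw [← hc (col q)]
      exact hφ (Submodule.subset_span ⟨q, hq, rfl⟩))
    ext i
    simpa using congrFun hz i
  obtain ⟨f, hf, -, hli⟩ := Submodule.exists_fun_fin_finrank_span_eq ℚ (col '' s)
  have hfr : Module.finrank ℚ (Submodule.span ℚ (col '' s)) = Fintype.card ι := by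
    rw [hspan, finrank_top, Module.finrank_fintype_fun_eq_card]
  let e : ι ≃ Fin (Module.finrank ℚ (Submodule.span ℚ (col '' s))) :=
    (Fintype.equivFin ι).trans (finCongr hfr.symm)
  choose q hq hqf using hf
  refine ⟨fun j => q (e j), fun j => hq _, ?_⟩
  have hli' : LinearIndependent ℚ (fun j => col (q (e j))) := by
    have := hli.comp e e.injective
    have hfun : (fun j => col (q (e j))) = f ∘ e := funext fun j => hqf _
    rwa [hfun]
  have := Matrix.linearIndependent_rows_iff_isUnit.mp
    (show LinearIndependent ℚ (Matrix.of fun j i => F i (q (e j))).row from hli')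
  rw [Matrix.isUnit_iff_isUnit_det, ← Matrix.det_transpose] at this
  exact this.ne_zero

/-! ### A common base modulo a power of two -/

theorem eq_one_of_pow_coprime {G : Type*} [Monoid G] (t : G) (m n : ℕ) (h : Nat.Coprime m n)
    (hm : t ^ m = 1) (hn : t ^ n = 1) : t = 1 := by
  have h1 := Nat.dvd_gcd (orderOf_dvd_of_pow_eq_one hm) (orderOf_dvd_of_pow_eq_one hn)
  rw [h.gcd_eq_one, Nat.dvd_one] at h1
  exact orderOf_eq_one_iff.mp h1

/-- In an abelian group, `g ^ x = h ^ y` with coprime `x`, `y` makes `g` and `h` powers of one element. -/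
theorem exists_common_root {G : Type*} [CommGroup G] (g h : G) (x y : ℕ) (hco : Nat.Coprime x y)
    (hgh : g ^ x = h ^ y) : ∃ t : G, t ^ y = g ∧ t ^ x = h := by
  have hb := Nat.gcd_eq_gcd_ab x y
  rw [hco.gcd_eq_one] at hb
  set u := Nat.gcdB x y
  set v := Nat.gcdA x y
  have hb' : (x : ℤ) * v + y * u = 1 := by rw [← hb]; norm_cast
  have hgh' : g ^ (x : ℤ) = h ^ (y : ℤ) := by simpa using hgh
  refine ⟨g ^ u * h ^ v, ?_, ?_⟩
  · rw [← zpow_natCast, mul_zpow, ← zpow_mul, ← zpow_mul, mul_comm v, zpow_mul h, ← hgh',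
      ← zpow_mul, ← zpow_add]
    conv_rhs => rw [← zpow_one g, ← hb']
    congr 1; ring
  · rw [← zpow_natCast, mul_zpow, ← zpow_mul, ← zpow_mul, mul_comm u, zpow_mul g, hgh',
      ← zpow_mul, ← zpow_add]
    conv_rhs => rw [← zpow_one h, ← hb']
    congr 1; ring

/-- If `A ^ x ≡ B ^ y` modulo `2 ^ V` with `A, B ≡ 1` modulo 8, then modulo `2 ^ V` the numbers `A`
and `B` are the `y`-th and `x`-th powers of a number `1 + 8 * τ`. -/
theorem exists_base (A B x y V : ℕ) (hV : 3 ≤ V) (hA8 : (8 : ℤ) ∣ A - 1) (hB8 : (8 : ℤ) ∣ B - 1)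
    (hco : Nat.Coprime x y) (hdvd : (2 : ℤ) ^ V ∣ (A : ℤ) ^ x - (B : ℤ) ^ y) :
    ∃ τ : ℤ, (2 : ℤ) ^ V ∣ A - (1 + 8 * τ) ^ y ∧ (2 : ℤ) ^ V ∣ B - (1 + 8 * τ) ^ x := by
  have hu : ∀ C : ℕ, (8 : ℤ) ∣ C - 1 → IsUnit (C : ZMod (2 ^ V)) := by
    intro C hC
    rw [ZMod.isUnit_iff_coprime]
    apply Nat.Coprime.pow_right
    rw [Nat.coprime_two_right, Nat.odd_iff]
    omega
  have hc : ∀ z : ℤ, (2 : ℤ) ^ V ∣ z ↔ (z : ZMod (2 ^ V)) = 0 := by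
    intro z
    rw [ZMod.intCast_zmod_eq_zero_iff_dvd]; norm_cast
  obtain ⟨gA, hgA⟩ := hu A hA8
  obtain ⟨gB, hgB⟩ := hu B hB8
  have hrel : gA ^ x = gB ^ y := by
    ext
    rw [hc] at hdvd
    push_cast at hdvd ⊢
    rw [hgA, hgB]
    exact sub_eq_zero.mp hdvd
  obtain ⟨t, ht1, ht2⟩ := exists_common_root gA gB x y hco hrel
  obtain ⟨T, hT⟩ := ZMod.intCast_surjective (t : ZMod (2 ^ V))
  have h1 : (2 : ℤ) ^ V ∣ A - T ^ y := by
    rw [hc]; push_cast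
    rw [hT, ← hgA, ← ht1]; simp
  have h2 : (2 : ℤ) ^ V ∣ B - T ^ x := by
    rw [hc]; push_cast
    rw [hT, ← hgB, ← ht2]; simp
  have h8 : (8 : ℤ) ∣ 2 ^ V := by
    have := pow_dvd_pow (2 : ℤ) hV
    norm_num at this; exact this
  have hz : ∀ z : ℤ, (8 : ℤ) ∣ z ↔ (z : ZMod 8) = 0 := fun z => by
    rw [ZMod.intCast_zmod_eq_zero_iff_dvd]; norm_cast
  have e1 : (T : ZMod 8) ^ y = 1 := by
    have := (hz _).mp (dvd_sub hA8 (h8.trans h1))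
    push_cast at this
    linear_combination this
  have e2 : (T : ZMod 8) ^ x = 1 := by
    have := (hz _).mp (dvd_sub hB8 (h8.trans h2))
    push_cast at this
    linear_combination this
  have e3 : (8 : ℤ) ∣ T - 1 := by
    rw [hz]; push_cast
    rw [eq_one_of_pow_coprime _ x y hco e2 e1]; simp
  obtain ⟨τ, hτ⟩ := e3
  refine ⟨τ, ?_, ?_⟩
  · rw [← hτ]; simpa using h1
  · rw [← hτ]; simpa using h2

/-- The zero estimate, restated: the functions `choose (r * y + s * x) k * (A ^ r * B ^ s) ^ l` of
`(r, s)`, for `k < K` and `l < L`, have a non-zero interpolation determinant. -/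
theorem exists_nonvanishing (K L R S x y A B : ℕ) (hA : 1 ≤ A) (hB : 2 ≤ B)
    (hinj : ∀ r < R, ∀ s < S, ∀ r' < R, ∀ s' < S, r * y + s * x = r' * y + s' * x → r = r' ∧ s = s')
    (hcard : (K - 1) * L < R * S) :
    ∃ f : Fin K × Fin L → ℕ × ℕ, (∀ j, (f j).1 < R ∧ (f j).2 < S + L) ∧
      (Matrix.of fun (i j : Fin K × Fin L) =>
        ((((f j).1 * y + (f j).2 * x).choose i.1 : ℕ) : ℤ) *
          ((A : ℤ) ^ (f j).1 * (B : ℤ) ^ (f j).2) ^ (i.2 : ℕ)).det ≠ 0 := by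
  obtain ⟨f, hf, hdet⟩ := exists_det_ne_zero (ι := Fin K × Fin L)
    {q : ℕ × ℕ | q.1 < R ∧ q.2 < S + L}
    (fun i q => (((q.1 * y + q.2 * x).choose i.1 : ℕ) : ℚ) *
          ((A : ℚ) ^ q.1 * (B : ℚ) ^ q.2) ^ (i.2 : ℕ)) (by
    intro c hc
    let p : ℕ → Polynomial ℚ := fun l =>
      if h : l < L then ∑ k : Fin K, c (k, ⟨l, h⟩) • binomPoly k else 0
    have hp := zero_estimate (K - 1) L R S x y A B hA hB hinj hcard p (by
      intro l hl
      simp only [p, dif_pos hl]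
      apply Polynomial.natDegree_sum_le_of_forall_le
      intro k _
      refine (Polynomial.natDegree_smul_le _ _).trans ?_
      rw [Polynomial.natDegree_eq_of_degree_eq_some (binomPoly_degree k)]
      have := k.2; omega) (by
      intro r hr s hs
      have h1 := hc (r, s) ⟨hr, hs⟩
      rw [Fintype.sum_prod_type_right] at h1
      rw [← h1, ← Fin.sum_univ_eq_sum_range (fun l => (p l).eval ((r * y + s * x : ℕ) : ℚ) *
        ((A : ℚ) ^ r * (B : ℚ) ^ s) ^ l)]
      apply sum_congr rfl
      intro l _
      simp only [p, dif_pos l.2, Polynomial.eval_finsetSum, Polynomial.eval_smul, binomPoly_eval,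
        sum_mul, smul_eq_mul, mul_assoc])
    funext ⟨k, l⟩
    have h1 := hp l l.2
    simp only [p, dif_pos l.2] at h1
    have h2 : LinearIndependent ℚ (fun k : Fin K => binomPoly k) :=
      binomPoly_linearIndependent.comp (fun k : Fin K => (k : ℕ)) Fin.val_injective
    exact Fintype.linearIndependent_iff.mp h2 _ h1 k)
  refine ⟨f, hf, ?_⟩
  intro h0
  apply hdet
  have := congrArg (Int.castRingHom ℚ) h0
  rw [RingHom.map_det, map_zero] at this
  rw [← this]
  congr 1
  ext i j
  simp

/-! ### A two-adic estimate for two logarithms -/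

theorem two_mul_sum_range (n : ℕ) : 2 * ∑ m ∈ range n, (m : ℤ) = n * (n - 1) := by
  induction n with
  | zero => simp
  | succ n ih => rw [sum_range_succ, mul_add, ih]; push_cast; ring

set_option maxHeartbeats 1000000 in
/-- A two-adic lower bound for a linear form in two logarithms, with `α`, `β` bounding the
base-two logarithms of `A`, `B`: the difference `A ^ x - B ^ y` is not divisible by
`2 ^ (12 * L ^ 2 * α * β)`. Otherwise `A` and `B` are powers of a common base `1 + 8 * τ` to that
precision, so that the interpolation determinant with parameters `K = 4 * L * α * β` and `L`, on the
points `r < 2 * L * β` and `s < 2 * L * α + L`, would be divisible by a power of 8 exceeding its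
size. The hypothesis `hbox` makes the values `r * y + s * x` distinct on the smaller box. -/
theorem two_log_core (A B x y L α β : ℕ) (hα : 1 ≤ α) (hβ : 1 ≤ β) (hL : 8 ≤ L)
    (hA1 : 1 ≤ A) (hB1 : 2 ≤ B) (hA : A ≤ 2 ^ α) (hB : B ≤ 2 ^ β)
    (hA8 : (8 : ℤ) ∣ A - 1) (hB8 : (8 : ℤ) ∣ B - 1)
    (hx : 0 < x) (hy : 0 < y) (hco : Nat.Coprime x y)
    (hN : 4 * L ^ 2 * α * β ≤ 2 ^ L) (hζ : 2 * L * β * y + (2 * L * α + L) * x ≤ 2 ^ L)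
    (hbox : 2 * L * β ≤ x ∨ 2 * L * α ≤ y)
    (hdvd : (2 : ℤ) ^ (3 * (4 * L ^ 2 * α * β)) ∣ (A : ℤ) ^ x - (B : ℤ) ^ y) : False := by
  -- `K * L` is the size of the determinant and equals the number of points of the smaller box
  set K : ℕ := 4 * L * α * β with hK
  set N : ℕ := 4 * L ^ 2 * α * β with hNdef
  have hKL : K * L = N := by rw [hK, hNdef]; ring
  have hαβ : 1 ≤ α * β := Nat.mul_pos hα hβ
  have hK4 : 4 * L ≤ K := by rw [hK]; nlinarith
  have hKβ : 4 * (L * β) ≤ K := by rw [hK]; nlinarith [Nat.mul_pos (by omega : 0 < L) hβ]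
  have hN1 : 1 ≤ N := by rw [← hKL]; nlinarith
  obtain ⟨τ, hτA, hτB⟩ := exists_base A B x y (3 * N) (by omega) hA8 hB8 hco hdvd
  have h8N : (2 : ℤ) ^ (3 * N) = 8 ^ N := by rw [pow_mul]; norm_num
  rw [h8N] at hτA hτB
  have hinj : ∀ r < 2 * L * β, ∀ s < 2 * L * α, ∀ r' < 2 * L * β, ∀ s' < 2 * L * α,
      r * y + s * x = r' * y + s' * x → r = r' ∧ s = s' := by
    intro r hr s hs r' hr' s' hs' h
    have hz : ((r : ℤ) - r') * y = (s' - s) * x := by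
      have : (r : ℤ) * y + s * x = r' * y + s' * x := by exact_mod_cast h
      linarith
    have hcoz : IsCoprime (x : ℤ) (y : ℤ) := Nat.isCoprime_iff_coprime.mpr hco
    rcases hbox with hb | hb
    · have hd : (x : ℤ) ∣ (r : ℤ) - r' := by
        apply hcoz.dvd_of_dvd_mul_right
        rw [hz]; exact dvd_mul_left _ _
      have h0 : (r : ℤ) - r' = 0 := by
        apply Int.eq_zero_of_abs_lt_dvd hd
        rw [abs_lt]; constructor <;> omega
      have hr0 : r = r' := by omega
      subst hr0
      refine ⟨rfl, ?_⟩
      exact Nat.eq_of_mul_eq_mul_right hx (by omega)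
    · have hd : (y : ℤ) ∣ (s' : ℤ) - s := by
        apply hcoz.symm.dvd_of_dvd_mul_right
        rw [← hz]; exact dvd_mul_left _ _
      have h0 : (s' : ℤ) - s = 0 := by
        apply Int.eq_zero_of_abs_lt_dvd hd
        rw [abs_lt]; constructor <;> omega
      have hs0 : s = s' := by omega
      subst hs0
      refine ⟨?_, rfl⟩
      exact Nat.eq_of_mul_eq_mul_right hy (by omega)
  have hcard : (K - 1) * L < (2 * L * β) * (2 * L * α) := by
    have e1 : (2 * L * β) * (2 * L * α) = K * L := by rw [hK]; ring
    rw [e1]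
    exact Nat.mul_lt_mul_of_pos_right (by omega) (by omega)
  obtain ⟨f, hf, hdet⟩ := exists_nonvanishing K L _ _ x y A B hA1 hB1 hinj hcard
  set M : Matrix (Fin K × Fin L) (Fin K × Fin L) ℤ := Matrix.of fun (i j : Fin K × Fin L) =>
        ((((f j).1 * y + (f j).2 * x).choose i.1 : ℕ) : ℤ) *
          ((A : ℤ) ^ (f j).1 * (B : ℤ) ^ (f j).2) ^ (i.2 : ℕ) with hM
  have hcardι : Fintype.card (Fin K × Fin L) = N := by simp [hKL]
  -- lower bound: divisibility by a large power of 8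
  have hτl : ∀ l : ℕ, ∃ t : ℤ, (1 + 8 * τ) ^ l = 1 + 8 * t := by
    intro l
    have h1 : (1 + 8 * τ) - 1 ∣ (1 + 8 * τ) ^ l - 1 ^ l := sub_dvd_pow_sub_pow _ _ _
    rw [one_pow, add_sub_cancel_left] at h1
    obtain ⟨t, ht⟩ := (dvd_mul_right (8 : ℤ) τ).trans h1
    exact ⟨t, by linarith⟩
  choose t ht using hτl
  have hcong : ∀ r s l : ℕ, ∃ e : ℤ, ((A : ℤ) ^ r * (B : ℤ) ^ s) ^ l =
      (1 + 8 * t l) ^ (r * y + s * x) + 8 ^ N * e := by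
    intro r s l
    have h1 : (A : ℤ) ≡ (1 + 8 * τ) ^ y [ZMOD 8 ^ N] := (Int.modEq_iff_dvd.mpr hτA).symm
    have h2 : (B : ℤ) ≡ (1 + 8 * τ) ^ x [ZMOD 8 ^ N] := (Int.modEq_iff_dvd.mpr hτB).symm
    have h3 := (((h1.pow r).mul (h2.pow s)).pow l).symm
    obtain ⟨e, he⟩ := Int.modEq_iff_dvd.mp h3
    refine ⟨e, ?_⟩
    rw [← ht l, ← he]
    ring
  have hlow : (8 : ℤ) ^ (∑ m ∈ range N, m) ∣
      (∏ i : Fin K × Fin L, (8 : ℤ) ^ (i.1 : ℕ)) * M.det := by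
    rw [← Matrix.det_mul_column]
    choose e he using hcong
    choose e' he' using fun (k l ζ : ℕ) => choose_mul_pow_expansion N k ζ (t l)
    apply dvd_det_of_expansion N hcardι 8 _
      (fun m j => ((((f j).1 * y + (f j).2 * x).choose m : ℕ) : ℤ))
      (fun i m => (1 + 8 * t i.2) ^ (i.1 : ℕ) * (m.choose i.1 : ℤ) * (t i.2) ^ (m - i.1))
      (fun i j => e' i.1 i.2 ((f j).1 * y + (f j).2 * x) +
        8 ^ (i.1 : ℕ) * (((f j).1 * y + (f j).2 * x).choose i.1 : ℕ) * e (f j).1 (f j).2 i.2)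
    intro i j
    simp only [hM, Matrix.of_apply]
    rw [he]
    linear_combination he' i.1 i.2 ((f j).1 * y + (f j).2 * x)
  -- upper bound for the determinant
  have hup : |M.det| ≤ (N.factorial : ℤ) *
      ∏ i : Fin K × Fin L, (2 : ℤ) ^ (L * (i.1 : ℕ) + (i.2 : ℕ) * (K + L * β)) := by
    rw [← hcardι]
    apply abs_det_le
    intro i j
    obtain ⟨hr, hs⟩ := hf j
    set r := (f j).1
    set s := (f j).2
    have h1 : (r * y + s * x).choose i.1 ≤ (2 ^ L) ^ (i.1 : ℕ) := by
      refine (Nat.choose_le_pow _ _).trans (Nat.pow_le_pow_left ?_ _)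
      refine le_trans ?_ hζ
      exact Nat.add_le_add (Nat.mul_le_mul_right _ hr.le) (Nat.mul_le_mul_right _ hs.le)
    have h2 : A ^ r * B ^ s ≤ 2 ^ (K + L * β) := by
      calc A ^ r * B ^ s ≤ (2 ^ α) ^ r * (2 ^ β) ^ s :=
            Nat.mul_le_mul (Nat.pow_le_pow_left hA _) (Nat.pow_le_pow_left hB _)
        _ = 2 ^ (α * r + β * s) := by rw [← pow_mul, ← pow_mul, ← pow_add]
        _ ≤ 2 ^ (K + L * β) := by
            apply Nat.pow_le_pow_right (by norm_num)
            calc α * r + β * s ≤ α * (2 * L * β) + β * (2 * L * α + L) :=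
                  Nat.add_le_add (Nat.mul_le_mul_left _ hr.le) (Nat.mul_le_mul_left _ hs.le)
              _ = K + L * β := by rw [hK]; ring
    have h3 : (r * y + s * x).choose i.1 * (A ^ r * B ^ s) ^ (i.2 : ℕ) ≤
        2 ^ (L * (i.1 : ℕ) + (i.2 : ℕ) * (K + L * β)) := by
      calc _ ≤ (2 ^ L) ^ (i.1 : ℕ) * (2 ^ (K + L * β)) ^ (i.2 : ℕ) :=
            Nat.mul_le_mul h1 (Nat.pow_le_pow_left h2 _)
        _ = _ := by rw [← pow_mul, ← pow_mul, ← pow_add, mul_comm (K + L * β)]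
    simp only [hM, Matrix.of_apply]
    rw [abs_of_nonneg (by positivity)]
    exact_mod_cast h3
  have hfac : (N.factorial : ℤ) ≤ 2 ^ (L * N) := by
    have : N.factorial ≤ (2 ^ L) ^ N := (Nat.factorial_le_pow N).trans (Nat.pow_le_pow_left hN _)
    rw [← pow_mul] at this
    exact_mod_cast this
  have hsumk : ∑ i : Fin K × Fin L, (i.1 : ℕ) = L * ∑ m ∈ range K, m := by
    rw [Fintype.sum_prod_type_right]
    simp [Fin.sum_univ_eq_sum_range (fun m => m)]
  have hsuml : ∑ i : Fin K × Fin L, (i.2 : ℕ) = K * ∑ m ∈ range L, m := by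
    rw [Fintype.sum_prod_type]
    simp [Fin.sum_univ_eq_sum_range (fun m => m)]
  have hfin : (8 : ℤ) ^ (∑ m ∈ range N, m) ≤ 8 ^ (L * ∑ m ∈ range K, m) *
      (2 ^ (L * N) * 2 ^ (L * (L * ∑ m ∈ range K, m) + (K * ∑ m ∈ range L, m) * (K + L * β))) := by
    have hne : (∏ i : Fin K × Fin L, (8 : ℤ) ^ (i.1 : ℕ)) * M.det ≠ 0 :=
      mul_ne_zero (prod_ne_zero_iff.mpr fun i _ => by positivity) hdet
    have h1 := Int.le_of_dvd (abs_pos.mpr hne) ((dvd_abs _ _).mpr hlow)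
    rw [abs_mul, prod_pow_eq_pow_sum, hsumk, abs_of_nonneg (by positivity : (0:ℤ) ≤ 8 ^ _)] at h1
    refine h1.trans (mul_le_mul_of_nonneg_left (hup.trans ?_) (by positivity))
    rw [prod_pow_eq_pow_sum, sum_add_distrib, ← mul_sum, ← sum_mul, hsumk, hsuml]
    exact mul_le_mul_of_nonneg_right hfac (by positivity)
  have h8 : (8 : ℤ) = 2 ^ 3 := by norm_num
  rw [h8, ← pow_mul, ← pow_mul, ← pow_add, ← pow_add] at hfin
  have hexp := (pow_le_pow_iff_right₀ (by norm_num : (1 : ℤ) < 2)).mp hfin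
  zify at hexp
  have sN := two_mul_sum_range N
  have sK := two_mul_sum_range K
  have sL := two_mul_sum_range L
  have hNz : (N : ℤ) = K * L := by rw [← hKL]; push_cast; ring
  have hL' : (8 : ℤ) ≤ L := by exact_mod_cast hL
  have hK4' : 4 * (L : ℤ) ≤ K := by exact_mod_cast hK4
  have hKβ' : 4 * ((L : ℤ) * β) ≤ K := by exact_mod_cast hKβ
  -- twice the exponents of two on both sides, with the common factor `K * L` displayed
  have hmain : ((K : ℤ) * L) * (3 * (K * L - 1)) ≤
      ((K : ℤ) * L) * (3 * (K - 1) + 2 * L + L * (K - 1) + (L - 1) * (K + L * β)) := by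
    have : 3 * ((N : ℤ) * (N - 1)) ≤ 3 * (L * (K * (K - 1))) + 2 * (L * N) +
        L * (L * (K * (K - 1))) + K * (L * (L - 1)) * (K + L * β) := by
      rw [← sN, ← sK, ← sL]; linarith
    rw [hNz] at this
    linarith
  have hdiv := le_of_mul_le_mul_left hmain (by nlinarith)
  nlinarith [mul_le_mul_of_nonneg_left hKβ' (by linarith : (0 : ℤ) ≤ L - 1)]

/-! ### The exponents are small compared with the bases -/

/-- Lifting the exponent at 2: replacing the exponent `2 * g` by `2` loses only the factors 2 of
`g`, of which there are at most `u`. -/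
theorem two_pow_dvd_of_pow (P Q : ℤ) (hP : Odd P) (hQ : Odd Q) (g u n : ℕ) (hg : 0 < g)
    (hgu : g < 2 ^ (u + 1)) (h : (2 : ℤ) ^ (n + u) ∣ P ^ (2 * g) - Q ^ (2 * g)) :
    (2 : ℤ) ^ n ∣ P ^ 2 - Q ^ 2 := by
  have hPQ : (2 : ℤ) ∣ P - Q := (hP.sub_odd hQ).two_dvd
  have hP2 : ¬ (2 : ℤ) ∣ P := by
    rw [← even_iff_two_dvd, Int.not_even_iff_odd]; exact hP
  have h1 := Int.two_pow_sub_pow hPQ hP2 (n := 2 * g) (by simp)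
  have h2 := Int.two_pow_sub_pow hPQ hP2 (n := 2) (by simp)
  have h3 : emultiplicity (2 : ℤ) ((2 * g : ℕ) : ℤ) = 1 + emultiplicity (2 : ℤ) (g : ℤ) := by
    rw [Nat.cast_mul, emultiplicity_mul Int.prime_two]
    congr 1
    exact (Int.finiteMultiplicity_iff.mpr ⟨by norm_num, by norm_num⟩).emultiplicity_self
  have h4 : emultiplicity (2 : ℤ) ((2 : ℕ) : ℤ) = 1 :=
    (Int.finiteMultiplicity_iff.mpr ⟨by norm_num, by norm_num⟩).emultiplicity_self
  rw [h4] at h2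
  have h5 : emultiplicity (2 : ℤ) (P ^ 2 - Q ^ 2) =
      emultiplicity 2 (P + Q) + emultiplicity 2 (P - Q) := by
    exact WithTop.add_right_cancel (ENat.natCast_ne_top 1) h2
  have h6 : emultiplicity (2 : ℤ) (P ^ (2 * g) - Q ^ (2 * g)) =
      emultiplicity (2 : ℤ) (P ^ 2 - Q ^ 2) + emultiplicity (2 : ℤ) (g : ℤ) := by
    rw [h3, ← h5, add_comm (1 : ℕ∞), ← add_assoc] at h1
    exact WithTop.add_right_cancel (ENat.natCast_ne_top 1) h1
  have h7 : emultiplicity (2 : ℤ) (g : ℤ) < (u + 1 : ℕ) := by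
    rw [emultiplicity_lt_iff_not_dvd]
    intro hd
    have : 2 ^ (u + 1) ∣ g := by exact_mod_cast hd
    exact absurd (Nat.le_of_dvd hg this) (by omega)
  rw [pow_dvd_iff_le_emultiplicity] at h ⊢
  rw [h6] at h
  obtain ⟨v, hv⟩ := ENat.ne_top_iff_exists.mp h7.ne_top
  rw [← hv] at h h7
  have hvu : v < u + 1 := by exact_mod_cast h7
  by_contra hlt
  push Not at hlt
  obtain ⟨m, hm⟩ := ENat.ne_top_iff_exists.mp hlt.ne_top
  rw [← hm] at h hlt
  have e1 : n + u ≤ m + v := by exact_mod_cast h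
  have e2 : m < n := by exact_mod_cast hlt
  omega

theorem sq_sub_one_dvd (a : ℕ) (ha : Odd a) : (8 : ℤ) ∣ ((a ^ 2 : ℕ) : ℤ) - 1 := by
  push_cast
  exact Int.eight_dvd_sq_sub_one_of_odd (by exact_mod_cast ha)

/-- If `2 ^ z ∣ a ^ x + b ^ y`, then `z < 48 * L ^ 2 * α * β + u`, where `α`, `β` bound the base-two
logarithms of `a`, `b` and `L` is slightly larger than `log (max x y)`. After division of the
exponents by their greatest common divisor, `two_log_core` applies to `a ^ 2` and `b ^ 2`, unless
both exponents are so small that the assertion follows from the size of `a ^ (2 * x') - b ^ (2 * y')`. -/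
theorem z_bound (a b x y z u L α β : ℕ) (ha1 : 1 < a) (hb1 : 1 < b) (ha : Odd a) (hb : Odd b)
    (hab : Nat.Coprime a b) (hx : 0 < x) (hy : 0 < y) (hα : a ≤ 2 ^ α) (hβ : b ≤ 2 ^ β)
    (hL : 8 ≤ L) (hxu : x < 2 ^ (u + 1))
    (hN : 16 * L ^ 2 * α * β ≤ 2 ^ L) (hζ : 4 * L * β * y + (4 * L * α + L) * x ≤ 2 ^ L)
    (hz : 2 ^ z ∣ a ^ x + b ^ y) : z < 48 * L ^ 2 * α * β + u := by
  by_contra hcon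
  push Not at hcon
  have hα0 : 1 ≤ α := by
    by_contra h
    have : α = 0 := by omega
    subst this; simp at hα; omega
  have hβ0 : 1 ≤ β := by
    by_contra h
    have : β = 0 := by omega
    subst this; simp at hβ; omega
  obtain ⟨g, x', y', hg, hco, hxg, hyg⟩ := Nat.exists_coprime' (m := x) (n := y) (Nat.gcd_pos_of_pos_left _ hx)
  have hx' : 0 < x' := Nat.pos_of_mul_pos_right (hxg ▸ hx)
  have hy' : 0 < y' := Nat.pos_of_mul_pos_right (hyg ▸ hy)
  have hgx : g ≤ x := by rw [hxg]; exact Nat.le_mul_of_pos_left _ hx'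
  have hx'x : x' ≤ x := by rw [hxg]; exact Nat.le_mul_of_pos_right _ hg
  have hy'y : y' ≤ y := by rw [hyg]; exact Nat.le_mul_of_pos_right _ hg
  set V := 48 * L ^ 2 * α * β with hV
  have hdvd : (2 : ℤ) ^ V ∣ ((a : ℤ) ^ x') ^ 2 - ((b : ℤ) ^ y') ^ 2 := by
    apply two_pow_dvd_of_pow ((a : ℤ) ^ x') ((b : ℤ) ^ y') ((Int.odd_coe_nat a).mpr ha).pow
      ((Int.odd_coe_nat b).mpr hb).pow g u V hg (by omega)
    have e : ((a : ℤ) ^ x') ^ (2 * g) - ((b : ℤ) ^ y') ^ (2 * g) =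
        ((a ^ x + b ^ y : ℕ) : ℤ) * ((a : ℤ) ^ x - (b : ℤ) ^ y) := by
      rw [hxg, hyg]; push_cast; ring
    rw [e]
    apply Dvd.dvd.mul_right
    have : 2 ^ (V + u) ∣ a ^ x + b ^ y := (pow_dvd_pow 2 hcon).trans hz
    exact_mod_cast this
  by_cases hbox : 2 * L * (2 * β) ≤ x' ∨ 2 * L * (2 * α) ≤ y'
  · refine two_log_core (a ^ 2) (b ^ 2) x' y' L (2 * α) (2 * β) (by omega) (by omega) hL
      (Nat.one_le_pow _ _ (by omega)) (by nlinarith) ?_ ?_ (sq_sub_one_dvd a ha)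
      (sq_sub_one_dvd b hb) hx' hy' hco ?_ ?_ hbox ?_
    · calc a ^ 2 ≤ (2 ^ α) ^ 2 := Nat.pow_le_pow_left hα 2
        _ = 2 ^ (2 * α) := by rw [← pow_mul, mul_comm]
    · calc b ^ 2 ≤ (2 ^ β) ^ 2 := Nat.pow_le_pow_left hβ 2
        _ = 2 ^ (2 * β) := by rw [← pow_mul, mul_comm]
    · calc _ = 16 * L ^ 2 * α * β := by ring
        _ ≤ _ := hN
    · refine le_trans ?_ hζ
      calc _ = 4 * L * β * y' + (4 * L * α + L) * x' := by ring
        _ ≤ _ := Nat.add_le_add (Nat.mul_le_mul_left _ hy'y) (Nat.mul_le_mul_left _ hx'x)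
    · have e1 : 3 * (4 * L ^ 2 * (2 * α) * (2 * β)) = V := by rw [hV]; ring
      rw [e1]
      convert hdvd using 1
      push_cast
      ring
  · push Not at hbox
    have hne : ((a : ℤ) ^ x') ^ 2 - ((b : ℤ) ^ y') ^ 2 ≠ 0 := by
      intro h0
      have h1 : (a ^ x') ^ 2 = (b ^ y') ^ 2 := by
        have : ((a : ℤ) ^ x') ^ 2 = ((b : ℤ) ^ y') ^ 2 := by linarith
        exact_mod_cast this
      have h2 : Nat.Coprime ((a ^ x') ^ 2) ((b ^ y') ^ 2) := ((hab.pow _ _).pow _ _)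
      rw [← h1, Nat.coprime_self] at h2
      have : 1 < (a ^ x') ^ 2 := Nat.one_lt_pow (by norm_num) (Nat.one_lt_pow hx'.ne' ha1)
      omega
    have hle := Int.le_of_dvd (abs_pos.mpr hne) ((dvd_abs _ _).mpr hdvd)
    have hVge : 8 * (L * α * β) ≤ V := by
      have hLab : L * α * β ≤ L ^ 2 * α * β :=
        Nat.mul_le_mul_right _ (Nat.mul_le_mul_right _ (Nat.le_self_pow (by norm_num) L))
      rw [hV]; nlinarith
    have hPb : (a ^ x') ^ 2 ≤ 2 ^ V := by
      calc (a ^ x') ^ 2 ≤ ((2 ^ α) ^ (4 * L * β)) ^ 2 := by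
            apply Nat.pow_le_pow_left
            refine (Nat.pow_le_pow_left hα _).trans (Nat.pow_le_pow_right (by positivity) ?_)
            have := hbox.1; nlinarith
        _ = 2 ^ (8 * (L * α * β)) := by rw [← pow_mul, ← pow_mul]; congr 1; ring
        _ ≤ 2 ^ V := Nat.pow_le_pow_right (by norm_num) hVge
    have hQb : (b ^ y') ^ 2 ≤ 2 ^ V := by
      calc (b ^ y') ^ 2 ≤ ((2 ^ β) ^ (4 * L * α)) ^ 2 := by
            apply Nat.pow_le_pow_left
            refine (Nat.pow_le_pow_left hβ _).trans (Nat.pow_le_pow_right (by positivity) ?_)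
            have := hbox.2; nlinarith
        _ = 2 ^ (8 * (L * α * β)) := by rw [← pow_mul, ← pow_mul]; congr 1; ring
        _ ≤ 2 ^ V := Nat.pow_le_pow_right (by norm_num) hVge
    have hP0 : 0 < (a ^ x') ^ 2 := by positivity
    have hQ0 : 0 < (b ^ y') ^ 2 := by positivity
    have hlt : |((a : ℤ) ^ x') ^ 2 - ((b : ℤ) ^ y') ^ 2| < 2 ^ V := by
      have c1 : ((a : ℤ) ^ x') ^ 2 ≤ 2 ^ V := by exact_mod_cast hPb
      have c2 : ((b : ℤ) ^ y') ^ 2 ≤ 2 ^ V := by exact_mod_cast hQb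
      have c3 : 0 < ((a : ℤ) ^ x') ^ 2 := by exact_mod_cast hP0
      have c4 : 0 < ((b : ℤ) ^ y') ^ 2 := by exact_mod_cast hQ0
      rw [abs_lt]; constructor <;> linarith
    omega

theorem quartic_lt_two_pow (u : ℕ) (hu : 40 ≤ u) : 10800 * u ^ 4 < 2 ^ u := by
  induction u, hu using Nat.le_induction with
  | base => norm_num
  | succ n hn ih =>
    have : (n + 1) ^ 4 ≤ 2 * n ^ 4 := by
      have h1 : 40 * (n + 1) ≤ 41 * n := by omega
      have h2 := Nat.pow_le_pow_left h1 4
      rw [mul_pow, mul_pow] at h2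
      norm_num at h2
      omega
    rw [pow_succ 2]
    omega

set_option maxHeartbeats 1000000 in
/-- Every solution has exponents that are tiny compared with a bound `M` for the bases. If `X` is the
largest exponent and `2 ^ u ≤ X < 2 ^ (u + 1)`, failure of the claim makes the logarithms of the
bases `O(u)`, and `z_bound` with `L = 2 * u` then bounds all exponents by a constant times `u ^ 4`,
which is less than `2 ^ u`. -/
theorem exponent_bound (a b c x y z M : ℕ) (ha1 : 1 < a) (hb1 : 1 < b) (hc1 : 1 < c) (ha : Odd a)
    (hb : Odd b) (hab : Nat.Coprime a b) (hc2 : 2 ∣ c) (hx : 0 < x) (hy : 0 < y) (hz : 0 < z)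
    (h : a ^ x + b ^ y = c ^ z) (haM : a ≤ M) (hbM : b ≤ M) (hcM : c ≤ M) (hM : 10 ^ 62 ≤ M) :
    4 * (max x (max y z)) ^ 5 ≤ M := by
  by_contra hcon
  push Not at hcon
  set X := max x (max y z) with hX
  have hxX : x ≤ X := le_max_left _ _
  have hyX : y ≤ X := (le_max_left _ _).trans (le_max_right _ _)
  have hX0 : X ≠ 0 := by omega
  set u := Nat.log 2 X with hu
  have hXlow : 2 ^ u ≤ X := Nat.pow_log_le_self 2 hX0
  have hXup : X < 2 ^ (u + 1) := Nat.lt_pow_succ_log_self (by norm_num) X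
  have hMu : M < 2 ^ (5 * u + 7) := by
    calc M < 4 * X ^ 5 := hcon
      _ ≤ 4 * (2 ^ (u + 1)) ^ 5 := by gcongr
      _ = 2 ^ (5 * u + 7) := by rw [← pow_mul]; ring
  have hu40 : 40 ≤ u := by
    have h1 : 2 ^ 205 < 2 ^ (5 * u + 7) := by
      refine lt_of_lt_of_le ?_ (hM.trans hMu.le)
      norm_num
    have := (Nat.pow_lt_pow_iff_right (by norm_num : 1 < 2)).mp h1
    omega
  have hquart := quartic_lt_two_pow u hu40
  have hlog : ∀ d : ℕ, 1 < d → d ≤ M → ∃ δ, 1 ≤ δ ∧ δ ≤ 5 * u + 6 ∧ 2 ^ δ ≤ d ∧ d < 2 ^ (δ + 1) := by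
    intro d hd hdM
    refine ⟨Nat.log 2 d, ?_, ?_, Nat.pow_log_le_self 2 (by omega),
      Nat.lt_pow_succ_log_self (by norm_num) d⟩
    · exact Nat.log_pos (by norm_num) hd
    · have := (Nat.log_lt_iff_lt_pow (by norm_num) (by omega : d ≠ 0)).mpr (hdM.trans_lt hMu)
      omega
  obtain ⟨α, hα1, hαu, hαl, hαr⟩ := hlog a ha1 haM
  obtain ⟨β, hβ1, hβu, hβl, hβr⟩ := hlog b hb1 hbM
  obtain ⟨γ, hγ1, hγu, hγl, hγr⟩ := hlog c hc1 hcM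
  have h2L : 2 ^ (2 * u) = 2 ^ u * 2 ^ u := by rw [two_mul, pow_add]
  have hab2 : (α + 1) * (β + 1) ≤ (6 * u) * (6 * u) := Nat.mul_le_mul (by omega) (by omega)
  have hzb := z_bound a b x y z u (2 * u) (α + 1) (β + 1) ha1 hb1 ha hb hab hx hy hαr.le hβr.le
    (by omega) (by omega) (by
      have h1 : 16 * (2 * u) ^ 2 * (α + 1) * (β + 1) ≤ 10800 * u ^ 4 := by
        calc _ = 64 * u ^ 2 * ((α + 1) * (β + 1)) := by ring
          _ ≤ 64 * u ^ 2 * ((6 * u) * (6 * u)) := Nat.mul_le_mul_left _ hab2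
          _ = 2304 * u ^ 4 := by ring
          _ ≤ _ := by omega
      have : 2 ^ u ≤ 2 ^ (2 * u) := Nat.pow_le_pow_right (by norm_num) (by omega)
      omega) (by
      have h1 : 4 * (2 * u) * (β + 1) + (4 * (2 * u) * (α + 1) + 2 * u) ≤ 98 * u ^ 2 := by
        have e1 : u * (β + 1) ≤ u * (6 * u) := Nat.mul_le_mul_left _ (by omega)
        have e2 : u * (α + 1) ≤ u * (6 * u) := Nat.mul_le_mul_left _ (by omega)
        have e3 : u ≤ u ^ 2 := Nat.le_self_pow (by norm_num) u
        calc _ = 8 * (u * (β + 1)) + 8 * (u * (α + 1)) + 2 * u := by ring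
          _ ≤ 8 * (u * (6 * u)) + 8 * (u * (6 * u)) + 2 * u ^ 2 := by gcongr
          _ = 98 * u ^ 2 := by ring
      have h2 : 196 * u ^ 2 ≤ 10800 * u ^ 4 := by
        have : u ^ 2 ≤ u ^ 4 := Nat.pow_le_pow_right (by omega) (by norm_num)
        omega
      calc _ ≤ 4 * (2 * u) * (β + 1) * X + (4 * (2 * u) * (α + 1) + 2 * u) * X :=
            Nat.add_le_add (Nat.mul_le_mul_left _ hyX) (Nat.mul_le_mul_left _ hxX)
        _ = (4 * (2 * u) * (β + 1) + (4 * (2 * u) * (α + 1) + 2 * u)) * X := by ring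
        _ ≤ (98 * u ^ 2) * 2 ^ (u + 1) := Nat.mul_le_mul h1 hXup.le
        _ = (196 * u ^ 2) * 2 ^ u := by ring
        _ ≤ 2 ^ u * 2 ^ u := Nat.mul_le_mul_right _ (by omega)
        _ = 2 ^ (2 * u) := h2L.symm)
    (by rw [h]; exact pow_dvd_pow_of_dvd hc2 z)
  have hz1 : z < 196 * u ^ 2 * (α + 1) * (β + 1) := by
    have : u ≤ 4 * u ^ 2 * ((α + 1) * (β + 1)) := by
      have : 1 ≤ (α + 1) * (β + 1) := Nat.mul_pos (by omega) (by omega)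
      calc u ≤ 4 * u ^ 2 * 1 := by nlinarith
        _ ≤ _ := Nat.mul_le_mul_left _ this
    calc z < 48 * (2 * u) ^ 2 * (α + 1) * (β + 1) + u := hzb
      _ ≤ 48 * (2 * u) ^ 2 * (α + 1) * (β + 1) + 4 * u ^ 2 * ((α + 1) * (β + 1)) :=
        Nat.add_le_add_left this _
      _ = _ := by ring
  -- comparing `d ^ e < c ^ z` bounds the exponents on the left-hand side
  have hexp : ∀ d δ e : ℕ, 2 ^ δ ≤ d → d ^ e < c ^ z → δ * e < (γ + 1) * z := by
    intro d δ e hd hlt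
    have h1 : (2 ^ δ) ^ e < (2 ^ (γ + 1)) ^ z :=
      lt_of_le_of_lt (Nat.pow_le_pow_left hd e)
        (hlt.trans_le (Nat.pow_le_pow_left hγr.le z))
    rw [← pow_mul, ← pow_mul] at h1
    exact (Nat.pow_lt_pow_iff_right (by norm_num)).mp h1
  have hxe := hexp a α x hαl (by have : 0 < b ^ y := by positivity
                                 omega)
  have hye := hexp b β y hβl (by have : 0 < a ^ x := by positivity
                                 omega)
  have hU : (5 * u + 7) * (5 * u + 7) ≤ 27 * u ^ 2 := by nlinarith
  have key : ∀ w α β : ℕ, 1 ≤ α → β ≤ 5 * u + 6 → z < 196 * u ^ 2 * (α + 1) * (β + 1) →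
      α * w < (γ + 1) * z → w < 2 ^ u := by
    intro w α β hα hβ hz hw
    by_contra hge
    push Not at hge
    have h1 : (γ + 1) * (β + 1) ≤ 27 * u ^ 2 :=
      (Nat.mul_le_mul (by omega) (by omega)).trans hU
    have h2 : α * w < α * (10800 * u ^ 4) := by
      calc α * w < (γ + 1) * z := hw
        _ ≤ (γ + 1) * (196 * u ^ 2 * (α + 1) * (β + 1)) := Nat.mul_le_mul_left _ hz.le
        _ = 196 * u ^ 2 * (α + 1) * ((γ + 1) * (β + 1)) := by ring
        _ ≤ 196 * u ^ 2 * (2 * α) * (27 * u ^ 2) := by gcongr; omega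
        _ = α * (10584 * u ^ 4) := by ring
        _ ≤ _ := by gcongr; norm_num
    have := lt_of_mul_lt_mul_left h2 (Nat.zero_le α)
    omega
  have hxlt := key x α β hα1 hβu hz1 hxe
  have hylt := key y β α hβ1 hαu (by linarith [hz1, mul_right_comm (196 * u ^ 2) (α + 1) (β + 1)]) hye
  have hzlt : z < 2 ^ u := by
    have : (α + 1) * (β + 1) ≤ 27 * u ^ 2 := (Nat.mul_le_mul (by omega) (by omega)).trans hU
    have : 196 * u ^ 2 * ((α + 1) * (β + 1)) ≤ 196 * u ^ 2 * (27 * u ^ 2) :=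
      Nat.mul_le_mul_left _ this
    have e : 196 * u ^ 2 * (27 * u ^ 2) = 5292 * u ^ 4 := by ring
    rw [e, ← mul_assoc] at this
    omega
  have : X < 2 ^ u := by
    rw [hX]; exact max_lt hxlt (max_lt hylt hzlt)
  omega

/-! ### The gap principle -/

/-- Standing assumptions on the bases of the equation `a ^ x + b ^ y = c ^ z` with `c` even. -/
structure Bases (a b c : ℕ) : Prop where
  ha1 : 1 < a
  hb1 : 1 < b
  hc1 : 1 < c
  ha : Odd a
  hb : Odd b
  hc : 2 ∣ c
  hab : Nat.Coprime a b
  hac : Nat.Coprime a c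
  hbc : Nat.Coprime b c

theorem Bases.symm {a b c : ℕ} (H : Bases a b c) : Bases b a c :=
  ⟨H.hb1, H.ha1, H.hc1, H.hb, H.ha, H.hc, H.hab.symm, H.hbc, H.hac⟩

/-- `(x, y, z)` is a solution of `a ^ x + b ^ y = c ^ z` in positive integers not exceeding `X`. -/
structure IsSol (a b c X x y z : ℕ) : Prop where
  x0 : 0 < x
  y0 : 0 < y
  z0 : 0 < z
  xX : x ≤ X
  yX : y ≤ X
  zX : z ≤ X
  eq : a ^ x + b ^ y = c ^ z

theorem IsSol.symm {a b c X x y z : ℕ} (h : IsSol a b c X x y z) : IsSol b a c X y x z :=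
  ⟨h.y0, h.x0, h.z0, h.yX, h.xX, h.zX, by rw [add_comm]; exact h.eq⟩

/-- Lifting the exponent at every prime divisor of `e` simultaneously: if `e ^ n` divides
`U ^ D - W ^ D`, it divides `(U - W) * D`. -/
theorem lte_dvd (e n D : ℕ) (U W T : ℤ) (hT : U - W = T)
    (hp : ∀ p : ℕ, p.Prime → p ∣ e → (p : ℤ) ∣ T ∧ ¬ (p : ℤ) ∣ U ∧ (p = 2 → (4 : ℤ) ∣ T))
    (h : (e : ℤ) ^ n ∣ U ^ D - W ^ D) : (e : ℤ) ^ n ∣ T * D := by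
  have h' : e ^ n ∣ (U ^ D - W ^ D).natAbs := by
    have := Int.natAbs_dvd_natAbs.mpr h
    rwa [Int.natAbs_pow, Int.natAbs_natCast] at this
  suffices hs : e ^ n ∣ (T * D).natAbs by
    have := Int.natCast_dvd.mpr hs
    exact_mod_cast this
  rw [Nat.dvd_iff_prime_pow_dvd_dvd]
  intro p k hpp hk
  rcases Nat.eq_zero_or_pos k with rfl | hk0
  · simp
  have hpe : p ∣ e := hpp.dvd_of_dvd_pow ((dvd_pow_self p hk0.ne').trans hk)
  obtain ⟨h1, h2, h3⟩ := hp p hpp hpe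
  have hkk : (p : ℤ) ^ k ∣ U ^ D - W ^ D := by
    have := Int.natCast_dvd.mpr (hk.trans h')
    exact_mod_cast this
  have hmul : emultiplicity (p : ℤ) (U ^ D - W ^ D) = emultiplicity (p : ℤ) (T * D) := by
    rw [emultiplicity_mul (Nat.prime_iff_prime_int.mp hpp)]
    rcases hpp.eq_two_or_odd' with rfl | hodd
    · have := Int.two_pow_sub_pow' (x := U) (y := W) D (hT ▸ h3 rfl) (by exact_mod_cast h2)
      rw [hT] at this
      exact_mod_cast this
    · have := Int.emultiplicity_pow_sub_pow hpp hodd (hT ▸ h1) h2 D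
      rw [hT, ← Int.natCast_emultiplicity] at this
      exact this
  have : p ^ k ∣ (T * D).natAbs := by
    apply Int.natCast_dvd.mp
    push_cast
    rw [pow_dvd_iff_le_emultiplicity, ← hmul, ← pow_dvd_iff_le_emultiplicity]
    exact hkk
  exact this

/-- Two relations `C ^ z = B ^ y` and `C ^ z' = B ^ y'` bound the orders of `B` and `C` by the
determinant of the exponents. -/
theorem pow_det_eq_one {G : Type*} [CommGroup G] (B C : G) (y z y' z' : ℕ)
    (h : C ^ z = B ^ y) (h' : C ^ z' = B ^ y') :
    C ^ ((y : ℤ) * z' - y' * z).natAbs = 1 ∧ B ^ ((y : ℤ) * z' - y' * z).natAbs = 1 := by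
  have e1 : C ^ ((y : ℤ) * z' - y' * z) = 1 := by
    have : C ^ (y * z') = C ^ (y' * z) := by
      rw [mul_comm y, mul_comm y', pow_mul, pow_mul, h, h', ← pow_mul, ← pow_mul, mul_comm]
    rw [zpow_sub, mul_inv_eq_one]
    exact_mod_cast this
  have e2 : B ^ ((y : ℤ) * z' - y' * z) = 1 := by
    have : B ^ (y * z') = B ^ (y' * z) := by
      rw [pow_mul, pow_mul, ← h, ← h', ← pow_mul, ← pow_mul, mul_comm]
    rw [zpow_sub, mul_inv_eq_one]
    exact_mod_cast this
  exact ⟨pow_natAbs_eq_one.mpr e1, pow_natAbs_eq_one.mpr e2⟩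

theorem natAbs_det_le (X y z y' z' : ℕ) (hy : y ≤ X) (hz : z ≤ X) (hy' : y' ≤ X) (hz' : z' ≤ X) :
    ((y : ℤ) * z' - y' * z).natAbs ≤ X ^ 2 := by
  have h1 : y * z' ≤ X * X := Nat.mul_le_mul hy hz'
  have h2 : y' * z ≤ X * X := Nat.mul_le_mul hy' hz
  zify at h1 h2
  have h3 : (0 : ℤ) ≤ y * z' := by positivity
  have h4 : (0 : ℤ) ≤ y' * z := by positivity
  zify
  rw [abs_le]
  constructor <;> nlinarith

/-- If `b` and `c` are units modulo `e ^ n` whose `D`-th powers are 1, then the `D`-th powers of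
`c ^ z` and `b ^ y` agree modulo `e ^ n`. -/
theorem int_dvd_of_units (e n D b c : ℕ) (y z : ℕ) (B C : (ZMod (e ^ n))ˣ)
    (hB : ((B : ZMod (e ^ n))) = b) (hC : ((C : ZMod (e ^ n))) = c)
    (hB1 : B ^ D = 1) (hC1 : C ^ D = 1) :
    (e : ℤ) ^ n ∣ ((c : ℤ) ^ z) ^ D - ((b : ℤ) ^ y) ^ D := by
  have h1 : ((c : ZMod (e ^ n))) ^ D = 1 := by
    rw [← hC]; simpa using congrArg Units.val hC1
  have h2 : ((b : ZMod (e ^ n))) ^ D = 1 := by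
    rw [← hB]; simpa using congrArg Units.val hB1
  have := (ZMod.intCast_zmod_eq_zero_iff_dvd (((c : ℤ) ^ z) ^ D - ((b : ℤ) ^ y) ^ D) (e ^ n)).mp (by
    push_cast
    rw [← pow_mul, ← pow_mul, mul_comm z, mul_comm y, pow_mul, pow_mul, h1, h2]
    simp)
  exact_mod_cast this

/-- The gap principle at `a`. Modulo `a ^ x2` the second and third solution read `c ^ z = b ^ y`, so
`b` and `c` have order dividing `D = |y2 * z3 - y3 * z2|`. As the first solution says
`c ^ z1 - b ^ y1 = a ^ x1`, lifting the exponent yields `a ^ x2 ∣ a ^ x1 * D`. -/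
theorem gap_odd {a b c X x1 y1 z1 x2 y2 z2 x3 y3 z3 : ℕ} (H : Bases a b c)
    (s1 : IsSol a b c X x1 y1 z1) (s2 : IsSol a b c X x2 y2 z2) (s3 : IsSol a b c X x3 y3 z3)
    (h12 : x1 ≤ x2) (h23 : x2 ≤ x3) (hne : y2 * z3 ≠ y3 * z2) : a ^ (x2 - x1) ≤ X ^ 2 := by
  set D := ((y2 : ℤ) * z3 - y3 * z2).natAbs with hD
  have hD0 : D ≠ 0 := by
    rw [hD, Int.natAbs_ne_zero, sub_ne_zero]
    exact_mod_cast hne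
  have : NeZero (a ^ x2) := ⟨pow_ne_zero _ (by have := H.ha1; omega)⟩
  set B := ZMod.unitOfCoprime b ((H.hab.symm).pow_right x2) with hB
  set C := ZMod.unitOfCoprime c ((H.hac.symm).pow_right x2) with hC
  have hz : ∀ x y z, x2 ≤ x → a ^ x + b ^ y = c ^ z → C ^ z = B ^ y := by
    intro x y z hx h
    apply Units.ext
    push_cast
    rw [hB, hC, ZMod.coe_unitOfCoprime, ZMod.coe_unitOfCoprime]
    have h0 : ((a ^ x : ℕ) : ZMod (a ^ x2)) = 0 :=
      (ZMod.natCast_eq_zero_iff _ _).mpr (pow_dvd_pow a hx)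
    have := congrArg (Nat.cast (R := ZMod (a ^ x2))) h
    rw [Nat.cast_add, h0] at this
    push_cast at this
    rw [← this, zero_add]
  obtain ⟨hC1, hB1⟩ := pow_det_eq_one B C y2 z2 y3 z3 (hz _ _ _ le_rfl s2.eq) (hz _ _ _ h23 s3.eq)
  have hdvd := int_dvd_of_units a x2 D b c y1 z1 B C (ZMod.coe_unitOfCoprime _ _)
    (ZMod.coe_unitOfCoprime _ _) hB1 hC1
  have hl := lte_dvd a x2 D _ _ ((a : ℤ) ^ x1) (by
      have := s1.eq
      zify at this; linarith) (by
      intro p hp hpa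
      refine ⟨dvd_pow (by exact_mod_cast hpa) s1.x0.ne', ?_, ?_⟩
      · intro hd
        have h1 : p ∣ c := hp.dvd_of_dvd_pow (n := z1) (by exact_mod_cast hd)
        exact Nat.not_coprime_of_dvd_of_dvd hp.one_lt hpa h1 H.hac
      · rintro rfl
        exact absurd (H.ha.of_dvd_nat hpa) (by decide)) hdvd
  have hl' : a ^ x2 ∣ a ^ x1 * D := by exact_mod_cast hl
  have e : a ^ x2 = a ^ x1 * a ^ (x2 - x1) := by rw [← pow_add]; congr 1; omega
  rw [e] at hl'
  have hl2 := Nat.dvd_of_mul_dvd_mul_left (pow_pos (by have := H.ha1; omega) _) hl'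
  exact (Nat.le_of_dvd (Nat.pos_of_ne_zero hD0) hl2).trans
    (natAbs_det_le X _ _ _ _ s2.yX s2.zX s3.yX s3.zX)

/-- The gap principle at a divisor `e` of `c`, with the determinant of the exponents `x`, `y`. Lifting
the exponent at 2 requires `4 ∣ c ^ z1` when `e` is even. -/
theorem gap_even_aux {a b c X x1 y1 z1 x2 y2 z2 x3 y3 z3 e : ℕ} (H : Bases a b c)
    (s1 : IsSol a b c X x1 y1 z1) (s2 : IsSol a b c X x2 y2 z2) (s3 : IsSol a b c X x3 y3 z3)
    (he0 : e ≠ 0) (hec : e ∣ c) (he2 : 2 ∣ e → 4 ∣ c ^ z1)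
    (h23 : z2 ≤ z3) (hne : x2 * y3 ≠ x3 * y2) :
    ∃ D, 0 < D ∧ D ≤ 2 * X ^ 2 ∧ e ^ z2 ∣ c ^ z1 * D := by
  set D := ((x2 : ℤ) * y3 - x3 * y2).natAbs with hD
  have hD0 : D ≠ 0 := by
    rw [hD, Int.natAbs_ne_zero, sub_ne_zero]
    exact_mod_cast hne
  refine ⟨2 * D, by omega, Nat.mul_le_mul_left _
    (natAbs_det_le X _ _ _ _ s2.xX s2.yX s3.xX s3.yX), ?_⟩
  have : NeZero (e ^ z2) := ⟨pow_ne_zero _ he0⟩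
  set A := ZMod.unitOfCoprime a ((H.hac.coprime_dvd_right hec).pow_right z2) with hA
  set B := ZMod.unitOfCoprime b ((H.hbc.coprime_dvd_right hec).pow_right z2) with hB
  -- modulo a power of a divisor of `c` the two summands differ by a sign, which squaring removes
  have hz : ∀ x y z, z2 ≤ z → a ^ x + b ^ y = c ^ z → (B ^ 2) ^ y = (A ^ 2) ^ x := by
    intro x y z hx h
    apply Units.ext
    push_cast
    rw [hA, hB, ZMod.coe_unitOfCoprime, ZMod.coe_unitOfCoprime]
    have h0 : ((c ^ z : ℕ) : ZMod (e ^ z2)) = 0 :=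
      (ZMod.natCast_eq_zero_iff _ _).mpr ((pow_dvd_pow e hx).trans (pow_dvd_pow_of_dvd hec z))
    have := congrArg (Nat.cast (R := ZMod (e ^ z2))) h
    rw [h0] at this
    push_cast at this
    have h1 : (b : ZMod (e ^ z2)) ^ y = - (a : ZMod (e ^ z2)) ^ x := by
      rw [eq_neg_iff_add_eq_zero, add_comm]; exact this
    rw [← pow_mul, ← pow_mul, mul_comm 2, mul_comm 2, pow_mul, pow_mul, h1, neg_sq]
  obtain ⟨hB1, hA1⟩ := pow_det_eq_one (A ^ 2) (B ^ 2) x2 y2 x3 y3 (hz _ _ _ le_rfl s2.eq)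
    (hz _ _ _ h23 s3.eq)
  rw [← hD, ← pow_mul] at hA1 hB1
  have hdvd := int_dvd_of_units e z2 (2 * D) b a y1 x1 B A (ZMod.coe_unitOfCoprime _ _)
    (ZMod.coe_unitOfCoprime _ _) hB1 hA1
  have hl := lte_dvd e z2 (2 * D) ((a : ℤ) ^ x1) (-(b : ℤ) ^ y1) ((c : ℤ) ^ z1) (by
      have := s1.eq
      zify at this; linarith) (by
      intro p hp hpe
      refine ⟨dvd_pow (by exact_mod_cast hpe.trans hec) s1.z0.ne', ?_, ?_⟩
      · intro hd
        have h1 : p ∣ a := hp.dvd_of_dvd_pow (n := x1) (by exact_mod_cast hd)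
        exact Nat.not_coprime_of_dvd_of_dvd hp.one_lt h1 (hpe.trans hec) H.hac
      · rintro rfl
        exact_mod_cast he2 hpe) (by
      rw [(even_two_mul D).neg_pow]; exact hdvd)
  exact_mod_cast hl

/-- The gap principle at `c`, when `4 ∣ c ^ z1`. -/
theorem gap_even {a b c X x1 y1 z1 x2 y2 z2 x3 y3 z3 : ℕ} (H : Bases a b c)
    (s1 : IsSol a b c X x1 y1 z1) (s2 : IsSol a b c X x2 y2 z2) (s3 : IsSol a b c X x3 y3 z3)
    (h4 : 4 ∣ c ^ z1) (h12 : z1 ≤ z2)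
    (h23 : z2 ≤ z3) (hne : x2 * y3 ≠ x3 * y2) : c ^ (z2 - z1) ≤ 2 * X ^ 2 := by
  have hc1 := H.hc1
  obtain ⟨D, hD0, hD, hd⟩ := gap_even_aux H s1 s2 s3 (e := c) (by omega) dvd_rfl (fun _ => h4) h23 hne
  have e : c ^ z2 = c ^ z1 * c ^ (z2 - z1) := by rw [← pow_add]; congr 1; omega
  rw [e] at hd
  exact (Nat.le_of_dvd hD0 (Nat.dvd_of_mul_dvd_mul_left (pow_pos (by omega) _) hd)).trans hD

/-- A gap between two values of `z` bounds `c`, also when `c ≡ 2 (mod 4)` and `z1 = 1`: then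
the argument is run with `c / 2` in place of `c`. -/
theorem gap_even_base {a b c X x1 y1 z1 x2 y2 z2 x3 y3 z3 : ℕ} (H : Bases a b c)
    (s1 : IsSol a b c X x1 y1 z1) (s2 : IsSol a b c X x2 y2 z2) (s3 : IsSol a b c X x3 y3 z3)
    (h12 : z1 < z2)
    (h23 : z2 ≤ z3) (hne : x2 * y3 ≠ x3 * y2) : c ≤ 8 * X ^ 2 := by
  have hc1 := H.hc1
  by_cases h4 : 4 ∣ c ^ z1
  · have := gap_even H s1 s2 s3 h4 h12.le h23 hne
    have h5 : c ≤ c ^ (z2 - z1) := Nat.le_self_pow (by omega) c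
    omega
  · obtain ⟨e, he⟩ := H.hc
    have hz1 : z1 = 1 := by
      by_contra hne1
      have := s1.z0
      exact h4 ((by exact pow_dvd_pow_of_dvd H.hc 2 : 2 ^ 2 ∣ c ^ 2).trans
        (pow_dvd_pow c (by omega)))
    subst hz1
    have he2 : ¬ 2 ∣ e := by
      rintro ⟨k, rfl⟩
      exact h4 ⟨k, by rw [he]; ring⟩
    obtain ⟨D, hD0, hD, hd⟩ := gap_even_aux H s1 s2 s3 (e := e) (by omega) ⟨2, by omega⟩
      (fun h => absurd h he2) h23 hne
    have hd2 : e * e ∣ e * (2 * D) := by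
      have : e * e ∣ e ^ z2 := by rw [← sq]; exact pow_dvd_pow e (by omega)
      refine this.trans (hd.trans (dvd_of_eq ?_))
      rw [he]; ring
    have := Nat.le_of_dvd (by omega) (Nat.dvd_of_mul_dvd_mul_left (by omega) hd2)
    omega

/-! ### Exponents of distinct solutions are not proportional -/

/-- Proportional pairs `(x, z)` and `(x', z')` are `(p * m, q * m)` and `(p * n, q * n)` with `m`, `n` coprime. -/
theorem exists_param (x z x' z' : ℕ) (hx : 0 < x) (hx' : 0 < x') (hz : 0 < z)
    (h : x * z' = x' * z) : ∃ p q m n : ℕ, 0 < p ∧ 0 < q ∧ 0 < m ∧ 0 < n ∧ Nat.Coprime m n ∧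
      x = p * m ∧ x' = p * n ∧ z = q * m ∧ z' = q * n := by
  obtain ⟨p, m, n, hp, hco, hm, hn⟩ := Nat.exists_coprime' (m := x) (n := x')
    (Nat.gcd_pos_of_pos_left _ hx)
  have hm0 : 0 < m := Nat.pos_of_mul_pos_right (hm ▸ hx)
  have hn0 : 0 < n := Nat.pos_of_mul_pos_right (hn ▸ hx')
  have h1 : m * z' = n * z := by
    apply Nat.eq_of_mul_eq_mul_left hp
    calc p * (m * z') = m * p * z' := by ring
      _ = n * p * z := by rw [← hm, ← hn, h]
      _ = _ := by ring
  obtain ⟨q, hq⟩ := hco.dvd_of_dvd_mul_left (⟨z', h1.symm⟩ : m ∣ n * z)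
  have hq0 : 0 < q := Nat.pos_of_ne_zero (by rintro rfl; omega)
  refine ⟨p, q, m, n, hp, hq0, hm0, hn0, hco, by rw [hm, mul_comm], by rw [hn, mul_comm],
    by rw [hq, mul_comm], ?_⟩
  apply Nat.eq_of_mul_eq_mul_left hm0
  rw [h1, hq]; ring

/-- A form of the Bernoulli inequality, strict for exponents at least 2. -/
theorem pow_add_mul_le' (A d n : ℕ) (hA : 1 ≤ A) (hd : 1 ≤ d) (hn : 1 ≤ n) :
    A ^ n + n * d ≤ (A + d) ^ n ∧ (2 ≤ n → A ^ n + n * d < (A + d) ^ n) := by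
  induction n, hn using Nat.le_induction with
  | base => simp
  | succ n hn ih =>
    have hlt : A ^ (n + 1) + (n + 1) * d < (A + d) ^ (n + 1) := by
      have h1 : 1 ≤ A ^ n := Nat.one_le_pow _ _ hA
      have h2 : 0 < n * d := Nat.mul_pos hn hd
      calc A ^ (n + 1) + (n + 1) * d < A ^ n * A + 1 * d + 2 * (n * d) := by rw [pow_succ]; linarith
        _ ≤ A ^ n * A + A ^ n * d + (A + d) * (n * d) := by gcongr; omega
        _ = (A ^ n + n * d) * (A + d) := by ring
        _ ≤ (A + d) ^ n * (A + d) := Nat.mul_le_mul_right _ ih.1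
        _ = _ := (pow_succ _ _).symm
    exact ⟨hlt.le, fun _ => hlt⟩

/-- For coprime `m < n`, the differences `C ^ m - A ^ m`, `C ^ n - A ^ n` are not both powers of the
same odd `b`: the smaller power of `b` would divide `C - A`, and lifting the exponent would bound the
quotient `(C ^ n - A ^ n) / (C - A)` by `n`. -/
theorem no_two_diff (A C b m n y y' : ℕ) (hA : 1 ≤ A) (hb1 : 1 < b) (hb : Odd b)
    (hAb : Nat.Coprime A b) (hCb : Nat.Coprime C b) (hm : 0 < m) (hmn : m < n)
    (hco : Nat.Coprime m n) (hy : 0 < y)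
    (h : A ^ m + b ^ y = C ^ m) (h' : A ^ n + b ^ y' = C ^ n) : False := by
  have hAC : A < C := by
    by_contra hle
    push Not at hle
    have := Nat.pow_le_pow_left hle m
    have : 0 < b ^ y := by positivity
    omega
  obtain ⟨d, rfl⟩ : ∃ d, C = A + d := ⟨C - A, by omega⟩
  have hd : 1 ≤ d := by omega
  have b1 := (pow_add_mul_le' A d m hA hd hm).1
  have b2 := (pow_add_mul_le' A d n hA hd (by omega)).2 (by omega)
  have hd1 : d ≤ b ^ y := by
    have : d ≤ m * d := Nat.le_mul_of_pos_left _ hm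
    omega
  have hd2 : n * d < b ^ y' := by omega
  set w := min y y' with hw
  have hdvd : b ^ w ∣ d := by
    set U := ZMod.unitOfCoprime A (hAb.pow_right w) with hU
    set V := ZMod.unitOfCoprime (A + d) (hCb.pow_right w) with hV
    have key : ∀ k s, w ≤ s → A ^ k + b ^ s = (A + d) ^ k → (V * U⁻¹) ^ k = 1 := by
      intro k s hs hk
      rw [mul_pow, inv_pow, mul_inv_eq_one]
      apply Units.ext
      push_cast
      rw [hU, hV, ZMod.coe_unitOfCoprime, ZMod.coe_unitOfCoprime]
      have h0 : ((b ^ s : ℕ) : ZMod (b ^ w)) = 0 :=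
        (ZMod.natCast_eq_zero_iff _ _).mpr (pow_dvd_pow b hs)
      have := congrArg (Nat.cast (R := ZMod (b ^ w))) hk
      rw [Nat.cast_add, h0, add_zero, Nat.cast_pow, Nat.cast_pow] at this
      exact this.symm
    have h1 := eq_one_of_pow_coprime _ m n hco (key m y (min_le_left _ _) h)
      (key n y' (min_le_right _ _) h')
    rw [mul_inv_eq_one] at h1
    have h2 := congrArg Units.val h1
    rw [hU, hV, ZMod.coe_unitOfCoprime, ZMod.coe_unitOfCoprime] at h2
    push_cast at h2
    exact (ZMod.natCast_eq_zero_iff _ _).mp (add_eq_left.mp h2)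
  have hle := Nat.le_of_dvd hd hdvd
  have hd3 : d ≤ n * d := Nat.le_mul_of_pos_left _ (by omega)
  have hwy : w = y := by
    rcases min_choice y y' with hc | hc
    · exact hc
    · rw [hw, hc] at hle; omega
  rw [hwy] at hle
  have hdy : b ^ y = d := le_antisymm hle hd1
  have hl := lte_dvd b y' n ((A + d : ℕ) : ℤ) (A : ℤ) (d : ℤ) (by push_cast; ring) (by
    intro p hp hpb
    refine ⟨?_, ?_, ?_⟩
    · rw [← hdy]; exact_mod_cast dvd_pow hpb hy.ne'
    · intro hc
      exact Nat.not_coprime_of_dvd_of_dvd hp.one_lt (by exact_mod_cast hc) hpb hCb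
    · rintro rfl
      exact absurd (hb.of_dvd_nat hpb) (by decide)) (by
    refine dvd_of_eq ?_
    zify at h'
    push_cast
    linarith)
  have hl' : b ^ y' ∣ d * n := by exact_mod_cast hl
  have := Nat.le_of_dvd (Nat.mul_pos hd (by omega)) hl'
  rw [mul_comm] at this
  omega

/-- For coprime `m < n`, the sums `A ^ m + B ^ m`, `A ^ n + B ^ n` are not both powers of the same
even `c`: both `m` and `n` would be odd, and `(A ^ n + B ^ n) / (A + B)` would be odd. -/
theorem no_two_sum (A B c m n z z' : ℕ) (hA : 1 < A) (hB : 1 < B) (hc1 : 1 < c) (hc : 2 ∣ c)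
    (hAc : Nat.Coprime A c) (hBc : Nat.Coprime B c) (hm : 0 < m) (hmn : m < n)
    (hco : Nat.Coprime m n) (hz : 0 < z)
    (h : A ^ m + B ^ m = c ^ z) (h' : A ^ n + B ^ n = c ^ z') : False := by
  have hzz : z < z' := by
    apply (Nat.pow_lt_pow_iff_right hc1).mp
    rw [← h, ← h']
    exact Nat.add_lt_add (Nat.pow_lt_pow_right hA hmn) (Nat.pow_lt_pow_right hB hmn)
  have hAm : A ≤ A ^ m := Nat.le_self_pow hm.ne' A
  have hBm : B ≤ B ^ m := Nat.le_self_pow hm.ne' B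
  set U := ZMod.unitOfCoprime A (hAc.pow_right z) with hU
  set V := ZMod.unitOfCoprime B (hBc.pow_right z) with hV
  have key : ∀ k s, z ≤ s → A ^ k + B ^ k = c ^ s → (U * V⁻¹) ^ k = -1 := by
    intro k s hs hk
    rw [mul_pow, inv_pow, mul_inv_eq_iff_eq_mul]
    apply Units.ext
    push_cast
    rw [hU, hV, ZMod.coe_unitOfCoprime, ZMod.coe_unitOfCoprime, neg_one_mul,
      eq_neg_iff_add_eq_zero]
    have h0 : ((c ^ s : ℕ) : ZMod (c ^ z)) = 0 :=
      (ZMod.natCast_eq_zero_iff _ _).mpr (pow_dvd_pow c hs)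
    have := congrArg (Nat.cast (R := ZMod (c ^ z))) hk
    rw [h0] at this
    exact_mod_cast this
  have k2 := key n z' hzz.le h'
  have k1 := key m z le_rfl h
  -- otherwise `1 = -1` modulo `c ^ z`
  have hpar : ∀ i j, (U * V⁻¹) ^ i = -1 → (U * V⁻¹) ^ j = -1 → Odd j → Odd i := by
    intro i j hi hj hodd
    by_contra hev
    rw [Nat.not_odd_iff_even] at hev
    have e1 : ((U * V⁻¹) ^ i) ^ j = -1 := by rw [hi, hodd.neg_one_pow]
    have e2 : ((U * V⁻¹) ^ i) ^ j = 1 := by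
      rw [← pow_mul, mul_comm i j, pow_mul, hj, hev.neg_one_pow]
    rw [e1] at e2
    have e3 := congrArg Units.val e2
    push_cast at e3
    have e4 : ((2 : ℕ) : ZMod (c ^ z)) = 0 := by
      push_cast
      linear_combination -e3
    have := Nat.le_of_dvd (by norm_num) ((ZMod.natCast_eq_zero_iff _ _).mp e4)
    omega
  have hodd : Odd m ∧ Odd n := by
    rcases Nat.even_or_odd m with hme | hmo
    · rcases Nat.even_or_odd n with hne | hno
      · exact absurd hco (Nat.not_coprime_of_dvd_of_dvd (by norm_num) hme.two_dvd hne.two_dvd)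
      · exact ⟨hpar m n k1 k2 hno, hno⟩
    · exact ⟨hmo, hpar n m k2 k1 hmo⟩
  have k3 : -(U * V⁻¹) = 1 := by
    refine eq_one_of_pow_coprime _ m n hco ?_ ?_
    · rw [hodd.1.neg_pow, k1, neg_neg]
    · rw [hodd.2.neg_pow, k2, neg_neg]
  have k4 : c ^ z ∣ A + B := by
    apply (ZMod.natCast_eq_zero_iff _ _).mp
    have e1 : U = -V := by
      have := congrArg (· * V) k3
      simp only [one_mul, neg_mul, inv_mul_cancel_right] at this
      rw [← this, neg_neg]
    have e2 := congrArg Units.val e1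
    push_cast at e2
    rw [hU, hV, ZMod.coe_unitOfCoprime, ZMod.coe_unitOfCoprime] at e2
    push_cast
    rw [e2]; ring
  have k5 : A + B = c ^ z := le_antisymm (by omega) (Nat.le_of_dvd (by omega) k4)
  have hA2 : ¬ (2 : ℤ) ∣ A := by
    intro hd
    exact Nat.not_coprime_of_dvd_of_dvd (by norm_num) (by exact_mod_cast hd) hc hAc
  have k6 := emultiplicity_pow_sub_pow_of_prime (p := (2 : ℤ)) Int.prime_two (x := (A : ℤ))
    (y := -(B : ℤ)) (by
      rw [sub_neg_eq_add]
      have : 2 ∣ A + B := by rw [k5]; exact dvd_pow hc hz.ne'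
      exact_mod_cast this) hA2 (n := n) (by
      intro hd
      have : 2 ∣ n := by exact_mod_cast hd
      exact absurd (hodd.2.of_dvd_nat this) (by decide))
  rw [hodd.2.neg_pow, sub_neg_eq_add, sub_neg_eq_add] at k6
  have e1 : (A : ℤ) ^ n + (B : ℤ) ^ n = ((c ^ z' : ℕ) : ℤ) := by rw [← h']; push_cast; ring
  have e2 : (A : ℤ) + B = ((c ^ z : ℕ) : ℤ) := by rw [← k5]; push_cast; ring
  have k7 : 2 * c ^ z ∣ c ^ z' := by
    calc 2 * c ^ z ∣ c * c ^ z := Nat.mul_dvd_mul_right hc _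
      _ = c ^ (z + 1) := by rw [pow_succ, mul_comm]
      _ ∣ c ^ z' := pow_dvd_pow c hzz
  have k8 : emultiplicity (2 : ℤ) ((2 * c ^ z : ℕ) : ℤ) ≤ emultiplicity (2 : ℤ) ((c ^ z' : ℕ) : ℤ) :=
    emultiplicity_le_emultiplicity_of_dvd_right (by exact_mod_cast k7)
  rw [← e1, k6, e2, Nat.cast_mul, emultiplicity_mul Int.prime_two] at k8
  have hfin : FiniteMultiplicity (2 : ℤ) ((c ^ z : ℕ) : ℤ) :=
    Int.finiteMultiplicity_iff.mpr ⟨by norm_num, by exact_mod_cast (pow_pos (by omega) z).ne'⟩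
  have h2 : emultiplicity (2 : ℤ) ((2 : ℕ) : ℤ) = 1 :=
    (Int.finiteMultiplicity_iff.mpr ⟨by norm_num, by norm_num⟩).emultiplicity_self
  rw [h2, hfin.emultiplicity_eq_multiplicity] at k8
  have : 1 + multiplicity (2 : ℤ) ((c ^ z : ℕ) : ℤ) ≤ multiplicity (2 : ℤ) ((c ^ z : ℕ) : ℤ) := by
    exact_mod_cast k8
  omega

/-- Distinct solutions have non-proportional `(x, z)`: otherwise two powers of `b` have the form
`C ^ m - A ^ m`, `C ^ n - A ^ n` excluded by `no_two_diff`. -/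
theorem not_parallel_xz {a b c X x y z x' y' z' : ℕ} (H : Bases a b c) (s : IsSol a b c X x y z)
    (s' : IsSol a b c X x' y' z') (hne : (x, y) ≠ (x', y')) : x * z' ≠ x' * z := by
  intro heq
  have ha1 := H.ha1
  obtain ⟨p, q, m, n, hp, hq, hm, hn, hco, rfl, rfl, rfl, rfl⟩ :=
    exists_param x z x' z' s.x0 s'.x0 s.z0 heq
  have e := s.eq
  have e' := s'.eq
  have hA : 1 ≤ a ^ p := Nat.one_le_pow _ _ (by omega)
  have hb' : Nat.Coprime (a ^ p) b := H.hab.pow_left p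
  have hc' : Nat.Coprime (c ^ q) b := H.hbc.symm.pow_left q
  rw [pow_mul, pow_mul] at e e'
  rcases lt_trichotomy m n with hlt | rfl | hlt
  · exact no_two_diff _ _ b m n y y' hA H.hb1 H.hb hb' hc' hm hlt hco s.y0 e e'
  · apply hne
    rw [← e'] at e
    rw [Nat.pow_right_injective H.hb1 (Nat.add_left_cancel e)]
  · exact no_two_diff _ _ b n m y' y hA H.hb1 H.hb hb' hc' hn hlt hco.symm s'.y0 e' e

theorem not_parallel_yz {a b c X x y z x' y' z' : ℕ} (H : Bases a b c) (s : IsSol a b c X x y z)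
    (s' : IsSol a b c X x' y' z') (hne : (x, y) ≠ (x', y')) : y * z' ≠ y' * z :=
  not_parallel_xz H.symm s.symm s'.symm (by
    intro h
    simp only [Prod.mk.injEq] at h
    exact hne (by rw [h.1, h.2]))

/-- Distinct solutions have non-proportional `(x, y)`: otherwise two powers of `c` have the form
`A ^ m + B ^ m`, `A ^ n + B ^ n` excluded by `no_two_sum`. -/
theorem not_parallel_xy {a b c X x y z x' y' z' : ℕ} (H : Bases a b c) (s : IsSol a b c X x y z)
    (s' : IsSol a b c X x' y' z') (hne : (x, y) ≠ (x', y')) : x * y' ≠ x' * y := by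
  intro heq
  obtain ⟨p, q, m, n, hp, hq, hm, hn, hco, rfl, rfl, rfl, rfl⟩ :=
    exists_param x y x' y' s.x0 s'.x0 s.y0 heq
  have e := s.eq
  have he' := s'.eq
  have hA : 1 < a ^ p := Nat.one_lt_pow hp.ne' H.ha1
  have hB : 1 < b ^ q := Nat.one_lt_pow hq.ne' H.hb1
  have ha' : Nat.Coprime (a ^ p) c := H.hac.pow_left p
  have hb' : Nat.Coprime (b ^ q) c := H.hbc.pow_left q
  rw [pow_mul, pow_mul] at e he'
  rcases lt_trichotomy m n with hlt | rfl | hlt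
  · exact no_two_sum _ _ c m n z z' hA hB H.hc1 H.hc ha' hb' hm hlt hco s.z0 e he'
  · exact hne rfl
  · exact no_two_sum _ _ c n m z' z hA hB H.hc1 H.hc ha' hb' hn hlt hco.symm s'.z0 he' e

/-! ### Nearly equal powers -/

/-- The Bernoulli inequality for `(1 - t / (B + t)) ^ (n + 1)`, with denominators cleared. -/
theorem pow_le_sub_pow_add (B t n : ℕ) :
    (B + t) ^ (n + 1) ≤ B ^ (n + 1) + (n + 1) * t * (B + t) ^ n := by
  induction n with
  | zero => simp
  | succ n ih =>
    have h : B ^ (n + 1) ≤ (B + t) ^ (n + 1) := Nat.pow_le_pow_left (by omega) _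
    calc (B + t) ^ (n + 1 + 1) = (B + t) * (B + t) ^ (n + 1) := by ring
      _ ≤ (B + t) * (B ^ (n + 1) + (n + 1) * t * (B + t) ^ n) := Nat.mul_le_mul_left _ ih
      _ = B ^ (n + 1 + 1) + t * B ^ (n + 1) + (n + 1) * t * (B + t) ^ (n + 1) := by ring
      _ ≤ B ^ (n + 1 + 1) + t * (B + t) ^ (n + 1) + (n + 1) * t * (B + t) ^ (n + 1) := by gcongr
      _ = _ := by ring

/-- If `b ^ y ≤ c ^ z` and `b ^ y'` falls short of `c ^ z'` by a relative error of at most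
`1 / (2 * z)`, then `y / z ≤ y' / z'`. Indeed `c ^ (z * z')` exceeds `b ^ (y' * z)` at most by a
factor 2, while `y' * z < y * z'` would make it exceed by a factor `b ≥ 3`. -/
theorem close_le (b c s t y z y' z' : ℕ) (hb : 3 ≤ b) (hz : 0 < z)
    (h : b ^ y + s = c ^ z) (h' : b ^ y' + t = c ^ z') (ht : 2 * z * t ≤ c ^ z') :
    y * z' ≤ y' * z := by
  by_contra hcon
  push Not at hcon
  obtain ⟨n, rfl⟩ : ∃ n, z = n + 1 := ⟨z - 1, by omega⟩
  have h1 := pow_le_sub_pow_add (b ^ y') t n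
  rw [h'] at h1
  have h2 : 2 * ((n + 1) * t * (c ^ z') ^ n) ≤ (c ^ z') ^ (n + 1) := by
    calc _ = 2 * (n + 1) * t * (c ^ z') ^ n := by ring
      _ ≤ c ^ z' * (c ^ z') ^ n := Nat.mul_le_mul_right _ ht
      _ = _ := by ring
  have h3 : (b ^ y) ^ z' ≤ (c ^ z') ^ (n + 1) := by
    rw [← pow_mul c, mul_comm z', pow_mul]
    exact Nat.pow_le_pow_left (by omega) _
  have h4 : 3 * (b ^ y') ^ (n + 1) ≤ (b ^ y) ^ z' := by
    rw [← pow_mul, ← pow_mul]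
    calc 3 * b ^ (y' * (n + 1)) ≤ b * b ^ (y' * (n + 1)) := Nat.mul_le_mul_right _ hb
      _ = b ^ (y' * (n + 1) + 1) := by rw [pow_succ, mul_comm]
      _ ≤ _ := Nat.pow_le_pow_right (by omega) hcon
  have h5 : 0 < (b ^ y') ^ (n + 1) := by positivity
  omega

/-- Two solutions in which a power of `b` nearly equals the power of `c` have the same ratio `y / z`,
both ratios being close to `log c / log b`. -/
theorem close_eq (b c s t y z y' z' : ℕ) (hb : 3 ≤ b) (hz : 0 < z) (hz' : 0 < z')
    (h : b ^ y + s = c ^ z) (h' : b ^ y' + t = c ^ z') (ht : 2 * z * t ≤ c ^ z')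
    (hs : 2 * z' * s ≤ c ^ z) : y * z' = y' * z :=
  le_antisymm (close_le b c s t y z y' z' hb hz h h' ht) (close_le b c t s y' z' y z hb hz' h' h hs)

/-- The hypothesis `h` says `p * (q - 1) = r * (w - 1)`; as `p`, `r` are coprime, `p ∣ w - 1` and
`r ∣ q - 1`. -/
theorem cross_le (p q r w : ℕ) (hco : Nat.Coprime p r) (hq : 1 < q) (hw : 1 < w)
    (h : p + r * w = p * q + r) : p ≤ w ∧ r ≤ q := by
  have e : p * (q - 1) = r * (w - 1) := by
    rw [Nat.mul_sub, Nat.mul_sub]; omega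
  have h1 := Nat.le_of_dvd (by omega) (hco.dvd_of_dvd_mul_left (⟨q - 1, e.symm⟩ : p ∣ r * (w - 1)))
  have h2 := Nat.le_of_dvd (by omega)
    (hco.symm.dvd_of_dvd_mul_left (⟨w - 1, e⟩ : r ∣ p * (q - 1)))
  omega

/-! ### Three solutions, `c` the largest base -/

theorem eight_sq_lt (X M : ℕ) (h : 4 * X ^ 5 ≤ M) (hM : 10 ^ 62 ≤ M) : 8 * X ^ 2 < M := by
  rcases Nat.lt_or_ge X 3 with hX | hX
  · have : X ^ 2 ≤ 2 ^ 2 := Nat.pow_le_pow_left (by omega) 2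
    omega
  · have h1 : 3 ^ 3 ≤ X ^ 3 := Nat.pow_le_pow_left hX 3
    have h2 : X ^ 5 = X ^ 2 * X ^ 3 := by ring
    have h3 : X ^ 2 * 3 ^ 3 ≤ X ^ 2 * X ^ 3 := Nat.mul_le_mul_left _ h1
    have h4 : 0 < X ^ 2 := by positivity
    omega

theorem Bases.three_le {a b c : ℕ} (H : Bases a b c) : 3 ≤ a := by
  have := H.ha1
  obtain ⟨k, hk⟩ := H.ha
  omega

/-- Two solutions share the value `z`, and the third has `y3 ≥ y1`. By `cross_le` and the gap
principle `a ^ x1` and `b ^ y2` are small. If `x3 < x2`, then `a ^ x3` is small as well, and the first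
and third solution contradict `close_eq`; otherwise `a ^ x2` is small, and so is `c ^ z`. -/
theorem case_c_core {a b c X x1 y1 z x2 y2 x3 y3 z3 : ℕ} (H : Bases a b c)
    (s1 : IsSol a b c X x1 y1 z) (s2 : IsSol a b c X x2 y2 z) (s3 : IsSol a b c X x3 y3 z3)
    (h13 : (x1, y1) ≠ (x3, y3)) (h23 : (x2, y2) ≠ (x3, y3))
    (hX : 4 * X ^ 5 ≤ c) (hx : x1 < x2) (hy : y2 < y1) (hy3 : y1 ≤ y3) : False := by
  have ha1 := H.ha1
  have hb1 := H.hb1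
  have hc1 := H.hc1
  have hX0 : 0 < X := s1.x0.trans_le s1.xX
  have hcz : c ≤ c ^ z := Nat.le_self_pow s1.z0.ne' c
  have hcz3 : c ≤ c ^ z3 := Nat.le_self_pow s3.z0.ne' c
  have e1 : a ^ x2 = a ^ x1 * a ^ (x2 - x1) := by rw [← pow_add]; congr 1; omega
  have e2 : b ^ y1 = b ^ y2 * b ^ (y1 - y2) := by rw [← pow_add]; congr 1; omega
  obtain ⟨k1, k2⟩ := cross_le (a ^ x1) (a ^ (x2 - x1)) (b ^ y2) (b ^ (y1 - y2)) (H.hab.pow _ _)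
    (Nat.one_lt_pow (by omega) ha1) (Nat.one_lt_pow (by omega) hb1) (by
      rw [← e1, ← e2, s1.eq, s2.eq])
  have g1 : b ^ (y1 - y2) ≤ X ^ 2 := gap_odd H.symm s2.symm s1.symm s3.symm hy.le hy3
    (not_parallel_xz H s1 s3 h13)
  have k3 : a ^ x1 ≤ X ^ 2 := k1.trans g1
  have hp45 : X ^ 4 ≤ X ^ 5 := Nat.pow_le_pow_right hX0 (by norm_num)
  have hp35 : X ^ 3 ≤ X ^ 5 := Nat.pow_le_pow_right hX0 (by norm_num)
  have hp25 : X ^ 2 ≤ X ^ 5 := Nat.pow_le_pow_right hX0 (by norm_num)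
  have hp24 : X ^ 2 ≤ X ^ 4 := Nat.pow_le_pow_right hX0 (by norm_num)
  have hp5 : 0 < X ^ 5 := by positivity
  have e4 : X ^ 2 * X ^ 2 = X ^ 4 := by ring
  rcases Nat.lt_or_ge x3 x2 with hlt | hge
  · have k4 : a ^ x3 ≤ X ^ 4 := by
      rcases Nat.lt_or_ge x1 x3 with hlt' | hge'
      · have g2 : a ^ (x3 - x1) ≤ X ^ 2 := gap_odd H s1 s3 s2 hlt'.le hlt.le
          (not_parallel_yz H s3 s2 h23.symm)
        have e3 : a ^ x3 = a ^ x1 * a ^ (x3 - x1) := by rw [← pow_add]; congr 1; omega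
        rw [e3, ← e4]
        exact Nat.mul_le_mul k3 g2
      · exact (Nat.pow_le_pow_right (by omega) hge').trans (k3.trans hp24)
    refine not_parallel_yz H s1 s3 h13 (close_eq b c (a ^ x1) (a ^ x3) y1 z y3 z3 H.symm.three_le
      s1.z0 s3.z0 (by rw [add_comm]; exact s1.eq) (by rw [add_comm]; exact s3.eq) ?_ ?_)
    · calc 2 * z * a ^ x3 ≤ 2 * X * X ^ 4 := by gcongr; exact s1.zX
        _ = 2 * X ^ 5 := by ring
        _ ≤ c ^ z3 := by omega
    · calc 2 * z3 * a ^ x1 ≤ 2 * X * X ^ 2 := by gcongr; exact s3.zX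
        _ = 2 * X ^ 3 := by ring
        _ ≤ c ^ z := by omega
  · have g2 : a ^ (x2 - x1) ≤ X ^ 2 := gap_odd H s1 s2 s3 hx.le hge (not_parallel_yz H s2 s3 h23)
    have k4 : a ^ x2 ≤ X ^ 4 := by
      rw [e1, ← e4]
      exact Nat.mul_le_mul k3 g2
    have := s2.eq
    omega

theorem three_mul_pow_le (a x y : ℕ) (ha : 3 ≤ a) (h : x < y) : 3 * a ^ x ≤ a ^ y := by
  calc 3 * a ^ x ≤ a * a ^ x := Nat.mul_le_mul_right _ ha
    _ = a ^ (x + 1) := by rw [pow_succ, mul_comm]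
    _ ≤ a ^ y := Nat.pow_le_pow_right (by omega) h

/-- Two solutions share the smallest value of `z`. The third one must then exceed them in `x` or in
`y`, which up to exchanging `a` and `b` is the situation of `case_c_core`. -/
theorem case_c_mid {a b c X x1 y1 z x2 y2 x3 y3 z3 : ℕ} (H : Bases a b c)
    (s1 : IsSol a b c X x1 y1 z) (s2 : IsSol a b c X x2 y2 z) (s3 : IsSol a b c X x3 y3 z3)
    (h13 : (x1, y1) ≠ (x3, y3)) (h23 : (x2, y2) ≠ (x3, y3))
    (hX : 4 * X ^ 5 ≤ c) (hz : z ≤ z3) (hx : x1 < x2) : False := by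
  have q1 := s1.eq
  have q2 := s2.eq
  have q3 := s3.eq
  have hy : y2 < y1 := by
    by_contra hle
    push Not at hle
    have := Nat.pow_le_pow_right (n := b) (by have := H.hb1; omega) hle
    have := Nat.pow_lt_pow_right H.ha1 hx
    omega
  rcases Nat.lt_or_ge y3 y1 with hlt | hge
  · refine case_c_core H.symm s2.symm s1.symm s3.symm ?_ ?_ hX hy hx ?_
    · intro h; simp only [Prod.mk.injEq] at h; exact h23 (by rw [h.1, h.2])
    · intro h; simp only [Prod.mk.injEq] at h; exact h13 (by rw [h.1, h.2])
    · by_contra hcon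
      push Not at hcon
      have t1 := three_mul_pow_le a x3 x2 H.three_le hcon
      have t2 := three_mul_pow_le b y3 y1 H.symm.three_le hlt
      have t3 := Nat.pow_le_pow_right (n := c) (by have := H.hc1; omega) hz
      have t4 : 0 < c ^ z := pow_pos (by have := H.hc1; omega) _
      omega
  · exact case_c_core H s1 s2 s3 h13 h23 hX hx hy hge

/-- By the gap principle at `c`, the two smallest values of `z` coincide when `c` is the largest
base. -/
theorem case_c_sorted {a b c X x1 y1 z1 x2 y2 z2 x3 y3 z3 : ℕ} (H : Bases a b c)
    (s1 : IsSol a b c X x1 y1 z1) (s2 : IsSol a b c X x2 y2 z2) (s3 : IsSol a b c X x3 y3 z3)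
    (h12 : (x1, y1) ≠ (x2, y2)) (h13 : (x1, y1) ≠ (x3, y3)) (h23 : (x2, y2) ≠ (x3, y3))
    (hX : 4 * X ^ 5 ≤ c) (hM : 10 ^ 62 ≤ c) (hz12 : z1 ≤ z2) (hz23 : z2 ≤ z3) : False := by
  rcases hz12.lt_or_eq with hlt | rfl
  · have := gap_even_base H s1 s2 s3 hlt hz23 (not_parallel_xy H s2 s3 h23)
    have := eight_sq_lt X c hX hM
    omega
  · rcases lt_trichotomy x1 x2 with hx | rfl | hx
    · exact case_c_mid H s1 s2 s3 h13 h23 hX hz23 hx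
    · apply h12
      have e := s1.eq.trans s2.eq.symm
      rw [Nat.pow_right_injective H.hb1 (Nat.add_left_cancel e)]
    · exact case_c_mid H s2 s1 s3 h23 h13 hX hz23 hx

theorem case_c {a b c X x1 y1 z1 x2 y2 z2 x3 y3 z3 : ℕ} (H : Bases a b c)
    (s1 : IsSol a b c X x1 y1 z1) (s2 : IsSol a b c X x2 y2 z2) (s3 : IsSol a b c X x3 y3 z3)
    (h12 : (x1, y1) ≠ (x2, y2)) (h13 : (x1, y1) ≠ (x3, y3)) (h23 : (x2, y2) ≠ (x3, y3))
    (hX : 4 * X ^ 5 ≤ c) (hM : 10 ^ 62 ≤ c) : False := by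
  rcases le_total z1 z2 with h | h <;> rcases le_total z2 z3 with hyz | hyz <;>
    rcases le_total z1 z3 with h'' | h''
  · exact case_c_sorted H s1 s2 s3 h12 h13 h23 hX hM h hyz
  · exact case_c_sorted H s1 s2 s3 h12 h13 h23 hX hM h hyz
  · exact case_c_sorted H s1 s3 s2 h13 h12 h23.symm hX hM h'' hyz
  · exact case_c_sorted H s3 s1 s2 h13.symm h23.symm h12 hX hM h'' h
  · exact case_c_sorted H s2 s1 s3 h12.symm h23 h13 hX hM h h''
  · exact case_c_sorted H s2 s3 s1 h23 h12.symm h13.symm hX hM hyz h''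
  · exact case_c_sorted H s3 s2 s1 h23.symm h13.symm h12.symm hX hM hyz h
  · exact case_c_sorted H s3 s2 s1 h23.symm h13.symm h12.symm hX hM hyz h

/-! ### Three solutions, `a` the largest base -/

/-- Two solutions with the same `x` satisfy
`c ^ z1 * (c ^ (z2 - z1) - 1) = b ^ y1 * (b ^ (y2 - y1) - 1)`, which yields crossed bounds on `c ^ z1`
and `b ^ y1`. -/
theorem cross_of_eq_x {a b c X x y1 z1 y2 z2 : ℕ} (H : Bases a b c)
    (s1 : IsSol a b c X x y1 z1) (s2 : IsSol a b c X x y2 z2) (hy : y1 < y2) :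
    z1 < z2 ∧ c ^ z1 ≤ b ^ (y2 - y1) ∧ b ^ y1 ≤ c ^ (z2 - z1) := by
  have q1 := s1.eq
  have q2 := s2.eq
  have hz : z1 < z2 := by
    apply (Nat.pow_lt_pow_iff_right H.hc1).mp
    have := Nat.pow_lt_pow_right H.hb1 hy
    omega
  have e1 : c ^ z2 = c ^ z1 * c ^ (z2 - z1) := by rw [← pow_add]; congr 1; omega
  have e2 : b ^ y2 = b ^ y1 * b ^ (y2 - y1) := by rw [← pow_add]; congr 1; omega
  exact ⟨hz, cross_le (c ^ z1) (c ^ (z2 - z1)) (b ^ y1) (b ^ (y2 - y1)) (H.hbc.symm.pow _ _)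
    (Nat.one_lt_pow (by omega) H.hc1) (Nat.one_lt_pow (by omega) H.hb1) (by
      rw [← e1, ← e2]; omega)⟩

/-- Two solutions share the value `x`, and the third has the largest `y`: the gap principle at `b`
bounds `b ^ (y2 - y1)`, hence `c ^ z1`, which however exceeds `a`. -/
theorem case_a_top {a b c X x y1 z1 y2 z2 x3 y3 z3 : ℕ} (H : Bases a b c)
    (s1 : IsSol a b c X x y1 z1) (s2 : IsSol a b c X x y2 z2) (s3 : IsSol a b c X x3 y3 z3)
    (h23 : (x, y2) ≠ (x3, y3)) (hX : 4 * X ^ 5 ≤ a) (hM : 10 ^ 62 ≤ a)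
    (hy : y1 < y2) (hy3 : y2 ≤ y3) : False := by
  have g := gap_odd H.symm s1.symm s2.symm s3.symm hy.le hy3 (not_parallel_xz H s2 s3 h23)
  have k := (cross_of_eq_x H s1 s2 hy).2.1
  have := eight_sq_lt X a hX hM
  have : a ≤ a ^ x := Nat.le_self_pow s1.x0.ne' a
  have := s1.eq
  omega

/-- Two solutions share the value `x`, smaller than `x3`, and `y3 < y2`. If `z3 < z2`, the gap principle
at `c` shows that `c ^ z1` is not much smaller than `c ^ z3 > a ^ (x + 1)`, so that `a ^ x` is
negligible in the first two solutions; if `z2 ≤ z3`, then `b ^ y1` and `b ^ y3` are small, hence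
negligible in the first and third solution. Both contradict `close_eq`. -/
theorem case_a_mid {a b c X x y1 z1 y2 z2 x3 y3 z3 : ℕ} (H : Bases a b c)
    (s1 : IsSol a b c X x y1 z1) (s2 : IsSol a b c X x y2 z2) (s3 : IsSol a b c X x3 y3 z3)
    (h12 : (x, y1) ≠ (x, y2)) (h13 : (x, y1) ≠ (x3, y3)) (h23 : (x, y2) ≠ (x3, y3))
    (hX : 4 * X ^ 5 ≤ a) (hca : c ≤ a)
    (hy : y1 < y2) (hx3 : x < x3) (hy3 : y3 < y2) : False := by
  have ha1 := H.ha1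
  have hb1 := H.hb1
  have hc1 := H.hc1
  have q1 := s1.eq
  have q2 := s2.eq
  have q3 := s3.eq
  have hX0 : 0 < X := s1.x0.trans_le s1.xX
  have hax : a ≤ a ^ x := Nat.le_self_pow s1.x0.ne' a
  have hax3 : a ≤ a ^ x3 := Nat.le_self_pow s3.x0.ne' a
  have hp35 : X ^ 3 ≤ X ^ 5 := Nat.pow_le_pow_right hX0 (by norm_num)
  have hp24 : X ^ 2 ≤ X ^ 4 := Nat.pow_le_pow_right hX0 (by norm_num)
  have hbp : 0 < b ^ y1 := by positivity
  have hbp3 : 0 < b ^ y3 := by positivity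
  obtain ⟨hz, k1, k2⟩ := cross_of_eq_x H s1 s2 hy
  have h4 : 4 ∣ c ^ z1 := by
    have hz1 : 2 ≤ z1 := by
      by_contra hlt
      have : z1 = 1 := by have := s1.z0; omega
      rw [this, pow_one] at q1
      omega
    exact (by exact pow_dvd_pow_of_dvd H.hc 2 : 2 ^ 2 ∣ c ^ 2).trans (pow_dvd_pow c hz1)
  rcases Nat.lt_or_ge z3 z2 with hlt | hge
  · have hkey : a ^ x * a ≤ 2 * X ^ 2 * c ^ z1 := by
      have t1 : a ^ x * a ≤ c ^ z3 := by
        calc a ^ x * a = a ^ (x + 1) := (pow_succ _ _).symm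
          _ ≤ a ^ x3 := Nat.pow_le_pow_right (by omega) hx3
          _ ≤ c ^ z3 := by omega
      refine t1.trans ?_
      rcases Nat.lt_or_ge z1 z3 with hlt' | hge'
      · have g := gap_even H s1 s3 s2 h4 hlt'.le hlt.le (not_parallel_xy H s3 s2 h23.symm)
        have e : c ^ z3 = c ^ (z3 - z1) * c ^ z1 := by rw [← pow_add]; congr 1; omega
        rw [e]
        exact Nat.mul_le_mul_right _ g
      · have : 0 < X ^ 2 := by positivity
        exact (Nat.pow_le_pow_right (by omega) hge').trans (Nat.le_mul_of_pos_left _ (by omega))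
    have hsmall : 2 * X * a ^ x ≤ c ^ z1 := by
      refine le_of_mul_le_mul_left (a := 2 * X ^ 2) ?_ (by positivity)
      calc 2 * X ^ 2 * (2 * X * a ^ x) = a ^ x * (4 * X ^ 3) := by ring
        _ ≤ a ^ x * a := Nat.mul_le_mul_left _ (by omega)
        _ ≤ _ := hkey
    have hc12 : c ^ z1 ≤ c ^ z2 := Nat.pow_le_pow_right (by omega) hz.le
    refine not_parallel_yz H s1 s2 h12 (close_eq b c (a ^ x) (a ^ x) y1 z1 y2 z2 H.symm.three_le
      s1.z0 s2.z0 (by omega) (by omega) ?_ ?_)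
    · refine le_trans ?_ (hsmall.trans hc12)
      gcongr; exact s1.zX
    · refine le_trans ?_ hsmall
      gcongr; exact s2.zX
  · have g := gap_even H s1 s2 s3 h4 hz.le hge (not_parallel_xy H s2 s3 h23)
    have k3 : b ^ y1 ≤ 2 * X ^ 2 := k2.trans g
    have k4 : b ^ y3 ≤ 2 * X ^ 4 := by
      rcases Nat.lt_or_ge y1 y3 with hlt' | hge'
      · have g2 : b ^ (y3 - y1) ≤ X ^ 2 := gap_odd H.symm s1.symm s3.symm s2.symm hlt'.le hy3.le
          (not_parallel_xz H s3 s2 h23.symm)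
        have e3 : b ^ y3 = b ^ y1 * b ^ (y3 - y1) := by rw [← pow_add]; congr 1; omega
        calc b ^ y3 ≤ (2 * X ^ 2) * X ^ 2 := by rw [e3]; exact Nat.mul_le_mul k3 g2
          _ = _ := by ring
      · have := Nat.pow_le_pow_right (n := b) (by omega) hge'
        omega
    refine not_parallel_xz H s1 s3 h13 (close_eq a c (b ^ y1) (b ^ y3) x z1 x3 z3 H.three_le
      s1.z0 s3.z0 q1 q3 ?_ ?_)
    · calc 2 * z1 * b ^ y3 ≤ 2 * X * (2 * X ^ 4) := by gcongr; exact s1.zX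
        _ = 4 * X ^ 5 := by ring
        _ ≤ c ^ z3 := by omega
    · calc 2 * z3 * b ^ y1 ≤ 2 * X * (2 * X ^ 2) := by gcongr; exact s3.zX
        _ = 4 * X ^ 3 := by ring
        _ ≤ c ^ z1 := by omega

theorem case_a_pair {a b c X x y1 z1 y2 z2 x3 y3 z3 : ℕ} (H : Bases a b c)
    (s1 : IsSol a b c X x y1 z1) (s2 : IsSol a b c X x y2 z2) (s3 : IsSol a b c X x3 y3 z3)
    (h12 : (x, y1) ≠ (x, y2)) (h13 : (x, y1) ≠ (x3, y3)) (h23 : (x, y2) ≠ (x3, y3))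
    (hX : 4 * X ^ 5 ≤ a) (hM : 10 ^ 62 ≤ a) (hca : c ≤ a)
    (hy : y1 < y2) (hx3 : x ≤ x3) : False := by
  rcases Nat.lt_or_ge y3 y2 with hlt | hge
  · rcases hx3.lt_or_eq with hx | rfl
    · exact case_a_mid H s1 s2 s3 h12 h13 h23 hX hca hy hx hlt
    · rcases lt_trichotomy y1 y3 with h | rfl | h
      · exact case_a_top H s1 s3 s2 h23.symm hX hM h hlt.le
      · exact h13 rfl
      · exact case_a_top H s3 s1 s2 h12 hX hM h hy.le
  · exact case_a_top H s1 s2 s3 h23 hX hM hy hge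

/-- By the gap principle at `a`, the two smallest values of `x` coincide when `a` is the largest
base. -/
theorem case_a_sorted {a b c X x1 y1 z1 x2 y2 z2 x3 y3 z3 : ℕ} (H : Bases a b c)
    (s1 : IsSol a b c X x1 y1 z1) (s2 : IsSol a b c X x2 y2 z2) (s3 : IsSol a b c X x3 y3 z3)
    (h12 : (x1, y1) ≠ (x2, y2)) (h13 : (x1, y1) ≠ (x3, y3)) (h23 : (x2, y2) ≠ (x3, y3))
    (hX : 4 * X ^ 5 ≤ a) (hM : 10 ^ 62 ≤ a) (hca : c ≤ a) (hx12 : x1 ≤ x2) (hx23 : x2 ≤ x3) :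
    False := by
  rcases hx12.lt_or_eq with hlt | rfl
  · have := gap_odd H s1 s2 s3 hlt.le hx23 (not_parallel_yz H s2 s3 h23)
    have := eight_sq_lt X a hX hM
    have : a ≤ a ^ (x2 - x1) := Nat.le_self_pow (by omega) a
    omega
  · rcases lt_trichotomy y1 y2 with h | rfl | h
    · exact case_a_pair H s1 s2 s3 h12 h13 h23 hX hM hca h hx23
    · exact h12 rfl
    · exact case_a_pair H s2 s1 s3 h12.symm h23 h13 hX hM hca h hx23

theorem case_a {a b c X x1 y1 z1 x2 y2 z2 x3 y3 z3 : ℕ} (H : Bases a b c)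
    (s1 : IsSol a b c X x1 y1 z1) (s2 : IsSol a b c X x2 y2 z2) (s3 : IsSol a b c X x3 y3 z3)
    (h12 : (x1, y1) ≠ (x2, y2)) (h13 : (x1, y1) ≠ (x3, y3)) (h23 : (x2, y2) ≠ (x3, y3))
    (hX : 4 * X ^ 5 ≤ a) (hM : 10 ^ 62 ≤ a) (hca : c ≤ a) : False := by
  rcases le_total x1 x2 with h | h <;> rcases le_total x2 x3 with hyz | hyz <;>
    rcases le_total x1 x3 with h'' | h''
  · exact case_a_sorted H s1 s2 s3 h12 h13 h23 hX hM hca h hyz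
  · exact case_a_sorted H s1 s2 s3 h12 h13 h23 hX hM hca h hyz
  · exact case_a_sorted H s1 s3 s2 h13 h12 h23.symm hX hM hca h'' hyz
  · exact case_a_sorted H s3 s1 s2 h13.symm h23.symm h12 hX hM hca h'' h
  · exact case_a_sorted H s2 s1 s3 h12.symm h23 h13 hX hM hca h h''
  · exact case_a_sorted H s2 s3 s1 h23 h12.symm h13.symm hX hM hca hyz h''
  · exact case_a_sorted H s3 s2 s1 h23.symm h13.symm h12.symm hX hM hca hyz h
  · exact case_a_sorted H s3 s2 s1 h23.symm h13.symm h12.symm hX hM hca hyz h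

/-! ### Conclusion -/

/-- There are no three distinct solutions with exponents at most `X`, where `4 * X ^ 5` is at most the
largest base. As `a` and `b` play symmetric roles, that base may be taken to be `c` or `a`. -/
theorem no_three {a b c X x1 y1 z1 x2 y2 z2 x3 y3 z3 : ℕ} (H : Bases a b c)
    (s1 : IsSol a b c X x1 y1 z1) (s2 : IsSol a b c X x2 y2 z2) (s3 : IsSol a b c X x3 y3 z3)
    (h12 : (x1, y1) ≠ (x2, y2)) (h13 : (x1, y1) ≠ (x3, y3)) (h23 : (x2, y2) ≠ (x3, y3))
    (hX : 4 * X ^ 5 ≤ max a (max b c)) (hM : 10 ^ 62 ≤ max a (max b c)) : False := by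
  have hswap : ∀ {p q r s : ℕ}, (p, q) ≠ (r, s) → (q, p) ≠ (s, r) := by
    intro p q r s h h'
    simp only [Prod.mk.injEq] at h'
    exact h (by rw [h'.1, h'.2])
  rcases le_total a c with hac | hac <;> rcases le_total b c with hbc | hbc
  · rw [max_eq_right hbc, max_eq_right hac] at hX hM
    exact case_c H s1 s2 s3 h12 h13 h23 hX hM
  · rw [max_eq_left hbc, max_eq_right (hac.trans hbc)] at hX hM
    exact case_a H.symm s1.symm s2.symm s3.symm (hswap h12) (hswap h13) (hswap h23) hX hM hbc
  · rw [max_eq_right hbc, max_eq_left hac] at hX hM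
    exact case_a H s1 s2 s3 h12 h13 h23 hX hM hac
  · rw [max_eq_left hbc] at hX hM
    rcases le_total a b with hab | hab
    · rw [max_eq_right hab] at hX hM
      exact case_a H.symm s1.symm s2.symm s3.symm (hswap h12) (hswap h13) (hswap h23) hX hM hbc
    · rw [max_eq_left hab] at hX hM
      exact case_a H s1 s2 s3 h12 h13 h23 hX hM hac

theorem stmt_6 (a b c : ℕ) (ha : 0 < a) (hb : 0 < b) (hc : 0 < c)
    (hab : Nat.Coprime a b) (hac : Nat.Coprime a c) (hbc : Nat.Coprime b c)
    (hmin : 1 < min a (min b c)) (hceven : 2 ∣ c)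
    (hmax : 10 ^ 62 ≤ max a (max b c)) :
    {p : ℕ × ℕ × ℕ | 0 < p.1 ∧ 0 < p.2.1 ∧ 0 < p.2.2 ∧
      a ^ p.1 + b ^ p.2.1 = c ^ p.2.2}.encard ≤ 2 := by
  have ha1 : 1 < a := hmin.trans_le (min_le_left _ _)
  have hb1 : 1 < b := hmin.trans_le ((min_le_right _ _).trans (min_le_left _ _))
  have hc1 : 1 < c := hmin.trans_le ((min_le_right _ _).trans (min_le_right _ _))
  have hodd : ∀ d, Nat.Coprime d c → Odd d := by
    intro d hd
    rw [← Nat.not_even_iff_odd]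
    intro he
    exact Nat.not_coprime_of_dvd_of_dvd (by norm_num) he.two_dvd hceven hd
  have H : Bases a b c := ⟨ha1, hb1, hc1, hodd a hac, hodd b hbc, hceven, hab, hac, hbc⟩
  set M := max a (max b c) with hM
  have bound : ∀ x y z : ℕ, 0 < x → 0 < y → 0 < z → a ^ x + b ^ y = c ^ z →
      4 * (max x (max y z)) ^ 5 ≤ M := fun x y z hx hy hz h =>
    exponent_bound a b c x y z M ha1 hb1 hc1 H.ha H.hb hab hceven hx hy hz h (le_max_left _ _)
      ((le_max_left _ _).trans (le_max_right _ _)) ((le_max_right _ _).trans (le_max_right _ _)) hmax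
  by_contra hcon
  push Not at hcon
  obtain ⟨t, hts, ht⟩ := Set.exists_subset_encard_eq (Order.add_one_le_of_lt hcon)
  rw [two_add_one_eq_three, Set.encard_eq_three] at ht
  obtain ⟨p, q, r, hpq, hpr, hqr, rfl⟩ := ht
  have hp := hts (show p ∈ ({p, q, r} : Set (ℕ × ℕ × ℕ)) by simp)
  have hq := hts (show q ∈ ({p, q, r} : Set (ℕ × ℕ × ℕ)) by simp)
  have hr := hts (show r ∈ ({p, q, r} : Set (ℕ × ℕ × ℕ)) by simp)
  obtain ⟨x1, y1, z1⟩ := p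
  obtain ⟨x2, y2, z2⟩ := q
  obtain ⟨x3, y3, z3⟩ := r
  obtain ⟨hx1, hy1, hz1, e1⟩ := hp
  obtain ⟨hx2, hy2, hz2, e2⟩ := hq
  obtain ⟨hx3, hy3, hz3, e3⟩ := hr
  dsimp only at hx1 hy1 hz1 e1 hx2 hy2 hz2 e2 hx3 hy3 hz3 e3
  have b1 := bound _ _ _ hx1 hy1 hz1 e1
  have b2 := bound _ _ _ hx2 hy2 hz2 e2
  have b3 := bound _ _ _ hx3 hy3 hz3 e3
  set m1 := max x1 (max y1 z1) with hm1
  set m2 := max x2 (max y2 z2) with hm2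
  set m3 := max x3 (max y3 z3) with hm3
  set X := max m1 (max m2 m3) with hXdef
  have hX : 4 * X ^ 5 ≤ M := by
    rcases max_choice m1 (max m2 m3) with h | h
    · rw [hXdef, h]; exact b1
    · rcases max_choice m2 m3 with h' | h'
      · rw [hXdef, h, h']; exact b2
      · rw [hXdef, h, h']; exact b3
  -- two of the exponents determine the third
  have hne : ∀ x y z x' y' z' : ℕ, a ^ x + b ^ y = c ^ z → a ^ x' + b ^ y' = c ^ z' →
      (x, y, z) ≠ (x', y', z') → (x, y) ≠ (x', y') := by
    intro x y z x' y' z' h h' hn heq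
    simp only [Prod.mk.injEq] at heq
    obtain ⟨rfl, rfl⟩ := heq
    exact hn (by rw [Nat.pow_right_injective hc1 (h.symm.trans h')])
  exact no_three (X := X) H ⟨hx1, hy1, hz1, by omega, by omega, by omega, e1⟩
    ⟨hx2, hy2, hz2, by omega, by omega, by omega, e2⟩
    ⟨hx3, hy3, hz3, by omega, by omega, by omega, e3⟩
    (hne _ _ _ _ _ _ e1 e2 hpq) (hne _ _ _ _ _ _ e1 e3 hpr) (hne _ _ _ _ _ _ e2 e3 hqr) hX hmax
end

section
/- For every positive integer k with k ≥ 2, the equation 2^x + (2^k − 1)^y = (2^k + 1)^z has exactly two solutions in positive integers (x,y,z), namely (x,y,z) = (1,1,1) and (x,y,z) = (k+2, 2, 2). -/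
/-!
Write `b = 2 ^ k - 1` and `c = 2 ^ k + 1`. Reduction modulo `4` and modulo `2 ^ (k + 1)` (where
`b ^ 2 ≡ c ^ 2 ≡ 1`) leaves three cases.

* `y` odd. Then `x = 1` and `z` is odd, so with `y = 2 s + 1`, `z = 2 t + 1` the equation becomes
  `c C ^ 2 - b B ^ 2 = 2`, where `C = c ^ t` and `B = b ^ s`. Squaring
  `(C √c + B √b) / √2` gives the solution `(c C ^ 2 - 1, C B)` of the Pell equation
  `X ^ 2 - (a ^ 2 - 1) Y ^ 2 = 1` with `a = 2 ^ k`, and every prime factor of `Y = C B` divides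
  `a ^ 2 - 1 = b c`. By Størmer's theorem (`stormer`) this forces `Y = 1`, hence `s = t = 0`.
* `y` even, `z` odd. Then `x = k`. Reduction modulo `b` and modulo `c` shows `k ∣ z` and `k ∣ y`,
  so the equation reads `2 ^ k + B ^ k = C ^ k`, with `k`, `B`, `C` odd. The cofactor of `C - B` in
  `C ^ k - B ^ k` is a sum of `k` odd terms, so it is odd; being a divisor of `2 ^ k` it equals `1`,
  which is absurd.
* `y = 2 s`, `z = 2 t`. Then `c ^ t - b ^ s` and `c ^ t + b ^ s` are powers of two, whence
  `c ^ t - b ^ s = 2`, and the first case gives `s = t = 1`.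

Størmer's theorem rests on the expansion of the Pell numbers `y n` modulo `h ^ 2`, where `h` is
`a - 1` or (up to alternating signs) `-a - 1` (`lucas_expansion`). If a prime `p ∣ a ^ 2 - 1`
divides `y n`, then `p ∣ n`, so `y p ∣ y n`; all prime factors of `y p` then equal `p`, while
`p ^ 2 ∤ y p` for `p ≠ 3`, contradicting `y p > p`. For `p = 3` one uses
`y 3 = (2 a - 1) (2 a + 1)`, which is not a power of `3`.
-/

/-! ### Størmer's theorem for `X ^ 2 - (a ^ 2 - 1) Y ^ 2 = 1` -/

lemma lucas_modEq (u : ℕ → ℤ) (h : ℤ) (h0 : u 0 = 0) (h1 : u 1 = 1)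
    (hr : ∀ n, u (n + 2) = 2 * (1 + h) * u (n + 1) - u n) (n : ℕ) : h ∣ u n - n := by
  induction n using Nat.twoStepInduction with
  | zero => simp [h0]
  | one => simp [h1]
  | more n ih1 ih2 =>
    obtain ⟨r, hr1⟩ := ih1
    obtain ⟨s, hs⟩ := ih2
    refine ⟨2 * (1 + h) * s + 2 * (n + 1) - r, ?_⟩
    rw [hr]
    push_cast at *
    linear_combination 2 * (1 + h) * hs - hr1

/-- The Taylor expansion to first order in `h`: `u n = n + h * n * (n ^ 2 - 1) / 3 + O(h ^ 2)`. -/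
lemma lucas_expansion (u : ℕ → ℤ) (h : ℤ) (h0 : u 0 = 0) (h1 : u 1 = 1)
    (hr : ∀ n, u (n + 2) = 2 * (1 + h) * u (n + 1) - u n) (n : ℕ) :
    h ^ 2 ∣ 3 * (u n - n) - h * n * (n ^ 2 - 1) := by
  induction n using Nat.twoStepInduction with
  | zero => simp [h0]
  | one => simp [h1]
  | more n ih1 ih2 =>
    obtain ⟨r, hr1⟩ := ih1
    obtain ⟨s, hs⟩ := ih2
    refine ⟨2 * (1 + h) * s + 2 * n * (n + 1) * (n + 2) - r, ?_⟩
    rw [hr]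
    push_cast at *
    linear_combination 2 * (1 + h) * hs - hr1

/-- Modulo a prime `p ∣ a ^ 2 - 1` the Pell numbers `yn` agree, up to sign, with a Lucas sequence
whose parameter `h` is divisible by `p`. -/
lemma exists_lucas {a : ℕ} (a1 : 1 < a) {p : ℕ} (hp : p.Prime) (hpd : (p : ℤ) ∣ a ^ 2 - 1) :
    ∃ (u : ℕ → ℤ) (h : ℤ), (p : ℤ) ∣ h ∧ u 0 = 0 ∧ u 1 = 1 ∧
      (∀ n, u (n + 2) = 2 * (1 + h) * u (n + 1) - u n) ∧
      ∀ (m : ℤ) n, m ∣ (Pell.yn a1 n : ℤ) → m ∣ u n := by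
  have hrec : ∀ n, (Pell.yn a1 (n + 2) : ℤ) = 2 * a * Pell.yn a1 (n + 1) - Pell.yn a1 n := by
    intro n
    have := Pell.yn_succ_succ a1 n
    zify at this
    linarith
  have hf : (a : ℤ) ^ 2 - 1 = (a - 1) * (a + 1) := by ring
  rw [hf] at hpd
  rcases (Nat.prime_iff_prime_int.mp hp).dvd_or_dvd hpd with h | h
  · refine ⟨fun n => Pell.yn a1 n, a - 1, h, by simp, by simp, ?_, fun m n hm => hm⟩
    intro n
    simp only [hrec]
    ring
  · refine ⟨fun n => (-1) ^ (n + 1) * Pell.yn a1 n, -(a + 1), (dvd_neg).mpr h, by simp, by simp,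
      ?_, fun m n hm => Dvd.dvd.mul_left hm _⟩
    intro n
    simp only [hrec]
    ring

lemma dvd_index {a : ℕ} (a1 : 1 < a) {p : ℕ} (hp : p.Prime) (hpd : (p : ℤ) ∣ a ^ 2 - 1) {n : ℕ}
    (hn : p ∣ Pell.yn a1 n) : p ∣ n := by
  obtain ⟨u, h, hph, h0, h1, hr, hu⟩ := exists_lucas a1 hp hpd
  have h2 := hu p n (by exact_mod_cast hn)
  have h3 := hph.trans (lucas_modEq u h h0 h1 hr n)
  exact_mod_cast (dvd_sub_right h2).mp h3

lemma eq_three_of_sq_dvd {a : ℕ} (a1 : 1 < a) {p : ℕ} (hp : p.Prime)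
    (hpd : (p : ℤ) ∣ a ^ 2 - 1) (hn : p ^ 2 ∣ Pell.yn a1 p) : p = 3 := by
  obtain ⟨u, h, hph, h0, h1, hr, hu⟩ := exists_lucas a1 hp hpd
  obtain ⟨r, h2⟩ := hu ((p : ℤ) ^ 2) p (by exact_mod_cast hn)
  obtain ⟨s, h3⟩ := (pow_dvd_pow_of_dvd hph 2).trans (lucas_expansion u h h0 h1 hr p)
  obtain ⟨q, rfl⟩ := hph
  have hp0 : (p : ℤ) ≠ 0 := by exact_mod_cast hp.ne_zero
  have h4 : (3 : ℤ) = p * (3 * r - q * (p ^ 2 - 1) - s) := by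
    apply mul_left_cancel₀ hp0
    linear_combination 3 * h2 - h3
  have h5 : p ∣ 3 := by exact_mod_cast Dvd.intro _ h4.symm
  exact (Nat.prime_dvd_prime_iff_eq hp Nat.prime_three).mp h5

/-- **Størmer's theorem**: the fundamental solution is the only one in positive
integers of `X ^ 2 - (a ^ 2 - 1) Y ^ 2 = 1` for which all prime factors of `Y` divide
`a ^ 2 - 1`. -/
lemma stormer {a : ℕ} (a1 : 1 < a) (m : ℕ) (hm : Pell.yn a1 m ≠ 0)
    (h : ∀ p : ℕ, p.Prime → p ∣ Pell.yn a1 m → (p : ℤ) ∣ a ^ 2 - 1) : Pell.yn a1 m = 1 := by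
  by_contra hne
  obtain ⟨p, hp, hpm⟩ := Nat.exists_prime_and_dvd hne
  have hpd := h p hp hpm
  have hyd : Pell.yn a1 p ∣ Pell.yn a1 m :=
    (Pell.y_dvd_iff a1 p m).mpr (dvd_index a1 hp hpd hpm)
  have hy0 : Pell.yn a1 p ≠ 0 := fun h0 => hm (by simpa [h0] using hyd)
  have hpow := Nat.eq_prime_pow_of_unique_prime_dvd (p := p) hy0 (fun {q} hq hqd =>
    (Nat.prime_dvd_prime_iff_eq hq hp).mp (dvd_index a1 hq (h q hq (hqd.trans hyd)) hqd))
  generalize (Pell.yn a1 p).primeFactorsList.length = j at hpow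
  have y2 : Pell.yn a1 2 = 2 * a := by
    have := Pell.yn_succ_succ a1 0
    simpa using this
  -- strict monotonicity of `yn` together with `yn 2 = 2 a ≥ 4` gives `n < yn n` for `n ≥ 2`
  have hgt : ∀ n, 2 ≤ n → n < Pell.yn a1 n := by
    intro n hn
    induction n, hn using Nat.le_induction with
    | base => omega
    | succ n hn ih =>
      have := Pell.strictMono_y a1 (Nat.lt_succ_self n)
      simp only [Nat.succ_eq_add_one] at this
      omega
  have hlt := hgt p hp.two_le
  have hj : 2 ≤ j := by
    by_contra hj
    have : j ≤ 1 := by omega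
    have := Nat.pow_le_pow_right hp.pos this
    rw [pow_one] at this
    omega
  have hp3 : p = 3 := eq_three_of_sq_dvd a1 hp hpd (hpow ▸ pow_dvd_pow p hj)
  subst hp3
  have y3 : Pell.yn a1 3 = (2 * a - 1) * (2 * a + 1) := by
    have h3 := Pell.yn_succ_succ a1 1
    rw [y2, Pell.yn_one] at h3
    zify [show 1 ≤ 2 * a by omega] at h3 ⊢
    simp only [Nat.reduceAdd] at h3
    linear_combination h3
  rw [y3] at hpow
  obtain ⟨i, -, hi⟩ := (Nat.dvd_prime_pow Nat.prime_three).mp (Dvd.intro _ hpow)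
  obtain ⟨l, -, hl⟩ := (Nat.dvd_prime_pow Nat.prime_three).mp (Dvd.intro_left _ hpow)
  have hi0 : i ≠ 0 := by
    rintro rfl
    rw [pow_zero] at hi
    omega
  have hl0 : l ≠ 0 := by
    rintro rfl
    rw [pow_zero] at hl
    omega
  have := dvd_pow_self 3 hi0
  have := dvd_pow_self 3 hl0
  omega

/-! ### The case of odd `y` and `z` -/

lemma case_one {b c : ℕ} {k : ℕ} (hk : 2 ≤ k) (hb : b + 1 = 2 ^ k) (hc : c = 2 ^ k + 1) {s t : ℕ}
    (h : 2 + b ^ (2 * s + 1) = c ^ (2 * t + 1)) : s = 0 ∧ t = 0 := by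
  have h4 : 2 ^ 2 ≤ 2 ^ k := Nat.pow_le_pow_right (by norm_num) hk
  have a1 : 1 < 2 ^ k := by omega
  generalize 2 ^ k = a at *
  obtain rfl : b = a - 1 := by omega
  have hbpos : 0 < (a - 1) ^ s := pow_pos (by omega) _
  have hcpos : 0 < c ^ t := pow_pos (by omega) _
  have hcpos' : 0 < c ^ (2 * t + 1) := pow_pos (by omega) _
  have hpell : (c ^ (2 * t + 1) - 1) * (c ^ (2 * t + 1) - 1)
      - (a * a - 1) * (c ^ t * (a - 1) ^ s) * (c ^ t * (a - 1) ^ s) = 1 := by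
    have hD : a * a - 1 = (a - 1) * c := by
      subst hc
      have : 1 ≤ a * a := by nlinarith
      zify [this, a1.le]
      ring
    have e1 : (a * a - 1) * (c ^ t * (a - 1) ^ s) * (c ^ t * (a - 1) ^ s)
        = (a - 1) ^ (2 * s + 1) * c ^ (2 * t + 1) := by
      rw [hD]
      ring
    rw [e1, ← h]
    generalize (a - 1) ^ (2 * s + 1) = w
    have : 2 + w - 1 = w + 1 := by omega
    rw [this]
    have : (w + 1) * (w + 1) = w * (2 + w) + 1 := by ring
    omega
  obtain ⟨m, -, hm⟩ := Pell.eq_pell a1 hpell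
  have hone : Pell.yn a1 m = 1 := by
    apply stormer a1 m
    · rw [← hm]
      positivity
    · intro p hp hpm
      rw [← hm] at hpm
      have e : (a : ℤ) ^ 2 - 1 = c * ((a - 1 : ℕ) : ℤ) := by
        subst hc
        zify [a1.le]
        ring
      rw [e]
      rcases (Nat.Prime.dvd_mul hp).mp hpm with h | h
      · exact Dvd.dvd.mul_right (by exact_mod_cast hp.dvd_of_dvd_pow h) _
      · exact Dvd.dvd.mul_left (by exact_mod_cast hp.dvd_of_dvd_pow h) _
  rw [hone] at hm
  obtain ⟨h1, h2⟩ := mul_eq_one.mp hm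
  constructor
  · exact (Nat.pow_eq_one.mp h2).resolve_left (by omega)
  · exact (Nat.pow_eq_one.mp h1).resolve_left (by omega)

/-! ### The case of even `y` and odd `z` -/

lemma dvd_of_pred_dvd {k z : ℕ} (hk : 2 ≤ k) (h : (2 : ℤ) ^ k - 1 ∣ 2 ^ z - 1) : k ∣ z := by
  have hdm := Nat.div_add_mod z k
  have hlt := Nat.mod_lt z (show 0 < k by omega)
  set q := z / k
  set r := z % k with hr
  have h1 : (2 : ℤ) ^ k - 1 ∣ (2 ^ k) ^ q - 1 := by
    simpa using sub_dvd_pow_sub_pow ((2 : ℤ) ^ k) 1 q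
  have h2 : (2 : ℤ) ^ k - 1 ∣ 2 ^ r - 1 := by
    have e : (2 : ℤ) ^ z - 1 = 2 ^ r * ((2 ^ k) ^ q - 1) + (2 ^ r - 1) := by
      rw [← hdm, pow_add, pow_mul]
      ring
    rw [e] at h
    exact (dvd_add_right (h1.mul_left _)).mp h
  have h3 : (2 : ℤ) ^ r < 2 ^ k := pow_lt_pow_right₀ (by norm_num) hlt
  have h4 : (1 : ℤ) ≤ 2 ^ r := one_le_pow₀ (by norm_num)
  have h5 := Int.eq_zero_of_dvd_of_nonneg_of_lt (by linarith) (by linarith) h2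
  have h6 : (2 : ℕ) ^ r = 1 := by
    zify
    linarith
  have h7 : r = 0 := (Nat.pow_eq_one.mp h6).resolve_left (by norm_num)
  exact Nat.dvd_of_mod_eq_zero h7

lemma dvd_of_succ_dvd {k y : ℕ} (hk : 2 ≤ k) (h : (2 : ℤ) ^ k + 1 ∣ 2 ^ y - 1) : k ∣ y := by
  have hdm := Nat.div_add_mod y k
  have hlt := Nat.mod_lt y (show 0 < k by omega)
  set q := y / k
  set r := y % k with hr
  have h1 : (2 : ℤ) ^ k + 1 ∣ (2 ^ k) ^ q - (-1) ^ q := by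
    simpa using sub_dvd_pow_sub_pow ((2 : ℤ) ^ k) (-1) q
  have h2 : (2 : ℤ) ^ k + 1 ∣ 2 ^ r * (-1) ^ q - 1 := by
    have e : (2 : ℤ) ^ y - 1 = 2 ^ r * ((2 ^ k) ^ q - (-1) ^ q) + (2 ^ r * (-1) ^ q - 1) := by
      rw [← hdm, pow_add, pow_mul]
      ring
    rw [e] at h
    exact (dvd_add_right (h1.mul_left _)).mp h
  have h3 : (2 : ℤ) ^ r < 2 ^ k := pow_lt_pow_right₀ (by norm_num) hlt
  have h4 : (1 : ℤ) ≤ 2 ^ r := one_le_pow₀ (by norm_num)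
  rcases neg_one_pow_eq_or ℤ q with hq | hq
  · rw [hq] at h2
    have h5 := Int.eq_zero_of_dvd_of_nonneg_of_lt (by linarith) (by linarith) h2
    have h6 : (2 : ℕ) ^ r = 1 := by
      zify
      linarith
    have h7 : r = 0 := (Nat.pow_eq_one.mp h6).resolve_left (by norm_num)
    exact Nat.dvd_of_mod_eq_zero h7
  · rw [hq, ← dvd_neg] at h2
    have h5 := Int.eq_zero_of_dvd_of_nonneg_of_lt (by linarith) (by linarith) h2
    linarith

/-- A power of two `2 ^ k` with `k ≥ 3` odd is not a difference of two `k`-th powers of odd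
positive integers. -/
lemma no_fermat {k A B : ℕ} (hk : 2 ≤ k) (hko : Odd k) (hA : Odd A) (hB : Odd B)
    (h : 2 ^ k + B ^ k = A ^ k) : False := by
  have hg : (∑ i ∈ Finset.range k, (A : ℤ) ^ i * B ^ (k - 1 - i)) * ((A : ℤ) - B) = 2 ^ k := by
    rw [geom_sum₂_mul]
    zify at h
    linarith
  have e : (∑ i ∈ Finset.range k, (A : ℤ) ^ i * B ^ (k - 1 - i))
      = ((∑ i ∈ Finset.range k, A ^ i * B ^ (k - 1 - i) : ℕ) : ℤ) := by push_cast; rfl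
  rw [e] at hg
  set S := ∑ i ∈ Finset.range k, A ^ i * B ^ (k - 1 - i) with hS
  have hodd : Odd S := by
    rw [hS, Finset.odd_sum_iff_odd_card_odd, Finset.filter_true_of_mem]
    · simpa using hko
    · intro i _
      exact (hA.pow).mul hB.pow
  have hSd : S ∣ 2 ^ k := by exact_mod_cast Dvd.intro _ hg
  have hS1 : S = 1 := by
    obtain ⟨j, -, hj⟩ := (Nat.dvd_prime_pow Nat.prime_two).mp hSd
    rcases Nat.eq_zero_or_pos j with rfl | hj0
    · simpa using hj
    · rw [hj] at hodd
      exact absurd (Nat.even_pow.mpr ⟨even_two, by omega⟩) (Nat.not_even_iff_odd.mpr hodd)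
  have hcard : k ≤ S := by
    calc k = ∑ i ∈ Finset.range k, 1 := by simp
      _ ≤ S := Finset.sum_le_sum fun i _ =>
          Nat.succ_le_of_lt (mul_pos (pow_pos hA.pos _) (pow_pos hB.pos _))
  omega

lemma case_mixed {b c : ℕ} {k : ℕ} (hk : 2 ≤ k) (hb : b + 1 = 2 ^ k) (hc : c = 2 ^ k + 1)
    {y z : ℕ} (hy : Even y) (hz : Odd z) (h : 2 ^ k + b ^ y = c ^ z) (hy0 : 0 < y) : False := by
  have hbz : (b : ℤ) = 2 ^ k - 1 := by
    have : ((b + 1 : ℕ) : ℤ) = 2 ^ k := by rw [hb]; push_cast; rfl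
    push_cast at this
    linarith
  have hcz : (c : ℤ) = 2 ^ k + 1 := by rw [hc]; push_cast; rfl
  have hZ : (2 : ℤ) ^ k + b ^ y = c ^ z := by exact_mod_cast h
  have hkz : k ∣ z := by
    apply dvd_of_pred_dvd hk
    rw [← hbz]
    -- modulo `b` the equation reads `1 ≡ 2 ^ z`
    have d1 : (b : ℤ) ∣ c ^ z - 2 ^ z := by
      have := sub_dvd_pow_sub_pow (c : ℤ) 2 z
      rwa [show (c : ℤ) - 2 = b by linarith] at this
    have d2 : (b : ℤ) ∣ b ^ y := dvd_pow_self _ hy0.ne'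
    have e : (2 : ℤ) ^ z - 1 = b + b ^ y - (c ^ z - 2 ^ z) := by linarith
    rw [e]
    exact dvd_sub (dvd_add dvd_rfl d2) d1
  have hky : k ∣ y := by
    apply dvd_of_succ_dvd hk
    rw [← hcz]
    -- modulo `c` the equation reads `-1 + (-2) ^ y ≡ 0`
    have d1 : (c : ℤ) ∣ b ^ y - 2 ^ y := by
      have := sub_dvd_pow_sub_pow (b : ℤ) (-2) y
      rwa [hy.neg_pow, show (b : ℤ) - -2 = c by linarith] at this
    have d2 : (c : ℤ) ∣ c ^ z := dvd_pow_self _ hz.pos.ne'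
    have e : (2 : ℤ) ^ y - 1 = c ^ z - c - (b ^ y - 2 ^ y) := by linarith
    rw [e]
    exact dvd_sub (dvd_sub d2 dvd_rfl) d1
  have hko : Odd k := Odd.of_dvd_nat hz hkz
  obtain ⟨l, rfl⟩ := hkz
  obtain ⟨n, rfl⟩ := hky
  have hev : Even (2 ^ k) := Nat.even_pow.mpr ⟨even_two, by omega⟩
  have hbo : Odd b := by
    rw [← hb] at hev
    exact Nat.not_even_iff_odd.mp fun hbe => by
      obtain ⟨u, hu⟩ := hev
      obtain ⟨v, hv⟩ := hbe
      omega
  have hco : Odd c := hc ▸ hev.add_one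
  refine no_fermat hk hko (hco.pow (n := l)) (hbo.pow (n := n)) ?_
  rw [← pow_mul, ← pow_mul, mul_comm l, mul_comm n]
  exact h

/-! ### Reduction to the three cases -/

theorem stmt_7 (k : ℕ) (hk : 2 ≤ k) (x y z : ℕ) (hx : 0 < x) (hy : 0 < y) (hz : 0 < z) :
    2 ^ x + (2 ^ k - 1) ^ y = (2 ^ k + 1) ^ z ↔
      (x, y, z) = (1, 1, 1) ∨ (x, y, z) = (k + 2, 2, 2) := by
  obtain ⟨b, hb⟩ : ∃ b, b + 1 = 2 ^ k := ⟨2 ^ k - 1, Nat.sub_add_cancel Nat.one_le_two_pow⟩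
  obtain ⟨c, hc⟩ : ∃ c, c = 2 ^ k + 1 := ⟨_, rfl⟩
  have hb' : 2 ^ k - 1 = b := by omega
  rw [hb', ← hc]
  have hbc : c = b + 2 := by omega
  have hck : (c : ℤ) = 2 ^ k + 1 := by exact_mod_cast hc
  have hbk : (b : ℤ) = 2 ^ k - 1 := by
    have : (b : ℤ) + 1 = 2 ^ k := by exact_mod_cast hb
    linarith
  have h4k : 4 ∣ 2 ^ k := pow_dvd_pow 2 hk
  constructor
  swap
  · rintro (h | h)
    · simp only [Prod.mk.injEq] at h
      obtain ⟨rfl, rfl, rfl⟩ := h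
      rw [pow_one, pow_one, pow_one]
      omega
    · simp only [Prod.mk.injEq] at h
      obtain ⟨rfl, rfl, rfl⟩ := h
      zify
      rw [hck, hbk]
      ring
  intro h
  have hZ : (2 : ℤ) ^ x + b ^ y = c ^ z := by exact_mod_cast h
  -- `b ^ 2 ≡ c ^ 2 ≡ 1` modulo `2 ^ (k + 1)`
  have hb2 : ∀ s, (2 : ℤ) ^ (k + 1) ∣ b ^ (2 * s) - 1 := by
    intro s
    have h1 := sub_dvd_pow_sub_pow ((b : ℤ) ^ 2) 1 s
    rw [one_pow, ← pow_mul] at h1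
    refine dvd_trans ?_ h1
    obtain ⟨w, rfl⟩ : ∃ w, k = w + 1 := ⟨k - 1, by omega⟩
    exact ⟨2 ^ w - 1, by rw [hbk]; ring⟩
  have hc2 : ∀ s, (2 : ℤ) ^ (k + 1) ∣ c ^ (2 * s) - 1 := by
    intro s
    have h1 := sub_dvd_pow_sub_pow ((c : ℤ) ^ 2) 1 s
    rw [one_pow, ← pow_mul] at h1
    refine dvd_trans ?_ h1
    obtain ⟨w, rfl⟩ : ∃ w, k = w + 1 := ⟨k - 1, by omega⟩
    exact ⟨2 ^ w + 1, by rw [hck]; ring⟩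
  have hnd : ¬ (2 : ℤ) ^ (k + 1) ∣ 2 ^ k := by
    rw [pow_dvd_pow_iff (by norm_num) (by decide)]
    omega
  have h4k1 : (4 : ℤ) ∣ 2 ^ (k + 1) := pow_dvd_pow 2 (show 2 ≤ k + 1 by omega)
  have h4kz : (4 : ℤ) ∣ 2 ^ k := pow_dvd_pow 2 hk
  have h4b : ∀ s, (4 : ℤ) ∣ b ^ (2 * s) - 1 := fun s => h4k1.trans (hb2 s)
  have h4c : (4 : ℤ) ∣ c ^ z - 1 := by
    have h1 := sub_dvd_pow_sub_pow (c : ℤ) 1 z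
    rw [one_pow] at h1
    refine dvd_trans ?_ h1
    rw [hck]
    simpa using h4kz
  rcases Nat.even_or_odd' y with ⟨s, rfl | rfl⟩
  · rcases Nat.even_or_odd' z with ⟨t, rfl | rfl⟩
    · right
      have hlt : b ^ s < c ^ t := by
        by_contra hle
        have h1 : c ^ t * c ^ t ≤ b ^ s * b ^ s := Nat.mul_self_le_mul_self (not_lt.mp hle)
        have h2 : 0 < 2 ^ x := by positivity
        have e1 : b ^ (2 * s) = b ^ s * b ^ s := by ring
        have e2 : c ^ (2 * t) = c ^ t * c ^ t := by ring
        omega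
      have hprod : (c ^ t - b ^ s) * (c ^ t + b ^ s) = 2 ^ x := by
        have h1 : (c ^ t - b ^ s) * (c ^ t + b ^ s) + b ^ (2 * s) = c ^ (2 * t) := by
          zify [hlt.le]
          ring
        omega
      have hco : Odd (c ^ t) := by
        apply Odd.pow
        rw [hc, Nat.odd_iff]
        omega
      have hbo : Odd (b ^ s) := by
        apply Odd.pow
        rw [Nat.odd_iff]
        omega
      obtain ⟨i, -, hi⟩ := (Nat.dvd_prime_pow Nat.prime_two).mp (Dvd.intro _ hprod)
      obtain ⟨j, -, hj⟩ := (Nat.dvd_prime_pow Nat.prime_two).mp (Dvd.intro_left _ hprod)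
      have hbp : 0 < b ^ s := hbo.pos
      have hij : i < j := (Nat.pow_lt_pow_iff_right (show 1 < 2 by norm_num)).mp (by omega)
      rw [Nat.odd_iff] at hco hbo
      -- `2 * c ^ t = 2 ^ i + 2 ^ j` with `c ^ t` odd forces `i = 1`
      have hi1 : i = 1 := by
        rcases Nat.lt_or_ge i 2 with hi2 | hi2
        · interval_cases i
          · omega
          · rfl
        · have h1 : 2 ^ 2 ∣ 2 ^ i := pow_dvd_pow 2 hi2
          have h2 : 2 ^ 2 ∣ 2 ^ j := pow_dvd_pow 2 (by omega)
          omega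
      subst hi1
      have heq : 2 + b ^ s = c ^ t := by omega
      have hZ2 : (2 : ℤ) + b ^ s = c ^ t := by exact_mod_cast heq
      have hs0 : 0 < s := by omega
      rcases Nat.even_or_odd' s with ⟨s, rfl | rfl⟩
      · exfalso
        have h1 := h4b s
        have h2 : (4 : ℤ) ∣ c ^ t - 1 := by
          have h1 := sub_dvd_pow_sub_pow (c : ℤ) 1 t
          rw [one_pow] at h1
          refine dvd_trans ?_ h1
          rw [hck]
          simpa using h4kz
        omega
      · rcases Nat.even_or_odd' t with ⟨t, rfl | rfl⟩
        · exfalso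
          apply hnd
          have e : (2 : ℤ) ^ k = (c ^ (2 * t) - 1) - b * (b ^ (2 * s) - 1) := by
            rw [pow_succ] at hZ2
            linear_combination hZ2 - hbk
          rw [e]
          exact dvd_sub (hc2 t) ((hb2 s).mul_left _)
        · obtain ⟨rfl, rfl⟩ := case_one hk hb hc heq
          have : 2 ^ x = 2 ^ (k + 2) := by
            rw [← hprod, hc]
            simp only [mul_zero, zero_add, pow_one]
            have e1 : 2 ^ k + 1 - b = 2 := by omega
            have e2 : 2 ^ k + 1 + b = 2 ^ k * 2 := by omega
            rw [e1, e2]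
            ring
          have := Nat.pow_right_injective (le_refl 2) this
          simp [this]
    · exfalso
      -- modulo `2 ^ (k + 1)` the equation reads `2 ^ x ≡ 2 ^ k`
      have hd : (2 : ℤ) ^ (k + 1) ∣ 2 ^ x - 2 ^ k := by
        have e : (2 : ℤ) ^ x - 2 ^ k = c * (c ^ (2 * t) - 1) - (b ^ (2 * s) - 1) := by
          rw [pow_succ] at hZ
          linear_combination hZ + hck
        rw [e]
        exact dvd_sub ((hc2 t).mul_left _) (hb2 s)
      have hxk : x = k := by
        rcases lt_trichotomy x k with hlt | rfl | hgt
        · exfalso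
          have h1 : (2 : ℤ) ^ (x + 1) ∣ 2 ^ x - 2 ^ k := (pow_dvd_pow 2 (by omega)).trans hd
          have h2 : (2 : ℤ) ^ (x + 1) ∣ 2 ^ k := pow_dvd_pow 2 (by omega)
          have h3 : (2 : ℤ) ^ (x + 1) ∣ 2 ^ x := (dvd_sub_left h2).mp h1
          rw [pow_dvd_pow_iff (by norm_num) (by decide)] at h3
          omega
        · rfl
        · exact absurd ((dvd_sub_right (pow_dvd_pow 2 hgt)).mp hd) hnd
      subst hxk
      exact case_mixed hk hb hc (even_two_mul s) (odd_two_mul_add_one t) h hy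
  · left
    have hx1 : x = 1 := by
      by_contra hne
      have h1 : (4 : ℤ) ∣ 2 ^ x := pow_dvd_pow 2 (show 2 ≤ x by omega)
      have h2 : (4 : ℤ) ∣ b * (b ^ (2 * s) - 1) := (h4b s).mul_left _
      have e : (2 : ℤ) = 2 ^ x + 2 ^ k + b * (b ^ (2 * s) - 1) - (c ^ z - 1) := by
        rw [pow_succ] at hZ
        linear_combination hbk - hZ
      omega
    subst hx1
    rcases Nat.even_or_odd' z with ⟨t, rfl | rfl⟩
    · exfalso
      apply hnd
      have e : (2 : ℤ) ^ k = (c ^ (2 * t) - 1) - b * (b ^ (2 * s) - 1) := by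
        rw [pow_succ (b : ℤ)] at hZ
        linear_combination hZ - hbk
      rw [e]
      exact dvd_sub (hc2 t) ((hb2 s).mul_left _)
    · rw [pow_one] at h
      obtain ⟨rfl, rfl⟩ := case_one hk hb hc h
      rfl
end

section
/- (Dem'janenko) For every positive integer g, the only solution in positive integers (x,y,z) of the equation (2g+1)^x + (2g(g+1))^y = (2g^2 + 2g + 1)^z is (x,y,z) = (2,2,2). -/
/-!
Write `n = g`, `a = 2n + 1`, `b = 2n(n+1)`, `c = b + 1`; then `a ^ 2 = 2b + 1` and `4 ∣ b`.
Reducing modulo `2(n+1)` shows that `x = 2X`, so the equation becomes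
`(2b + 1) ^ X + b ^ y = (b + 1) ^ z`; modulo `c`, the exponents `X` and `y` have opposite parity.

* `y = 1` (`no_y_one`). Then `X` is even, and modulo `b ^ 2` we get `z ≡ 2X + 1 [mod b]`, hence
  `z ≡ 1 [mod 4]`. With `A = (2b + 1) ^ (X / 2)` we have `A ^ 2 + b = c ^ z` and `A ≡ ±1 [mod c]`.
  In `ℤ√(-b)` put `α = 1 + √(-b)`, of norm `c`. The congruence for `A` forces
  `±A + √(-b) = ±α ^ z`, so `α ^ z` has imaginary part `±1`, which a 2-adic computation of
  `α ^ (z - 1)` excludes for `z > 1` (`no_sq_add`).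

* `y ≥ 2` (`eq_two`). Modulo `b ^ 2` we get `2X ≡ z [mod b]`, so `z = 2Z` and
  `(c ^ Z - a ^ X) (c ^ Z + a ^ X) = b ^ y`. As `a ≡ 1 [mod 2n]`, `a ≡ -1 [mod 2(n+1)]` and
  `c ≡ 1 [mod b]`, the two factors are determined: `X` must be odd, and the halves of
  `c ^ Z + a ^ X` and `c ^ Z - a ^ X` are `(n+1) ^ y` and `2 ^ (y-2) n ^ y` for `n` even,
  `2 ^ (y-2) (n+1) ^ y` and `n ^ y` for `n` odd. For `n` even, comparing sizes gives `y = 2`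
  (`exponent_eq_two_of_even`). For `n` odd and `y = 2Y > 2`, the number `a ^ X` is the product of
  the coprime numbers `2 ^ (Y-1) (n+1) ^ Y ± n ^ Y`, so these are `q ^ X` and `p ^ X` with
  `p q = a`; their ratio is less than `3`, which forces `X < p`, while a congruence modulo
  `(n+1) ^ 2` forces `X ≥ Y + (n+1) / 2 > p` (`no_large_exponent_of_odd`).
  Finally `y = 2` yields `a ^ X = a` and `c ^ Z = c`.
-/

/-! ### Linear congruences for powers -/

theorem sq_dvd_one_add_pow (t : ℤ) (k : ℕ) : t ^ 2 ∣ (1 + t) ^ k - (1 + k * t) := by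
  induction k with
  | zero => simp
  | succ k ih =>
    obtain ⟨s, hs⟩ := ih
    refine ⟨s * (1 + t) + k, ?_⟩
    rw [pow_succ, eq_add_of_sub_eq hs]
    push_cast
    ring

theorem dvd_one_add_pow (t : ℤ) (k : ℕ) : t ∣ (1 + t) ^ k - 1 := by
  have h := sub_dvd_pow_sub_pow (1 + t) 1 k
  simpa using h

/-! ### The case `y = 1`: powers of `1 + √(-b)` -/

theorem alpha_pow (b : ℤ) (m : ℕ) :
    ∃ r i : ℤ, (⟨1, 1⟩ : ℤ√(-b)) ^ m = ⟨1 + b * r, m + b * i⟩ := by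
  induction m with
  | zero => exact ⟨0, 0, by ext <;> simp⟩
  | succ m ih =>
    obtain ⟨r, i, h⟩ := ih
    refine ⟨r - (m + b * i), i + r, ?_⟩
    rw [pow_succ, h]
    ext <;> simp <;> ring

/-- If `N = 2 ^ k * m` with `m` odd, then `α ^ N` (for `α = 1 + √(-b)`) has imaginary part of
2-adic valuation exactly `k`, while its real part is `1` modulo `2 ^ (k + 1)`. Squaring preserves
this shape. -/
theorem alpha_pow_two_pow_mul (b : ℤ) (hb : 4 ∣ b) (m : ℕ) (hm : Odd m) (k : ℕ) :
    ∃ r i : ℤ, (⟨1, 1⟩ : ℤ√(-b)) ^ (2 ^ k * m) =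
      ⟨1 + 2 ^ (k + 1) * r, 2 ^ k * (2 * i + 1)⟩ := by
  obtain ⟨d, rfl⟩ := hb
  induction k with
  | zero =>
    obtain ⟨r, i, h⟩ := alpha_pow (4 * d) m
    obtain ⟨l, rfl⟩ := hm
    refine ⟨2 * d * r, l + 2 * d * i, ?_⟩
    rw [pow_zero, one_mul, h]
    ext <;> simp <;> ring
  | succ k ih =>
    obtain ⟨r, i, h⟩ := ih
    refine ⟨r + 2 ^ k * r ^ 2 - d * 2 ^ k * (2 * i + 1) ^ 2, i + 2 ^ k * r * (2 * i + 1), ?_⟩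
    rw [show 2 ^ (k + 1) * m = 2 ^ k * m + 2 ^ k * m by ring, pow_add, h]
    ext <;> simp <;> ring

/-- A norm equation `A ^ 2 + b = (1 + b) ^ z` with `A ≡ 1` modulo `1 + b = α * star α`: since
`α` and its conjugate are coprime and `A + √(-b) ≡ α` modulo `1 + b`, only powers of `α`, and no
conjugate factor, can divide `A + √(-b)`. -/
theorem alpha_pow_dvd (b A : ℤ) (hb : 4 ∣ b) (z : ℕ) (h : A ^ 2 + b = (1 + b) ^ z)
    (hA : 1 + b ∣ A - 1) : (⟨1, 1⟩ : ℤ√(-b)) ^ z ∣ ⟨A, 1⟩ := by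
  obtain ⟨d, rfl⟩ := hb
  obtain ⟨s, hs⟩ := hA
  have hcop : IsCoprime (⟨1, 1⟩ : ℤ√(-(4 * d))) ⟨1, -1⟩ := by
    -- the sum is `2` and the product is the odd number `1 + 4 d`
    refine ⟨⟨1, -1⟩ - (2 * d : ℤ), (-(2 * d) : ℤ), ?_⟩
    ext <;> simp <;> ring
  have hcop' : IsCoprime (⟨1, 1⟩ : ℤ√(-(4 * d))) ⟨A, -1⟩ := by
    have e : (⟨A, -1⟩ : ℤ√(-(4 * d))) = ⟨1, -1⟩ + ⟨1, 1⟩ * (⟨1, -1⟩ * (s : ℤ)) := by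
      obtain rfl : A = 1 + (1 + 4 * d) * s := by linarith
      ext <;> simp <;> ring
    rw [e]
    exact hcop.add_mul_left_right _
  refine (hcop'.pow_left (m := z)).dvd_of_dvd_mul_right (z := ⟨A, -1⟩) ⟨⟨1, -1⟩ ^ z, ?_⟩
  rw [← mul_pow]
  have e : (⟨1, 1⟩ : ℤ√(-(4 * d))) * ⟨1, -1⟩ = ((1 + 4 * d : ℤ) : ℤ√(-(4 * d))) := by
    ext <;> simp
  rw [e, ← Int.cast_pow, ← h]
  ext <;> simp [pow_two]

/-- The quotient of `A + √(-b)` by `α ^ (N + 1)` has norm `1`, hence is `±1`. If `α ^ N = R + I √(-b)`,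
the imaginary part of `α ^ (N + 1)` is `R + I`, so `R + I = ±1`. Here `R ≡ 1` modulo `2 * 2 ^ k` and
`I` has valuation exactly `k = v₂(N) ≥ 2`, so `R + I ≠ 1`; and `R + I ≡ 1` modulo `4`, so
`R + I ≠ -1`. -/
theorem no_sq_add (b A : ℤ) (hb : 4 ∣ b) (hb0 : 0 < b) (N : ℕ) (hN : N ≠ 0) (hN4 : 4 ∣ N)
    (h : A ^ 2 + b = (1 + b) ^ (N + 1)) (hA : 1 + b ∣ A - 1) : False := by
  obtain ⟨δ, hδ⟩ := alpha_pow_dvd b A hb (N + 1) h hA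
  have hnorm : δ.norm = 1 := by
    have h1 := congrArg Zsqrtd.norm hδ
    have h2 : (⟨A, 1⟩ : ℤ√(-b)).norm = (1 + b) ^ (N + 1) := by
      rw [← h]; simp [Zsqrtd.norm_def]; ring
    have h3 : ((⟨1, 1⟩ : ℤ√(-b)) ^ (N + 1)).norm = (1 + b) ^ (N + 1) := by
      rw [show ((⟨1, 1⟩ : ℤ√(-b)) ^ (N + 1)).norm = (⟨1, 1⟩ : ℤ√(-b)).norm ^ (N + 1) from
        map_pow Zsqrtd.normMonoidHom _ _]
      simp [Zsqrtd.norm_def]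
    rw [Zsqrtd.norm_mul, h2, h3] at h1
    have : (1 + b) ^ (N + 1) ≠ 0 := by positivity
    exact (mul_left_cancel₀ this (by rw [mul_one]; exact h1)).symm
  obtain ⟨k, m, hm, rfl⟩ := Nat.exists_eq_two_pow_mul_odd hN
  have hk : 2 ≤ k := by
    have : 2 ^ 2 ∣ 2 ^ k := (Nat.Coprime.pow_left 2 (Nat.coprime_two_left.2 hm)).dvd_of_dvd_mul_right
      (by simpa using hN4)
    exact (Nat.pow_dvd_pow_iff_le_right (by norm_num)).1 this
  obtain ⟨r, i, hr⟩ := alpha_pow_two_pow_mul b hb m hm k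
  rw [Zsqrtd.norm_def] at hnorm
  -- `δ.re ^ 2 + b * δ.im ^ 2 = 1` with `b ≥ 4`
  have him : δ.im = 0 := by
    by_contra h0
    have : 1 ≤ δ.im ^ 2 := by have := sq_nonneg δ.im; have : δ.im ^ 2 ≠ 0 := by positivity
                              omega
    nlinarith [sq_nonneg δ.re, Int.le_of_dvd hb0 hb]
  rw [him] at hnorm
  have hre : δ.re = 1 ∨ δ.re = -1 := by
    rw [← sq_eq_one_iff]; linarith
  have h1 := congrArg Zsqrtd.im hδ
  rw [pow_succ, hr] at h1
  simp [him] at h1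
  obtain ⟨l, rfl⟩ := Nat.exists_eq_add_of_le hk
  have h2k : (0 : ℤ) < 2 ^ (2 + l) := by positivity
  rcases hre with e | e
  · rw [e] at h1
    have : (2 : ℤ) ^ (2 + l) * (2 * r + 2 * i + 1) = 0 := by
      rw [pow_succ] at h1; linarith
    rcases mul_eq_zero.1 this with h | h <;> omega
  · rw [e, pow_succ, pow_add] at h1
    have : (4 : ℤ) * (2 ^ l * (2 * r + 2 * i + 1)) = -2 := by linarith
    omega

theorem no_y_one (b : ℤ) (hb : 4 ∣ b) (hb0 : 0 < b) (X z : ℕ) (hX : 0 < X)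
    (h : (1 + 2 * b) ^ X + b = (1 + b) ^ z) : False := by
  have hb4 := Int.le_of_dvd hb0 hb
  have hz1 : 1 < z := by
    by_contra hz
    have h1 : (1 + b) ^ z ≤ (1 + b) ^ 1 := pow_le_pow_right₀ (by omega) (by omega)
    have h2 : (1 + 2 * b) ^ 1 ≤ (1 + 2 * b) ^ X := pow_le_pow_right₀ (by omega) (by omega)
    linarith
  have e1 : 1 + b ∣ (1 + 2 * b) ^ X - (-1) ^ X := by
    have := sub_dvd_pow_sub_pow (1 + 2 * b) (-1) X
    exact dvd_trans ⟨2, by ring⟩ this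
  have hXe : Even X := by
    by_contra ho
    rw [Nat.not_even_iff_odd] at ho
    rw [ho.neg_one_pow] at e1
    have e2 : 1 + b ∣ (1 + b) ^ z := dvd_pow_self _ (by omega)
    rw [← h] at e2
    have e3 := dvd_sub e1 e2
    have e4 := dvd_add e3 (dvd_refl (1 + b))
    have : 1 + b ∣ 2 := by
      obtain ⟨s, hs⟩ := e4
      exact ⟨s, by linear_combination hs⟩
    have := Int.le_of_dvd (by norm_num) this
    omega
  have hz4 : b ∣ 2 * X + 1 - z := by
    have h1 : b ^ 2 ∣ (1 + 2 * b) ^ X - (1 + X * (2 * b)) :=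
      dvd_trans ⟨4, by ring⟩ (sq_dvd_one_add_pow (2 * b) X)
    have h2 := sq_dvd_one_add_pow b z
    have h3 := dvd_sub h2 h1
    rw [← h] at h3
    have : b * b ∣ b * (2 * X + 1 - z) := by
      obtain ⟨s, hs⟩ := h3
      exact ⟨s, by linear_combination hs⟩
    exact (mul_dvd_mul_iff_left hb0.ne').1 this
  have hz4' := dvd_trans hb hz4
  obtain ⟨W, rfl⟩ := hXe
  obtain ⟨N, rfl⟩ : ∃ N, z = N + 1 := ⟨z - 1, by omega⟩
  have e5 : 1 + b ∣ (1 + 2 * b) ^ W - (-1) ^ W := by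
    have := sub_dvd_pow_sub_pow (1 + 2 * b) (-1) W
    exact dvd_trans ⟨2, by ring⟩ this
  rcases Nat.even_or_odd W with hW | hW
  · refine no_sq_add b ((1 + 2 * b) ^ W) hb hb0 N (by omega) (by omega) ?_ ?_
    · rw [← h]; ring
    · rwa [hW.neg_one_pow] at e5
  · refine no_sq_add b (-(1 + 2 * b) ^ W) hb hb0 N (by omega) (by omega) ?_ ?_
    · rw [← h]; ring
    · rw [hW.neg_one_pow] at e5
      obtain ⟨s, hs⟩ := e5
      exact ⟨-s, by linear_combination -hs⟩

/-! ### The case `y ≥ 2`: size estimates -/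

/-- Bernoulli's inequality `1 + 2 X / p ≤ (1 + 2 / p) ^ X` with denominators cleared. -/
theorem pow_mul_le_mul_add_two_pow (p X : ℕ) : p ^ X * (p + 2 * X) ≤ p * (p + 2) ^ X := by
  induction X with
  | zero => simp
  | succ X ih =>
    calc p ^ (X + 1) * (p + 2 * (X + 1)) ≤ p ^ X * (p + 2 * X) * (p + 2) := by
          have : p ^ X * (p * (p + 2 * (X + 1))) ≤ p ^ X * ((p + 2 * X) * (p + 2)) :=
            Nat.mul_le_mul_left _ (by nlinarith)
          rw [pow_succ]; linarith
      _ ≤ p * (p + 2) ^ X * (p + 2) := Nat.mul_le_mul_right _ ih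
      _ = p * (p + 2) ^ (X + 1) := by ring

/-- The equation `a ^ X = (n+1) ^ y - 2 ^ (y-2) n ^ y` with `y = w + 2`. As `2n / (n+1) ≥ 8/5`
for `n ≥ 4`, positivity of the right side fails once `y ≥ 3`; for `n = 2` only `y = 4` remains,
and `17` is not a power of `5`. -/
theorem exponent_eq_two_of_even (n w X : ℕ) (hn0 : 0 < n) (hn : Even n) (hw : Even w)
    (h : (2 * n + 1) ^ X + 2 ^ w * n ^ (w + 2) = (n + 1) ^ (w + 2)) : w = 0 := by
  by_contra hw0
  have hlt : 2 ^ w * n ^ (w + 2) < (n + 1) ^ (w + 2) := by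
    have : 0 < (2 * n + 1) ^ X := by positivity
    omega
  rcases eq_or_ne n 2 with rfl | hn2
  · have h1 : ∀ j, 3 ^ (j + 4 + 2) ≤ 2 ^ (j + 4) * 2 ^ (j + 4 + 2) := by
      intro j
      induction j with
      | zero => norm_num
      | succ j ih =>
        calc 3 ^ (j + 1 + 4 + 2) = 3 ^ (j + 4 + 2) * 3 := by ring
          _ ≤ (2 ^ (j + 4) * 2 ^ (j + 4 + 2)) * 4 := Nat.mul_le_mul ih (by norm_num)
          _ = _ := by ring
    have hw4 : w < 4 := by
      by_contra h4
      obtain ⟨j, rfl⟩ := Nat.exists_eq_add_of_le' (not_lt.1 h4)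
      exact absurd hlt (not_lt.2 (h1 j))
    obtain rfl : w = 2 := by obtain ⟨v, rfl⟩ := hw; omega
    have h17 : 5 ^ X = 17 := by norm_num at h; omega
    rcases X with _ | X
    · norm_num at h17
    · rw [pow_succ] at h17; omega
  · have h4 : 4 ≤ n := by obtain ⟨v, rfl⟩ := hn; omega
    have h1 : (4 * (n + 1)) ^ (w + 2) ≤ (5 * n) ^ (w + 2) := Nat.pow_le_pow_left (by omega) _
    rw [mul_pow, mul_pow] at h1
    have h2 : 4 ^ (w + 2) * (2 ^ w * n ^ (w + 2)) < 5 ^ (w + 2) * n ^ (w + 2) :=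
      lt_of_lt_of_le (Nat.mul_lt_mul_of_pos_left hlt (by positivity)) h1
    have h3 : 4 ^ (w + 2) * 2 ^ w < 5 ^ (w + 2) := by
      refine lt_of_mul_lt_mul_right (a := n ^ (w + 2)) ?_ (Nat.zero_le _)
      linarith
    obtain ⟨j, rfl⟩ : ∃ j, w = j + 1 := ⟨w - 1, by omega⟩
    have h5 : ∀ j, 5 ^ (j + 1 + 2) ≤ 4 ^ (j + 1 + 2) * 2 ^ (j + 1) := by
      intro j
      induction j with
      | zero => norm_num
      | succ j ih =>
        calc 5 ^ (j + 1 + 1 + 2) = 5 ^ (j + 1 + 2) * 5 := by ring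
          _ ≤ (4 ^ (j + 1 + 2) * 2 ^ (j + 1)) * 8 := Nat.mul_le_mul ih (by norm_num)
          _ = _ := by ring
    exact absurd h3 (not_lt.2 (h5 j))

/-- The equation `a ^ X = 2 ^ (y-2) (n+1) ^ y - n ^ y` with `y = 2 (V + 2) ≥ 4` has no solution. In
the proof `M = 2 ^ (V+1) (n+1) ^ (V+2)`, `N = n ^ (V+2)`, and `a ^ X = (M - N) (M + N)`. -/
theorem no_large_exponent_of_odd (n V X : ℕ) (hn0 : 0 < n) (hX : Odd X)
    (h : (2 * n + 1) ^ X + n ^ (2 * (V + 2)) = 2 ^ (2 * (V + 1)) * (n + 1) ^ (2 * (V + 2))) :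
    False := by
  obtain ⟨N, hN⟩ : ∃ N, N = n ^ (V + 2) := ⟨_, rfl⟩
  obtain ⟨T, hT⟩ : ∃ T, T = (n + 1) ^ (V + 2) := ⟨_, rfl⟩
  obtain ⟨M, hM⟩ : ∃ M, M = 2 ^ (V + 1) * T := ⟨_, rfl⟩
  have hNT : N < T := by rw [hN, hT]; exact Nat.pow_lt_pow_left (by omega) (by omega)
  have h2V : 2 ≤ 2 ^ (V + 1) := by
    calc 2 = 2 ^ 1 := rfl
      _ ≤ _ := Nat.pow_le_pow_right (by norm_num) (by omega)
  have hMT : 2 * T ≤ M := by rw [hM]; exact Nat.mul_le_mul_right _ h2V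
  have hT2 : 2 ≤ T := by
    rw [hT]
    calc 2 ≤ (n + 1) ^ 1 := by rw [pow_one]; omega
      _ ≤ _ := Nat.pow_le_pow_right (by omega) (by omega)
  have hsq : (2 * n + 1) ^ X + N ^ 2 = M ^ 2 := by
    rw [hM, hN, hT]
    convert h using 1 <;> ring
  obtain ⟨P, hP⟩ : ∃ P, M = N + P := ⟨M - N, by omega⟩
  have hPQ : P * (P + 2 * N) = (2 * n + 1) ^ X := by
    rw [hP] at hsq; nlinarith
  -- a common prime divides `2 * n + 1` and `2 * n`
  have hcop : Nat.Coprime P (P + 2 * N) := by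
    by_contra hc
    obtain ⟨r, hr, h1, h2⟩ := Nat.Prime.not_coprime_iff_dvd.1 hc
    have ha : r ∣ 2 * n + 1 := hr.dvd_of_dvd_pow (hPQ ▸ Dvd.dvd.mul_right h1 _)
    have h3 : r ∣ 2 * N := (Nat.dvd_add_right h1).1 h2
    have h4 : r ∣ 2 * n := by
      rcases hr.dvd_mul.1 h3 with h | h
      · exact h.mul_right _
      · rw [hN] at h
        exact (hr.dvd_of_dvd_pow h).mul_left _
    exact hr.one_lt.ne' (Nat.dvd_one.1 ((Nat.dvd_add_right h4).1 ha))
  obtain ⟨p, hp⟩ := exists_eq_pow_of_mul_eq_pow (Nat.isUnit_iff.2 hcop) hPQ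
  obtain ⟨q, hq⟩ := exists_eq_pow_of_mul_eq_pow (a := P + 2 * N) (b := P) (c := 2 * n + 1) (k := X)
    (Nat.isUnit_iff.2 hcop.symm) (by rw [mul_comm]; exact hPQ)
  have hX0 : X ≠ 0 := by rintro rfl; simp at hX
  have hpq : p * q = 2 * n + 1 := by
    rw [hq, hp, ← mul_pow] at hPQ
    exact Nat.pow_left_injective hX0 hPQ
  have hN0 : 0 < N := by rw [hN]; positivity
  have hlt : p < q := lt_of_pow_lt_pow_left₀ X (Nat.zero_le _) (by omega)
  have hodd : Odd (p * q) := ⟨n, hpq⟩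
  have hq2 : p + 2 ≤ q := by
    obtain ⟨⟨u, hu⟩, ⟨v, hv⟩⟩ := Nat.odd_mul.1 hodd
    omega
  have hp0 : 0 < p := by
    rcases Nat.eq_zero_or_pos p with rfl | h
    · simp at hpq
    · exact h
  -- `q ^ X < 3 * p ^ X` bounds `X` by `p`
  have hXp : X < p := by
    have h1 := pow_mul_le_mul_add_two_pow p X
    have h2 : p * (p + 2) ^ X ≤ p * q ^ X :=
      Nat.mul_le_mul_left _ (Nat.pow_le_pow_left hq2 _)
    have h3 : p * q ^ X < p * (3 * p ^ X) := Nat.mul_lt_mul_of_pos_left (by omega) hp0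
    have h4 : p ^ X * (p + 2 * X) < p ^ X * (3 * p) := by nlinarith
    have := lt_of_mul_lt_mul_left h4 (Nat.zero_le _)
    omega
  have hXV : V + 2 < X := by
    refine (Nat.pow_lt_pow_iff_right (a := 2 * n + 1) (by omega)).1 ?_
    calc (2 * n + 1) ^ (V + 2) ≤ (2 * (n + 1)) ^ (V + 2) := Nat.pow_le_pow_left (by omega) _
      _ = 2 * M := by rw [hM, hT, mul_pow]; ring
      _ < P * (P + 2 * N) := by nlinarith
      _ = _ := hPQ
  -- the equation modulo `(n + 1) ^ 2`, using that `X` is odd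
  have hdiv : ((n : ℤ) + 1) ∣ 2 * ((X : ℤ) - (V + 2)) := by
    obtain ⟨t, ht⟩ : ∃ t : ℤ, t = n + 1 := ⟨_, rfl⟩
    have ht0 : t ≠ 0 := by omega
    have h1 : t ^ 2 ∣ (1 + -(2 * t)) ^ X - (1 + X * (-(2 * t))) :=
      dvd_trans ⟨4, by ring⟩ (sq_dvd_one_add_pow (-(2 * t)) X)
    have h2 : t ^ 2 ∣ (1 + -t) ^ (2 * (V + 2)) - (1 + (2 * (V + 2) : ℕ) * (-t)) :=
      dvd_trans ⟨1, by ring⟩ (sq_dvd_one_add_pow (-t) (2 * (V + 2)))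
    have h3 : t ^ 2 ∣ 2 ^ (2 * (V + 1)) * t ^ (2 * (V + 2)) :=
      (pow_dvd_pow t (by omega)).mul_left _
    have hZ : (2 * (n : ℤ) + 1) ^ X + n ^ (2 * (V + 2)) =
        2 ^ (2 * (V + 1)) * (n + 1) ^ (2 * (V + 2)) := by exact_mod_cast h
    have e1 : (1 + -(2 * t)) ^ X = -(2 * (n : ℤ) + 1) ^ X := by
      rw [← hX.neg_pow]; congr 1; rw [ht]; ring
    have e2 : (1 + -t) ^ (2 * (V + 2)) = (n : ℤ) ^ (2 * (V + 2)) := by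
      rw [← (even_two_mul (V + 2)).neg_pow]; congr 1; rw [ht]; ring
    rw [e1] at h1
    rw [e2] at h2
    rw [← ht] at hZ
    rw [← hZ] at h3
    have h4 := dvd_add (dvd_sub h1 h2) h3
    rw [← ht]
    have : t * t ∣ t * (2 * ((X : ℤ) - (V + 2))) := by
      obtain ⟨s, hs⟩ := h4
      refine ⟨s, ?_⟩
      push_cast at hs
      linear_combination hs
    exact (mul_dvd_mul_iff_left ht0).1 this
  -- `2 * X ≥ n + 5` contradicts `X < p`, because `p * (p + 2) ≤ 2 * n + 1`
  have hle := Int.le_of_dvd (by omega) hdiv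
  have hle' : n + 1 + 2 * (V + 2) ≤ 2 * X := by omega
  have : p * (p + 2) ≤ 2 * n + 1 := hpq ▸ Nat.mul_le_mul_left _ hq2
  zify at *
  nlinarith [sq_nonneg ((p : ℤ) - 1)]

/-! ### The factorization of `b ^ y` -/

theorem factors_of_even (n D E : ℤ) (w : ℕ) (hn0 : 0 < n) (hn : Even n) (hE0 : 0 < E)
    (hE : n ∣ E - 1) (hD : n + 1 ∣ D - 1)
    (h : D * E = 2 ^ w * n ^ (w + 2) * (n + 1) ^ (w + 2)) :
    E = (n + 1) ^ (w + 2) ∧ D = 2 ^ w * n ^ (w + 2) := by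
  obtain ⟨u, hu⟩ := hE
  obtain ⟨v, hv⟩ := hD
  have hEn : IsCoprime E n := ⟨1, -u, by linear_combination hu⟩
  have hDn : IsCoprime D (n + 1) := ⟨1, -v, by linear_combination hv⟩
  have hE2 : IsCoprime E 2 := hEn.of_isCoprime_of_dvd_right hn.two_dvd
  have h1 : E ∣ (n + 1) ^ (w + 2) :=
    ((hE2.pow_right (n := w)).mul_right (hEn.pow_right (n := w + 2))).dvd_of_dvd_mul_left
      ⟨D, by rw [← h]; ring⟩
  have h2 : (n + 1) ^ (w + 2) ∣ E :=
    (hDn.symm.pow_left (m := w + 2)).dvd_of_dvd_mul_left ⟨2 ^ w * n ^ (w + 2), by rw [h]; ring⟩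
  have h3 : E = (n + 1) ^ (w + 2) := Int.dvd_antisymm hE0.le (by positivity) h1 h2
  refine ⟨h3, ?_⟩
  rw [← h3] at h
  exact mul_right_cancel₀ hE0.ne' h

theorem factors_of_odd (n D E : ℤ) (w : ℕ) (hn0 : 0 < n) (hn : Odd n) (hD0 : 0 < D)
    (hE : n ∣ E - 1) (hD : n + 1 ∣ D - 1)
    (h : D * E = 2 ^ w * n ^ (w + 2) * (n + 1) ^ (w + 2)) :
    E = 2 ^ w * (n + 1) ^ (w + 2) ∧ D = n ^ (w + 2) := by
  obtain ⟨u, hu⟩ := hE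
  obtain ⟨v, hv⟩ := hD
  have hEn : IsCoprime E n := ⟨1, -u, by linear_combination hu⟩
  have hDn : IsCoprime D (n + 1) := ⟨1, -v, by linear_combination hv⟩
  have hD2 : IsCoprime D 2 := hDn.of_isCoprime_of_dvd_right (hn.add_odd odd_one).two_dvd
  have h1 : D ∣ n ^ (w + 2) :=
    ((hD2.pow_right (n := w)).mul_right (hDn.pow_right (n := w + 2))).dvd_of_dvd_mul_left
      ⟨E, by rw [h]; ring⟩
  have h2 : n ^ (w + 2) ∣ D :=
    (hEn.symm.pow_left (m := w + 2)).dvd_of_dvd_mul_right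
      ⟨2 ^ w * (n + 1) ^ (w + 2), by rw [h]; ring⟩
  have h3 : D = n ^ (w + 2) := Int.dvd_antisymm hD0.le (by positivity) h1 h2
  refine ⟨?_, h3⟩
  rw [← h3] at h
  exact mul_left_cancel₀ hD0.ne' (by linear_combination h)

/-! ### Parity of the exponents and conclusion -/

theorem even_x (n : ℤ) (hn : 0 < n) (x y z : ℕ) (hy : 0 < y)
    (h : (2 * n + 1) ^ x + (2 * n * (n + 1)) ^ y = (1 + 2 * n * (n + 1)) ^ z) : Even x := by
  by_contra ho
  rw [Nat.not_even_iff_odd] at ho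
  have h1 : 2 * (n + 1) ∣ (1 + -(2 * (n + 1))) ^ x - 1 :=
    neg_dvd.1 (dvd_one_add_pow _ x)
  have e1 : (1 + -(2 * (n + 1))) ^ x = -(2 * n + 1) ^ x := by
    rw [← ho.neg_pow]; congr 1; ring
  have h2 : 2 * (n + 1) ∣ (2 * n * (n + 1)) ^ y :=
    dvd_trans ⟨n, by ring⟩ (dvd_pow_self _ hy.ne')
  have h3 : 2 * (n + 1) ∣ (1 + 2 * n * (n + 1)) ^ z - 1 :=
    dvd_trans ⟨n, by ring⟩ (dvd_one_add_pow (2 * n * (n + 1)) z)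
  rw [e1] at h1
  rw [← h] at h3
  obtain ⟨s, hs⟩ := dvd_sub (dvd_add h1 h3) h2
  have h4 : 2 * (n + 1) ∣ 2 := ⟨-s, by linear_combination -hs⟩
  have := Int.le_of_dvd (by norm_num) h4
  omega

theorem odd_exponent_sum (b : ℤ) (hb : 4 ≤ b) (X y z : ℕ) (hz : 0 < z)
    (h : (1 + 2 * b) ^ X + b ^ y = (1 + b) ^ z) : Odd (X + y) := by
  have h1 : 1 + b ∣ (1 + 2 * b) ^ X - (-1) ^ X :=
    dvd_trans ⟨2, by ring⟩ (sub_dvd_pow_sub_pow (1 + 2 * b) (-1) X)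
  have h2 : 1 + b ∣ b ^ y - (-1) ^ y :=
    dvd_trans ⟨1, by ring⟩ (sub_dvd_pow_sub_pow b (-1) y)
  have h3 : 1 + b ∣ (1 + b) ^ z := dvd_pow_self _ hz.ne'
  rw [← h] at h3
  obtain ⟨s, hs⟩ := dvd_sub h3 (dvd_add h1 h2)
  have h4 : 1 + b ∣ (-1) ^ X + (-1) ^ y := ⟨s, by linear_combination hs⟩
  by_contra hne
  rw [Nat.not_odd_iff_even, Nat.even_add] at hne
  rcases Nat.even_or_odd X with hX | hX
  · rw [hX.neg_one_pow, (hne.1 hX).neg_one_pow] at h4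
    have := Int.le_of_dvd (by norm_num) h4
    omega
  · have hy : Odd y := by
      rw [← Nat.not_even_iff_odd] at hX ⊢
      exact fun h => hX (hne.2 h)
    rw [hX.neg_one_pow, hy.neg_one_pow] at h4
    have := Int.le_of_dvd (by norm_num) ((dvd_neg).2 h4)
    omega

/-- The equation with `x = 2X`, `y = w + 2` and `z = 2Z`. The proof factors
`b ^ y = (C - A) (C + A)` with `A = a ^ X`, `C = c ^ Z`, and writes `C - A = 2D`, `C + A = 2E`. -/
theorem eq_two (n X w Z : ℕ) (hn : 0 < n) (hZ : 0 < Z)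
    (h : (1 + 2 * (2 * n * (n + 1) : ℤ)) ^ X + (2 * n * (n + 1) : ℤ) ^ (w + 2) =
      (1 + 2 * n * (n + 1) : ℤ) ^ (Z + Z)) : X = 1 ∧ w = 0 ∧ Z = 1 := by
  obtain ⟨b, hb⟩ : ∃ b : ℤ, b = 2 * n * (n + 1) := ⟨_, rfl⟩
  have hn' : (0 : ℤ) < n := by exact_mod_cast hn
  have hb4 : 4 ≤ b := by rw [hb]; nlinarith
  have hpar : Odd (X + (w + 2)) :=
    odd_exponent_sum b hb4 X (w + 2) (Z + Z) (by omega) (by rw [hb]; exact h)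
  obtain ⟨C, hC⟩ : ∃ C : ℤ, C = (1 + 2 * n * (n + 1) : ℤ) ^ Z := ⟨_, rfl⟩
  obtain ⟨A, hA⟩ : ∃ A : ℤ, A = (2 * n + 1 : ℤ) ^ X := ⟨_, rfl⟩
  have hC0 : 0 < C := by rw [hC]; positivity
  have hA0 : 0 < A := by rw [hA]; positivity
  have hCA : (C - A) * (C + A) = (2 * n * (n + 1) : ℤ) ^ (w + 2) := by
    have e1 : (1 + 2 * (2 * n * (n + 1) : ℤ)) ^ X = A ^ 2 := by
      rw [hA, ← pow_mul, mul_comm X 2, pow_mul]; congr 1; ring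
    have e2 : (1 + 2 * n * (n + 1) : ℤ) ^ (Z + Z) = C ^ 2 := by rw [hC]; ring
    rw [e1, e2] at h
    linear_combination -h
  have hC1 : (2 * n * (n + 1) : ℤ) ∣ C - 1 := by rw [hC]; exact dvd_one_add_pow _ Z
  have hA1 : (2 * n : ℤ) ∣ A - 1 := by
    rw [hA, add_comm]; exact dvd_one_add_pow _ X
  have hA2 : (2 * (n + 1) : ℤ) ∣ (-1) ^ X * A - 1 := by
    rw [hA, ← mul_pow]
    have := neg_dvd.1 (dvd_one_add_pow (-(2 * (n + 1) : ℤ)) X)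
    rwa [show (1 + -(2 * (n + 1)) : ℤ) = -1 * (2 * n + 1) by ring] at this
  obtain ⟨s, hs⟩ := hC1
  obtain ⟨r, hr⟩ := hA1
  obtain ⟨E, hE⟩ : ∃ E, C + A = 2 * E := ⟨1 + n * (n + 1) * s + n * r, by linear_combination hs + hr⟩
  obtain ⟨D, hD⟩ : ∃ D, C - A = 2 * D := ⟨n * (n + 1) * s - n * r, by linear_combination hs - hr⟩
  have hDE : D * E = 2 ^ w * n ^ (w + 2) * (n + 1) ^ (w + 2) := by
    have : (4 : ℤ) * (D * E) = 4 * (2 ^ w * n ^ (w + 2) * (n + 1) ^ (w + 2)) := by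
      rw [hE, hD, mul_pow, mul_pow, pow_add 2 w 2] at hCA
      linear_combination hCA
    linarith
  have hE0 : 0 < E := by omega
  have hD0 : 0 < D := by
    have : 0 < D * E := by rw [hDE]; positivity
    exact (pos_iff_pos_of_mul_pos this).2 hE0
  have hEn : (n : ℤ) ∣ E - 1 := ⟨(n + 1) * s + r, by linarith⟩
  -- for even `X` the number `E` would be coprime to `2`, `n`, `n + 1`, yet it divides their product
  have hXo : Odd X := by
    by_contra hXe
    rw [Nat.not_odd_iff_even] at hXe
    rw [hXe.neg_one_pow] at hA2
    obtain ⟨r₁, hr₁⟩ := hA2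
    have hEn1 : (n + 1 : ℤ) ∣ E - 1 := ⟨n * s + r₁, by linarith⟩
    have hE2 : (2 : ℤ) ∣ E - 1 := by
      rcases Nat.even_or_odd n with he | ho
      · exact dvd_trans (by exact_mod_cast he.two_dvd) hEn
      · exact dvd_trans (by exact_mod_cast (ho.add_odd odd_one).two_dvd) hEn1
    have cop : ∀ t : ℤ, t ∣ E - 1 → IsCoprime E t := by
      rintro t ⟨u, hu⟩
      exact ⟨1, -u, by linear_combination hu⟩
    have hcop := (((cop 2 hE2).pow_right (n := w)).mul_right
      ((cop n hEn).pow_right (n := w + 2))).mul_right ((cop _ hEn1).pow_right (n := w + 2))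
    rw [← hDE] at hcop
    have hu : IsUnit E := hcop.isUnit_of_dvd' dvd_rfl (dvd_mul_left _ _)
    rcases Int.isUnit_iff.1 hu with h1 | h1 <;> omega
  have hw : Even w := by
    have : Even (w + 2) := by
      rw [Nat.odd_add] at hpar; exact hpar.1 hXo
    simpa [Nat.even_add] using this
  rw [hXo.neg_one_pow] at hA2
  obtain ⟨r₁, hr₁⟩ := hA2
  have hDn : (n + 1 : ℤ) ∣ D - 1 := ⟨n * s + r₁, by linarith⟩
  -- for `w = 0`, `D` and `E` are `n ^ 2` and `(n + 1) ^ 2`, with difference `a` and sum `c`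
  have finish : w = 0 → A = 2 * n + 1 → C = 1 + 2 * n * (n + 1) → X = 1 ∧ w = 0 ∧ Z = 1 := by
    intro hw0 h1 h2
    have e1 : (2 * n + 1) ^ X = (2 * n + 1) ^ 1 := by
      rw [hA] at h1; rw [pow_one]; exact_mod_cast h1
    have e2 : (1 + 2 * n * (n + 1)) ^ Z = (1 + 2 * n * (n + 1)) ^ 1 := by
      rw [hC] at h2; rw [pow_one]; exact_mod_cast h2
    exact ⟨Nat.pow_right_injective (by omega) e1, hw0,
      Nat.pow_right_injective (by nlinarith) e2⟩
  rcases Nat.even_or_odd n with hne | hno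
  · obtain ⟨h1, h2⟩ := factors_of_even n D E w hn' (by exact_mod_cast hne) hE0 hEn hDn hDE
    have h3 : (2 * n + 1) ^ X + 2 ^ w * n ^ (w + 2) = (n + 1) ^ (w + 2) := by
      zify
      rw [← h1, ← h2, ← hA]; linarith
    have hw0 := exponent_eq_two_of_even n w X hn hne hw h3
    subst hw0
    norm_num at h1 h2
    refine finish rfl ?_ ?_
    · linear_combination h1 - h2 + (by linarith : A = E - D)
    · linear_combination h1 + h2 + (by linarith : C = E + D)
  · obtain ⟨h1, h2⟩ := factors_of_odd n D E w hn' (by exact_mod_cast hno) hD0 hEn hDn hDE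
    have h3 : (2 * n + 1) ^ X + n ^ (w + 2) = 2 ^ w * (n + 1) ^ (w + 2) := by
      zify
      rw [← h1, ← h2, ← hA]; linarith
    have hw0 : w = 0 := by
      obtain ⟨V, rfl⟩ := hw
      by_contra hV
      obtain ⟨V, rfl⟩ : ∃ U, V = U + 1 := ⟨V - 1, by omega⟩
      refine no_large_exponent_of_odd n V X hn hXo ?_
      convert h3 using 2 <;> ring
    subst hw0
    norm_num at h1 h2
    refine finish rfl ?_ ?_
    · linear_combination h1 - h2 + (by linarith : A = E - D)
    · linear_combination h1 + h2 + (by linarith : C = E + D)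

theorem stmt_8 (g : ℕ) (hg : 0 < g) (x y z : ℕ) (hx : 0 < x) (hy : 0 < y) (hz : 0 < z) :
    (2 * g + 1) ^ x + (2 * g * (g + 1)) ^ y = (2 * g ^ 2 + 2 * g + 1) ^ z ↔
      (x, y, z) = (2, 2, 2) := by
  constructor
  · intro h
    have hg' : (0 : ℤ) < g := by exact_mod_cast hg
    have hZ : (2 * g + 1 : ℤ) ^ x + (2 * g * (g + 1)) ^ y = (1 + 2 * g * (g + 1)) ^ z := by
      have : (2 * g + 1 : ℤ) ^ x + (2 * g * (g + 1)) ^ y = (2 * g ^ 2 + 2 * g + 1) ^ z := by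
        exact_mod_cast h
      rw [this]; congr 1; ring
    obtain ⟨X, rfl⟩ := even_x g hg' x y z hy hZ
    have hZ2 : (1 + 2 * (2 * g * (g + 1) : ℤ)) ^ X + (2 * g * (g + 1) : ℤ) ^ y =
        (1 + 2 * g * (g + 1) : ℤ) ^ z := by
      rw [← hZ, ← two_mul, pow_mul]; congr 2; ring
    have hb4 : (4 : ℤ) ∣ 2 * g * (g + 1) := by
      obtain ⟨u, hu⟩ := Int.even_mul_succ_self (g : ℤ)
      exact ⟨u, by linear_combination 2 * hu⟩
    have hb0 : (0 : ℤ) < 2 * g * (g + 1) := by positivity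
    have hy1 : y ≠ 1 := by
      rintro rfl
      rw [pow_one] at hZ2
      exact no_y_one _ hb4 hb0 X z (by omega) hZ2
    obtain ⟨w, rfl⟩ : ∃ w, y = w + 2 := ⟨y - 2, by omega⟩
    have hze : Even z := by
      obtain ⟨b, hb⟩ : ∃ b : ℤ, b = 2 * g * (g + 1) := ⟨_, rfl⟩
      rw [← hb] at hZ2 hb4 hb0
      have h1 : b ^ 2 ∣ (1 + 2 * b) ^ X - (1 + X * (2 * b)) :=
        dvd_trans ⟨4, by ring⟩ (sq_dvd_one_add_pow (2 * b) X)
      have h2 := sq_dvd_one_add_pow b z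
      have h3 : b ^ 2 ∣ b ^ (w + 2) := pow_dvd_pow b (by omega)
      rw [hb, ← hb, show (1 + b : ℤ) ^ z = (1 + 2 * b) ^ X + b ^ (w + 2) by
        rw [hZ2, hb]] at h2
      obtain ⟨s, hs⟩ := dvd_sub (dvd_sub h2 h1) h3
      have : b * b ∣ b * (2 * X - z) := ⟨s, by linear_combination hs⟩
      have := dvd_trans hb4 ((mul_dvd_mul_iff_left hb0.ne').1 this)
      rw [even_iff_two_dvd]
      omega
    obtain ⟨Z, rfl⟩ := hze
    obtain ⟨rfl, rfl, rfl⟩ := eq_two g X w Z hg (by omega) hZ2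
    rfl
  · intro h
    simp only [Prod.mk.injEq] at h
    obtain ⟨rfl, rfl, rfl⟩ := h
    ring
end
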